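/- arXiv:math/9403211 — 14 statements merged into one kernel-verified Lean document; each statement's English description precedes it below -/
import Mathlib

section
/- Let $(T_r)_{r\in\mathbb{N}}$ be a sequence where each $T_r$ is a set of strictly increasing $r$-tuples of positive integers. Suppose that for every infinite subset $M \subseteq \mathbb{N}$ there exists a strictly increasing sequence $i_1 < i_2 < \cdots$ of elements of $M$ such that $(i_1,\ldots,i_r) \in T_r$ for every $r$. Then there exists an infinite subset $M_0 \subseteq \mathbb{N}$ such that for every $r$ and every choice of $i_1 < \cdots < i_r$ in $M_0$ one has $(i_1,\ldots,i_r) \in T_r$. -/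
namespace NW

/-- Diagonalisation lemma. -/
theorem diag (P : Finset ℕ → Set ℕ → Prop)
    (hmono : ∀ s M N, N ⊆ M → P s M → P s N)
    (hex : ∀ s M, M.Infinite → ∃ N ⊆ M, N.Infinite ∧ P s N)
    (M : Set ℕ) (hM : M.Infinite) :
    ∃ N ⊆ M, N.Infinite ∧ ∀ s : Finset ℕ, (↑s : Set ℕ) ⊆ N →
      P s {n | n ∈ N ∧ ∀ m ∈ s, m < n} := by
  have hfam : ∀ (S : Finset (Finset ℕ)) (M : Set ℕ), M.Infinite →
      ∃ N ⊆ M, N.Infinite ∧ ∀ s ∈ S, P s N := by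
    intro S
    induction S using Finset.induction_on with
    | empty => intro M hM; exact ⟨M, subset_rfl, hM, by simp⟩
    | insert a S _ ih =>
      intro M hM
      obtain ⟨N, hN, hNi, hP⟩ := ih M hM
      obtain ⟨N', hN', hNi', hP'⟩ := hex a N hNi
      refine ⟨N', hN'.trans hN, hNi', ?_⟩
      intro s hs
      rcases Finset.mem_insert.1 hs with rfl | hs
      · exact hP'
      · exact hmono s N N' hN' (hP s hs)
  let Good : ℕ × Set ℕ → Prop := fun p =>
    p.2.Infinite ∧ ∀ s : Finset ℕ, s ⊆ Finset.range (p.1 + 1) → P s p.2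
  have hstep : ∀ p : {p // Good p}, ∃ q : {p // Good p},
      q.1.1 ∈ p.1.2 ∧ p.1.1 < q.1.1 ∧ q.1.2 ⊆ p.1.2 := by
    rintro ⟨⟨n, A⟩, hA, hP⟩
    obtain ⟨n', hn', hlt⟩ := hA.exists_gt n
    obtain ⟨N, hN, hNi, hPN⟩ := hfam (Finset.range (n' + 1)).powerset A hA
    exact ⟨⟨⟨n', N⟩, hNi, fun s hs => hPN s (Finset.mem_powerset.2 hs)⟩, hn', hlt, hN⟩
  choose f hf using hstep
  obtain ⟨N0, hN0, hNi0, hP0⟩ := hfam (Finset.range 1).powerset M hM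
  let p0 : {p // Good p} := ⟨⟨0, N0⟩, hNi0, fun s hs => hP0 s (Finset.mem_powerset.2 hs)⟩
  let q : ℕ → {p // Good p} := fun k => f^[k] p0
  have hq : ∀ k, q (k + 1) = f (q k) := fun k => Function.iterate_succ_apply' f k p0
  have hmem : ∀ k, (q (k+1)).1.1 ∈ (q k).1.2 := fun k => by rw [hq]; exact (hf _).1
  have hlt : StrictMono fun k => (q k).1.1 :=
    strictMono_nat_of_lt_succ fun k => by rw [hq]; exact (hf _).2.1
  have hanti : Antitone fun k => (q k).1.2 :=
    antitone_nat_of_succ_le fun k => by rw [hq]; exact (hf _).2.2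
  have hsub0 : Set.range (fun k => (q (k+1)).1.1) ⊆ N0 := by
    rintro _ ⟨k, rfl⟩
    exact hanti (Nat.zero_le k) (hmem k)
  refine ⟨Set.range fun k => (q (k+1)).1.1, hsub0.trans hN0,
    Set.infinite_range_of_injective fun a b hab => by
      have := hlt.injective hab
      omega, ?_⟩
  intro s hs
  rcases s.eq_empty_or_nonempty with rfl | hne
  · exact hmono _ N0 _ (fun x hx => hsub0 hx.1) (hP0 ∅ (by simp))
  · obtain ⟨k, hk⟩ := hs (s.max'_mem hne)
    refine hmono _ (q (k+1)).1.2 _ ?_ ((q (k+1)).2.2 s ?_)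
    · rintro _ ⟨⟨j, rfl⟩, hj⟩
      have h1 := hj _ (s.max'_mem hne)
      rw [← hk] at h1
      have h2 := hlt.lt_iff_lt.1 h1
      exact hanti (by omega : k + 1 ≤ j) (hmem j)
    · intro x hx
      have := s.le_max' x hx
      rw [← hk] at this
      exact Finset.mem_range.2 (Nat.lt_succ_of_le this)

/-- `M` accepts `s`. -/
def Acc (F : Finset ℕ → Prop) (s : Finset ℕ) (M : Set ℕ) : Prop :=
  ∀ X : Set ℕ, X.Infinite → (↑s : Set ℕ) ⊆ X →
    (∀ x ∈ X, x ∈ s ∨ (x ∈ M ∧ ∀ m ∈ s, m < x)) →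
    ∃ t : Finset ℕ, F t ∧ (↑t : Set ℕ) ⊆ X ∧ ∀ x ∈ X, ∀ y ∈ t, x ≤ y → x ∈ t

/-- `M` rejects `s`. -/
def Rej (F : Finset ℕ → Prop) (s : Finset ℕ) (M : Set ℕ) : Prop :=
  ∀ N ⊆ M, N.Infinite → ¬ Acc F s N

theorem Acc.mono {F : Finset ℕ → Prop} {s : Finset ℕ} {M N : Set ℕ} (h : Acc F s M)
    (hN : ∀ x ∈ N, (∀ m ∈ s, m < x) → x ∈ M) : Acc F s N := by
  intro X hX hs hx
  refine h X hX hs fun x hxX => ?_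
  rcases hx x hxX with h1 | ⟨h1, h2⟩
  · exact Or.inl h1
  · exact Or.inr ⟨hN x h1 h2, h2⟩

theorem tail_infinite {N : Set ℕ} (hN : N.Infinite) (s : Finset ℕ) :
    {n | n ∈ N ∧ ∀ m ∈ s, m < n}.Infinite := by
  refine Set.infinite_of_not_bddAbove ?_
  rintro ⟨b, hb⟩
  obtain ⟨n, hn, hlt⟩ := hN.exists_gt (b + s.sup id)
  have := hb (a := n) ⟨hn, fun m hm => by
    have : m ≤ s.sup id := Finset.le_sup (f := id) hm
    omega⟩
  omega

theorem acc_of_F {F : Finset ℕ → Prop} {s : Finset ℕ} (M : Set ℕ) (h : F s) : Acc F s M := by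
  intro X _ hs hx
  refine ⟨s, h, hs, fun x hxX y hy hxy => ?_⟩
  rcases hx x hxX with h1 | ⟨_, h2⟩
  · exact h1
  · exact absurd (h2 y hy) (by omega)

theorem acc_step {F : Finset ℕ → Prop} {s : Finset ℕ} {M N : Set ℕ} (hNM : N ⊆ M)
    (h : ∀ n ∈ N, (∀ m ∈ s, m < n) → Acc F (insert n s) M) : Acc F s N := by
  classical
  intro X hX hs hx
  have hY : (X \ ↑s).Nonempty := (hX.sdiff s.finite_toSet).nonempty
  have hn := Nat.sInf_mem hY
  set n := sInf (X \ (↑s : Set ℕ)) with hndef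
  have hn' : n ∈ N ∧ ∀ m ∈ s, m < n := (hx n hn.1).resolve_left (by simpa using hn.2)
  refine h n hn'.1 hn'.2 X hX ?_ ?_
  · intro x hxs
    rcases Finset.mem_insert.1 (Finset.mem_coe.1 hxs) with rfl | hxs
    · exact hn.1
    · exact hs hxs
  · intro x hxX
    by_cases hxs : x ∈ s
    · exact Or.inl (Finset.mem_insert_of_mem hxs)
    · have h1 := (hx x hxX).resolve_left hxs
      have h2 : n ≤ x := Nat.sInf_le ⟨hxX, by simpa using hxs⟩
      rcases h2.eq_or_lt with h3 | h3
      · exact Or.inl (by rw [← h3]; exact Finset.mem_insert_self _ _)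
      · refine Or.inr ⟨hNM h1.1, fun m hm => ?_⟩
        rcases Finset.mem_insert.1 hm with rfl | hm
        · exact h3
        · exact h1.2 m hm

/-- Nash-Williams / Galvin. -/
theorem galvin (F : Finset ℕ → Prop) (h0 : ∀ M : Set ℕ, M.Infinite → ¬ Acc F ∅ M) :
    ∃ N : Set ℕ, N.Infinite ∧ ∀ s : Finset ℕ, (↑s : Set ℕ) ⊆ N → ¬ F s := by
  classical
  obtain ⟨M, -, hMi, hM⟩ := diag (fun s M => Acc F s M ∨ Rej F s M)
    (fun s M N hNM h => h.imp (fun h => h.mono fun x hx _ => hNM hx)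
      (fun h K hK => h K (hK.trans hNM)))
    (fun s M hM => by
      by_cases h : Rej F s M
      · exact ⟨M, subset_rfl, hM, Or.inr h⟩
      · unfold Rej at h
        push Not at h
        obtain ⟨N, h1, h2, h3⟩ := h
        exact ⟨N, h1, h2, Or.inl h3⟩) Set.univ Set.infinite_univ
  have hdec : ∀ s : Finset ℕ, (↑s : Set ℕ) ⊆ M → Acc F s M ∨ Rej F s M := by
    intro s hs
    refine (hM s hs).imp (fun h => h.mono fun x hx h2 => ⟨hx, h2⟩) ?_
    intro h K hK hKi hacc
    exact h {n | n ∈ K ∧ ∀ m ∈ s, m < n} (fun x hx => ⟨hK hx.1, hx.2⟩) (tail_infinite hKi s)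
      (hacc.mono fun x hx _ => hx.1)
  obtain ⟨N, hNM, hNi, hN⟩ := diag (fun s A => (↑s : Set ℕ) ⊆ M → Rej F s M →
      ∀ n ∈ A, n ∈ M → (∀ m ∈ s, m < n) → Rej F (insert n s) M)
    (fun s A B hBA h h1 h2 n hn => h h1 h2 n (hBA hn))
    (fun s A hA => by
      by_cases hs : (↑s : Set ℕ) ⊆ M ∧ Rej F s M
      · obtain ⟨hs, hr⟩ := hs
        have hB : {n | n ∈ M ∧ (∀ m ∈ s, m < n) ∧ Acc F (insert n s) M}.Finite := by
          by_contra hB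
          exact hr _ (fun x hx => hx.1) hB (acc_step (M := M) (fun x hx => hx.1)
            fun n hn _ => hn.2.2)
        refine ⟨_, Set.sdiff_subset, hA.sdiff hB, ?_⟩
        intro _ _ n hn hnM hns
        refine (hdec (insert n s) ?_).resolve_left fun hacc => hn.2 ⟨hnM, hns, hacc⟩
        rw [Finset.coe_insert]
        exact Set.insert_subset hnM hs
      · exact ⟨A, subset_rfl, hA, fun h1 h2 => absurd ⟨h1, h2⟩ hs⟩) M hMi
  have hrej : ∀ s : Finset ℕ, (↑s : Set ℕ) ⊆ N → Rej F s M := by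
    intro s
    induction s using Finset.induction_on_max with
    | empty => intro _ K _ hKi; exact h0 K hKi
    | insert a s ha ih =>
      intro hs
      rw [Finset.coe_insert, Set.insert_subset_iff] at hs
      exact hN s hs.2 (hs.2.trans hNM) (ih hs.2) a ⟨hs.1, ha⟩ (hNM hs.1) ha
  exact ⟨N, hNi, fun s hs hF => hrej s hs M subset_rfl hMi (acc_of_F M hF)⟩

theorem init_eq {r : ℕ} (k : Fin r → ℕ) (hk : StrictMono k)
    (hl : ∀ ρ, ∀ m ≤ k ρ, ∃ σ, k σ = m) : ∀ ρ, k ρ = ρ := by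
  have : ∀ (n : ℕ) (hn : n < r), k ⟨n, hn⟩ = n := by
    intro n
    induction n using Nat.strong_induction_on with
    | _ n ih =>
      intro hn
      have key : ∀ σ : Fin r, k σ = n → k ⟨n, hn⟩ = n := by
        intro σ hσ
        rcases lt_trichotomy σ.1 n with h | h | h
        · have := ih σ.1 h σ.2
          simp only [Fin.eta] at this
          omega
        · subst h; exact hσ
        · exfalso
          have h1 : k ⟨n, hn⟩ < k σ := hk h
          have h2 := ih (k ⟨n, hn⟩) (by omega) (by omega)
          have h3 := hk.injective h2
          have h4 := congrArg Fin.val h3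
          simp only at h4
          omega
      by_cases h : n ≤ k ⟨n, hn⟩
      · obtain ⟨σ, hσ⟩ := hl _ n h
        exact key σ hσ
      · exfalso
        have h2 := ih (k ⟨n, hn⟩) (by omega) (by omega)
        have h4 := congrArg Fin.val (hk.injective h2)
        simp only at h4
        omega
  intro ρ
  exact this ρ.1 ρ.2

end NW


/-- **An elementary Ramsey theorem.**
For each `r`, `T r` is a family of strictly increasing `r`-tuples of naturals.
If every infinite `M ⊆ ℕ` contains a strictly increasing sequence all of whose
initial segments lie in the corresponding `T r`, then there is an infinite
`M₀ ⊆ ℕ` such that *every* strictly increasing `r`-tuple from `M₀` lies in `T r`. -/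
theorem ramsey_type_theorem (T : ∀ r : ℕ, Set (Fin r → ℕ))
    (h : ∀ M : Set ℕ, M.Infinite →
      ∃ i : ℕ → ℕ, StrictMono i ∧ (∀ n, i n ∈ M) ∧
        ∀ r : ℕ, (fun ρ : Fin r => i ρ) ∈ T r) :
    ∃ M₀ : Set ℕ, M₀.Infinite ∧
      ∀ (r : ℕ) (i : Fin r → ℕ), StrictMono i → (∀ ρ, i ρ ∈ M₀) → i ∈ T r := by
  classical
  obtain ⟨N, hNi, hN⟩ := NW.galvin
    (fun t => ∃ (r : ℕ) (i : Fin r → ℕ), StrictMono i ∧ Set.range i = ↑t ∧ i ∉ T r) (by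
      intro M hM hacc
      obtain ⟨i, hi, hiM, hiT⟩ := h M hM
      obtain ⟨t, ⟨r, j, hj, hjt, hjT⟩, htX, hinit⟩ := hacc (Set.range i)
        (Set.infinite_range_of_injective hi.injective) (by simp) (by
          rintro _ ⟨n, rfl⟩
          exact Or.inr ⟨hiM n, by simp⟩)
      have hmem : ∀ ρ, j ρ ∈ t := fun ρ => by
        rw [← Finset.mem_coe, ← hjt]; exact ⟨ρ, rfl⟩
      have hex : ∀ ρ, ∃ n, i n = j ρ := fun ρ => htX (hmem ρ)
      choose k hk using hex
      have hkm : StrictMono k := fun a b hab => by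
        rw [← hi.lt_iff_lt, hk, hk]; exact hj hab
      have hkid := NW.init_eq k hkm (fun ρ m hm => by
        have h1 : i m ∈ t := hinit (i m) ⟨m, rfl⟩ (j ρ) (hmem ρ) (by
          rw [← hk]; exact hi.monotone hm)
        rw [← Finset.mem_coe, ← hjt] at h1
        obtain ⟨σ, hσ⟩ := h1
        exact ⟨σ, hi.injective (by rw [hk, hσ])⟩)
      apply hjT
      have : j = fun ρ : Fin r => i ρ := by
        funext ρ
        rw [← hk, hkid]
      rw [this]
      exact hiT r)
  refine ⟨N, hNi, fun r i hi hiN => ?_⟩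
  by_contra hT
  refine hN (Finset.univ.image i) ?_ ⟨r, i, hi, by simp, hT⟩
  rintro x hx
  simp only [Finset.coe_image, Finset.coe_univ, Set.image_univ] at hx
  obtain ⟨ρ, rfl⟩ := hx
  exact hiN ρ
end

section
/- Let $(T_r)_{r\in\mathbb{N}}$ be a sequence where each $T_r$ is a set of strictly increasing $r$-tuples of positive integers, and suppose that for every infinite subset $M \subseteq \mathbb{N}$ there exists a strictly increasing sequence $i_1 < i_2 < \cdots$ of elements of $M$ with $(i_1,\ldots,i_r) \in T_r$ for every $r$. Then there exists an infinite subset $\widetilde{M_0} \subseteq \mathbb{N}$ such that for every $k \geq 0$ and every choice of $i_1 < \cdots < i_k$ in $\widetilde{M_0}$, either $i_1,\ldots,i_k \downarrow \widetilde{M_0}$ or $i_1,\ldots,i_k \uparrow \widetilde{M_0}$ holds. -/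
/-- The sequence obtained by extending the finite tuple `i : Fin k → ℕ` by the
infinite sequence `j : ℕ → ℕ`. -/
def extendTuple {k : ℕ} (i : Fin k → ℕ) (j : ℕ → ℕ) : ℕ → ℕ :=
  fun n => if h : n < k then i ⟨n, h⟩ else j (n - k)

/-- `i₁,…,i_k ↓ M` : whenever `i_{k+1} < i_{k+2} < ⋯` are points of `M` with
`i_{k+1} > i_k`, there is an `r` with `(i₁,…,i_r) ∉ T r`. -/
def ArrowDown (T : ∀ r : ℕ, Set (Fin r → ℕ)) {k : ℕ} (i : Fin k → ℕ) (M : Set ℕ) : Prop :=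
  ∀ j : ℕ → ℕ, StrictMono j → (∀ n, j n ∈ M) → (∀ ρ : Fin k, i ρ < j 0) →
    ∃ r : ℕ, (fun ρ : Fin r => extendTuple i j ρ) ∉ T r

/-- `i₁,…,i_k ↑ M` : whenever `N` is an infinite subset of `M`, there are
`i_{k+1} < i_{k+2} < ⋯` in `N` with `i_{k+1} > i_k` such that `(i₁,…,i_r) ∈ T r`
for every `r`. -/
def ArrowUp (T : ∀ r : ℕ, Set (Fin r → ℕ)) {k : ℕ} (i : Fin k → ℕ) (M : Set ℕ) : Prop :=
  ∀ N : Set ℕ, N ⊆ M → N.Infinite →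
    ∃ j : ℕ → ℕ, StrictMono j ∧ (∀ n, j n ∈ N) ∧ (∀ ρ : Fin k, i ρ < j 0) ∧
      ∀ r : ℕ, (fun ρ : Fin r => extendTuple i j ρ) ∈ T r

/-- A tuple is decided by `M`. -/
def Decided (T : ∀ r : ℕ, Set (Fin r → ℕ)) {k : ℕ} (i : Fin k → ℕ) (M : Set ℕ) : Prop :=
  ArrowDown T i M ∨ ArrowUp T i M

theorem Decided.mono {T : ∀ r : ℕ, Set (Fin r → ℕ)} {k : ℕ} {i : Fin k → ℕ} {A M : Set ℕ}
    (hA : Decided T i A) (hM : ∀ x ∈ M, (∀ ρ, i ρ < x) → x ∈ A) : Decided T i M := by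
  rcases hA with hA | hA
  · left
    intro j hj hjM hij
    refine hA j hj (fun n => hM _ (hjM n) fun ρ => ?_) hij
    exact (hij ρ).trans_le (hj.monotone (Nat.zero_le n))
  · right
    intro N hN hinf
    have hfin : {x : ℕ | ¬ ∀ ρ, i ρ < x}.Finite := by
      refine (Set.finite_Iic (∑ ρ, i ρ)).subset ?_
      intro x hx
      simp only [Set.mem_setOf_eq, not_forall, not_lt] at hx
      obtain ⟨ρ, hρ⟩ := hx
      exact hρ.trans (Finset.single_le_sum (f := i) (fun _ _ => Nat.zero_le _) (Finset.mem_univ ρ))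
    obtain ⟨j, h1, h2, h3, h4⟩ := hA (N \ {x : ℕ | ¬ ∀ ρ, i ρ < x})
      (fun x hx => hM x (hN hx.1) (by simpa using hx.2)) (hinf.sdiff hfin)
    exact ⟨j, h1, fun n => (h2 n).1, h3, h4⟩

theorem exists_decided (T : ∀ r : ℕ, Set (Fin r → ℕ)) {k : ℕ} (i : Fin k → ℕ) (M : Set ℕ)
    (hM : M.Infinite) : ∃ N ⊆ M, N.Infinite ∧ Decided T i N := by
  by_cases hu : ArrowUp T i M
  · exact ⟨M, subset_rfl, hM, Or.inr hu⟩
  · unfold ArrowUp at hu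
    push Not at hu
    obtain ⟨N, h1, h2, h3⟩ := hu
    exact ⟨N, h1, h2, Or.inl h3⟩

theorem exists_decided_finite (T : ∀ r : ℕ, Set (Fin r → ℕ)) (M : Set ℕ) (hM : M.Infinite)
    (S : Set (Σ k : ℕ, Fin k → ℕ)) (hS : S.Finite) :
    ∃ N ⊆ M, N.Infinite ∧ ∀ p ∈ S, Decided T p.2 N := by
  induction S, hS using Set.Finite.induction_on with
  | empty => exact ⟨M, subset_rfl, hM, by simp⟩
  | insert _ _ ih =>
    rename_i a S _ _
    obtain ⟨N, h1, h2, h3⟩ := ih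
    obtain ⟨N', h1', h2', h3'⟩ := exists_decided T a.2 N h2
    refine ⟨N', h1'.trans h1, h2', ?_⟩
    rintro p (rfl | hp)
    · exact h3'
    · exact (h3 p hp).mono fun x hx _ => h1' hx

theorem exists_decided_lt (T : ∀ r : ℕ, Set (Fin r → ℕ)) (n : ℕ) (M : Set ℕ) (hM : M.Infinite) :
    ∃ N ⊆ M, N.Infinite ∧ ∀ (k : ℕ) (i : Fin k → ℕ), StrictMono i → (∀ ρ, i ρ < n) →
      Decided T i N := by
  have hS : (⋃ k ∈ Set.Iic n, Sigma.mk (β := fun k => Fin k → ℕ) k ''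
      (Set.pi Set.univ fun _ => Set.Iio n)).Finite :=
    (Set.finite_Iic n).biUnion fun k _ => (Set.Finite.pi fun _ => Set.finite_Iio n).image _
  obtain ⟨N, h1, h2, h3⟩ := exists_decided_finite T M hM _ hS
  refine ⟨N, h1, h2, fun k i hi hin => h3 ⟨k, i⟩ ?_⟩
  have hk : k ≤ n := by
    have := Fintype.card_le_of_injective (fun ρ => (⟨i ρ, hin ρ⟩ : Fin n))
      (fun a b hab => hi.injective (by simpa using hab))
    simpa using this
  exact Set.mem_biUnion (Set.mem_Iic.2 hk) ⟨i, fun ρ _ => hin ρ, rfl⟩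

/-- There is an infinite set `M₀` such that each tuple from `M₀` satisfies
`↓ M₀` or `↑ M₀`. -/
theorem exists_down_or_up (T : ∀ r : ℕ, Set (Fin r → ℕ))
    (h : ∀ M : Set ℕ, M.Infinite →
      ∃ i : ℕ → ℕ, StrictMono i ∧ (∀ n, i n ∈ M) ∧
        ∀ r : ℕ, (fun ρ : Fin r => i ρ) ∈ T r) :
    ∃ M₀ : Set ℕ, M₀.Infinite ∧
      ∀ (k : ℕ) (i : Fin k → ℕ), StrictMono i → (∀ ρ, i ρ ∈ M₀) →
        ArrowDown T i M₀ ∨ ArrowUp T i M₀ := by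
  choose! F hF1 hF2 hF3 using exists_decided_lt T
  let A : ℕ → Set ℕ := fun n => Nat.rec (F 0 Set.univ) (fun n B => F (n + 1) B) n
  have hA0 : A 0 = F 0 Set.univ := rfl
  have hAs : ∀ n, A (n + 1) = F (n + 1) (A n) := fun _ => rfl
  have hinf : ∀ n, (A n).Infinite := by
    intro n
    induction n with
    | zero => exact hF2 _ _ Set.infinite_univ
    | succ n ih => exact hF2 _ _ ih
  have hanti : Antitone A := antitone_nat_of_succ_le fun n => hF1 _ _ (hinf n)
  have hdec : ∀ n (k : ℕ) (i : Fin k → ℕ), StrictMono i → (∀ ρ, i ρ < n) →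
      Decided T i (A n) := by
    intro n
    cases n with
    | zero => exact hF3 _ _ Set.infinite_univ
    | succ n => exact hF3 _ _ (hinf n)
  choose g hg1 hg2 using fun a : ℕ => (hinf (a + 1)).exists_gt a
  let m : ℕ → ℕ := fun n => Nat.rec (g 0) (fun _ b => g b) n
  have hm : StrictMono m := strictMono_nat_of_lt_succ fun n => hg2 (m n)
  have hmA : ∀ n, m (n + 1) ∈ A (m n + 1) := fun n => hg1 (m n)
  have hm0 : ∀ n, m n ∈ A 0 := by
    intro n
    cases n with
    | zero => exact hanti (Nat.zero_le 1) (hg1 0)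
    | succ n => exact hanti (Nat.zero_le (m n + 1)) (hmA n)
  refine ⟨Set.range m, Set.infinite_range_of_injective hm.injective, ?_⟩
  intro k i hi hiM
  change Decided T i (Set.range m)
  cases k with
  | zero =>
    refine (hdec 0 0 i hi fun ρ => ρ.elim0).mono ?_
    rintro _ ⟨n, rfl⟩ _
    exact hm0 n
  | succ k =>
    obtain ⟨j, hj⟩ := hiM (Fin.last k)
    refine (hdec (m j + 1) _ i hi fun ρ => ?_).mono ?_
    · rw [hj]
      exact Nat.lt_succ_of_le (hi.monotone (Fin.le_last ρ))
    · rintro _ ⟨n, rfl⟩ hlt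
      have h1 := hlt (Fin.last k)
      rw [← hj, hm.lt_iff_lt] at h1
      obtain ⟨n, rfl⟩ : ∃ n', n = n' + 1 := ⟨n - 1, by omega⟩
      exact hanti (Nat.succ_le_succ (hm.monotone (Nat.le_of_lt_succ h1))) (hmA n)
end

section
/- Let $(T_r)_{r\in\mathbb{N}}$ be a sequence where each $T_r$ is a set of strictly increasing $r$-tuples of positive integers, let $\widetilde{M_0} \subseteq \mathbb{N}$ be infinite, and let $i_1 < \cdots < i_k$ be elements of $\widetilde{M_0}$ with $i_1,\ldots,i_k \uparrow \widetilde{M_0}$. Then there are only finitely many $i > i_k$ in $\widetilde{M_0}$ such that $i_1,\ldots,i_k,i \downarrow \widetilde{M_0}$. -/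
/-- If `i₁,…,i_k ↑ M₀` then there are only finitely many `i > i_k` in `M₀` with
`i₁,…,i_k,i ↓ M₀`. -/
theorem finitely_many_down_extensions (T : ∀ r : ℕ, Set (Fin r → ℕ))
    (M : Set ℕ) (hM : M.Infinite) {k : ℕ} (i : Fin k → ℕ)
    (hi : StrictMono i) (hiM : ∀ ρ, i ρ ∈ M) (hup : ArrowUp T i M) :
    {m : ℕ | m ∈ M ∧ (∀ ρ, i ρ < m) ∧ ArrowDown T (Fin.snoc i m) M}.Finite := by
  by_contra hinf
  obtain ⟨j, hj, hjN, hlt, hT⟩ := hup _ (fun m hm => hm.1) hinf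
  obtain ⟨r, hr⟩ := (hjN 0).2.2 (fun n => j (n + 1))
    (fun a b hab => hj (by omega)) (fun n => (hjN (n + 1)).1)
    (by
      intro ρ
      refine Fin.lastCases ?_ (fun ρ => ?_) ρ
      · simpa using hj (Nat.zero_lt_one)
      · simpa using (hlt ρ).trans (hj Nat.zero_lt_one))
  apply hr
  have key : extendTuple (Fin.snoc i (j 0) : Fin (k + 1) → ℕ) (fun n => j (n + 1))
      = extendTuple i j := by
    funext n
    unfold extendTuple
    rcases lt_trichotomy n k with h | h | h
    · simp [Fin.snoc, h, Nat.lt_succ_of_lt h]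
    · subst h
      simp [Fin.snoc]
    · have h1 : ¬ n < k + 1 := by omega
      have h2 : ¬ n < k := by omega
      simp only [h1, h2, dite_false]
      congr 1
      omega
  have := hT r
  rw [← key] at this
  exact this
end

section
/- Let $X$ be a real Banach space, let $(x_n)$ be a bounded sequence in $X$, and let $\varepsilon > 0$. Suppose $(x_n)$ admits $\varepsilon$-$\ell^1$-blocks. Then there is a subsequence $(x_{n_k})$ of $(x_n)$ such that for every $x' \in X'$ with $\|x'\| = 1$ one has $\limsup_k x'(x_{n_k}) - \liminf_k x'(x_{n_k}) \leq 2\varepsilon$. -/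
open Filter

/-- A bounded sequence `(xₙ)` in a Banach space over `𝕜` admits
`ε`-`ℓ¹`-blocks if for every infinite `M ⊆ ℕ` there are `i₁ < ⋯ < i_r` in `M`
and scalars `a₁,…,a_r` with `∑ |a_ρ| = 1` and `‖∑ a_ρ x_{i_ρ}‖ ≤ ε`. -/
def AdmitsL1Blocks (𝕜 : Type*) [RCLike 𝕜] {X : Type*} [NormedAddCommGroup X]
    [NormedSpace 𝕜 X] (x : ℕ → X) (ε : ℝ) : Prop :=
  ∀ M : Set ℕ, M.Infinite →
    ∃ (r : ℕ) (i : Fin r → ℕ) (a : Fin r → 𝕜),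
      StrictMono i ∧ (∀ ρ, i ρ ∈ M) ∧ (∑ ρ, ‖a ρ‖) = 1 ∧
        ‖∑ ρ, a ρ • x (i ρ)‖ ≤ ε

namespace QRos

/-- Nested sequence construction. -/
lemma fuse (R : ℕ → ℕ → Set ℕ → Prop) (M : Set ℕ) (hM : M.Infinite)
    (hR : ∀ k, ∀ j ∈ M, ∀ M' : Set ℕ, M' ⊆ M → M'.Infinite →
      ∃ N, N ⊆ M' ∧ N.Infinite ∧ R k j N) :
    ∃ j : ℕ → ℕ, StrictMono j ∧ (∀ k, j k ∈ M) ∧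
      ∀ k, ∃ N, R k (j k) N ∧ ∀ l, k < l → j l ∈ N := by
  have hstep : ∀ (k : ℕ) (s : {N : Set ℕ // N ⊆ M ∧ N.Infinite}),
      ∃ s' : {N : Set ℕ // N ⊆ M ∧ N.Infinite},
        s'.1 ⊆ s.1 ∩ Set.Ioi (sInf s.1) ∧ R k (sInf s.1) s'.1 := by
    rintro k ⟨N, hN, hNi⟩
    have hj : sInf N ∈ N := Nat.sInf_mem hNi.nonempty
    have hinf : (N ∩ Set.Ioi (sInf N)).Infinite := by
      have : N ∩ Set.Ioi (sInf N) = N \ Set.Iic (sInf N) := by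
        ext y; simp
      rw [this]
      exact hNi.diff (Set.finite_Iic _)
    obtain ⟨N', h1, h2, h3⟩ := hR k (sInf N) (hN hj) (N ∩ Set.Ioi (sInf N))
      (Set.inter_subset_left.trans hN) hinf
    exact ⟨⟨N', (h1.trans Set.inter_subset_left).trans hN, h2⟩, h1, h3⟩
  choose f hf using hstep
  let s : ℕ → {N : Set ℕ // N ⊆ M ∧ N.Infinite} :=
    fun k => Nat.rec ⟨M, subset_rfl, hM⟩ (fun k t => f k t) k
  have hs : ∀ k, s (k+1) = f k (s k) := fun k => rfl
  have hmem : ∀ k, sInf (s k).1 ∈ (s k).1 := fun k => Nat.sInf_mem (s k).2.2.nonempty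
  have hsub : ∀ k, (s (k+1)).1 ⊆ (s k).1 ∩ Set.Ioi (sInf (s k).1) := by
    intro k; rw [hs]; exact (hf k (s k)).1
  have hanti : Antitone (fun k => (s k).1) :=
    antitone_nat_of_succ_le fun k => (hsub k).trans Set.inter_subset_left
  refine ⟨fun k => sInf (s k).1, strictMono_nat_of_lt_succ fun k => ?_,
    fun k => (s k).2.1 (hmem k), fun k => ⟨(s (k+1)).1, ?_, ?_⟩⟩
  · exact (hsub k (hmem (k+1))).2
  · rw [hs]; exact (hf k (s k)).2
  · intro l hl
    exact hanti (Nat.succ_le_of_lt hl) (hmem l)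

def Conv {S : Type*} (P : Bool → ℕ → Set S) (T : Set S) (N : Set ℕ) : Prop :=
  ∀ t ∈ T, ∃ b, {n | n ∈ N ∧ t ∈ P b n}.Finite

def Bad {S : Type*} (P : Bool → ℕ → Set S) (T : Set S) (M : Set ℕ) : Prop :=
  ∀ N ⊆ M, N.Infinite → ¬ Conv P T N

lemma Conv.mono {S : Type*} {P : Bool → ℕ → Set S} {T : Set S} {N N' : Set ℕ}
    (h : Conv P T N) (hN : (N' \ N).Finite) : Conv P T N' := by
  intro t ht
  obtain ⟨b, hb⟩ := h t ht
  refine ⟨b, (hb.union hN).subset ?_⟩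
  rintro n ⟨h1, h2⟩
  by_cases hn : n ∈ N
  · exact Or.inl ⟨hn, h2⟩
  · exact Or.inr ⟨h1, hn⟩

lemma image_diff_finite {j : ℕ → ℕ} {N : Set ℕ} {k : ℕ} (h : ∀ l, k < l → j l ∈ N)
    (K : Set ℕ) : (j '' K \ N).Finite := by
  refine ((Set.finite_Iic k).image j).subset ?_
  rintro _ ⟨⟨l, -, rfl⟩, hl⟩
  refine ⟨l, ?_, rfl⟩
  by_contra hc
  exact hl (h l (by simpa using hc))

lemma step {S : Type*} (P : Bool → ℕ → Set S) (F : Set (Set S)) (hF : F.Finite)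
    (M : Set ℕ) (hM : M.Infinite) (hbad : ∀ T ∈ F, Bad P T M) :
    ∃ j ∈ M, ∃ M' ⊆ M, M'.Infinite ∧ ∀ T ∈ F, ∀ b, Bad P (T ∩ P b j) M' := by
  by_contra hcon
  push Not at hcon
  obtain ⟨j, hj, hjM, hjR⟩ := fuse
    (fun _ j N => ∃ p : F × Bool, Conv P (p.1.1 ∩ P p.2 j) N) M hM (by
      intro _ j hj M' hM' hi
      obtain ⟨T, hT, b, hb⟩ := hcon j hj M' hM' hi
      unfold Bad at hb
      push Not at hb
      obtain ⟨N, h1, h2, h3⟩ := hb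
      exact ⟨N, h1, h2, ⟨⟨T, hT⟩, b⟩, h3⟩)
  have : ∀ k, ∃ p : F × Bool, ∃ N, Conv P (p.1.1 ∩ P p.2 (j k)) N ∧
      ∀ l, k < l → j l ∈ N := by
    intro k
    obtain ⟨N, ⟨p, hp⟩, h⟩ := hjR k
    exact ⟨p, N, hp, h⟩
  choose p N hp hN using this
  haveI := hF.to_subtype
  obtain ⟨q, hq⟩ := Finite.exists_infinite_fiber p
  have hK : (p ⁻¹' {q}).Infinite := Set.infinite_coe_iff.mp hq
  refine hbad q.1.1 q.1.2 (j '' (p ⁻¹' {q})) ?_ (hK.image hj.injective.injOn) ?_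
  · rintro _ ⟨k, -, rfl⟩; exact hjM k
  · intro t ht
    by_cases hex : ∃ k, p k = q ∧ t ∈ P q.2 (j k)
    · obtain ⟨k, hk, htk⟩ := hex
      have h1 := (hp k).mono (image_diff_finite (hN k) (p ⁻¹' {q}))
      rw [hk] at h1
      exact h1 t ⟨ht, htk⟩
    · refine ⟨q.2, ?_⟩
      convert Set.finite_empty
      ext n
      simp only [Set.mem_setOf_eq, Set.mem_empty_iff_false, iff_false]
      rintro ⟨⟨k, hk, rfl⟩, htk⟩
      exact hex ⟨k, hk, htk⟩

/-- Existence of an independent subsequence. -/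
lemma indep {S : Type*} (P : Bool → ℕ → Set S) (M : Set ℕ) (hM : M.Infinite)
    (hbad : Bad P Set.univ M) :
    ∃ j : ℕ → ℕ, StrictMono j ∧ (∀ k, j k ∈ M) ∧
      ∀ (σ : ℕ → Bool) (n : ℕ), ∃ t, ∀ k < n, t ∈ P (σ (j k)) (j k) := by
  let St := {p : Set (Set S) × Set ℕ // p.1.Finite ∧ p.2.Infinite ∧ p.2 ⊆ M ∧
    ∀ T ∈ p.1, Bad P T p.2}
  have hstep : ∀ s : St, ∃ (j : ℕ) (s' : St), j ∈ s.1.2 ∧ s'.1.2 ⊆ s.1.2 ∩ Set.Ioi j ∧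
      ∀ T ∈ s.1.1, ∀ b, T ∩ P b j ∈ s'.1.1 := by
    rintro ⟨⟨F, N⟩, hF, hN, hNM, hB⟩
    obtain ⟨j, hj, M', hM', hi, hb⟩ := step P F hF N hN hB
    have hsub : M' \ Set.Iic j ⊆ M' := Set.diff_subset
    refine ⟨j, ⟨⟨(fun q : Set S × Bool => q.1 ∩ P q.2 j) '' (F ×ˢ Set.univ),
      M' \ Set.Iic j⟩, ?_, hi.diff (Set.finite_Iic _), (hsub.trans hM').trans hNM, ?_⟩,
      hj, ?_, ?_⟩
    · exact (hF.prod Set.finite_univ).image _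
    · rintro _ ⟨⟨T, b⟩, ⟨hT, -⟩, rfl⟩ N' hN' hi'
      exact hb T hT b N' (hN'.trans hsub) hi'
    · rintro y ⟨hy, hy2⟩
      exact ⟨hM' hy, by simpa using hy2⟩
    · intro T hT b
      exact ⟨(T, b), ⟨hT, trivial⟩, rfl⟩
  choose J f hJ hf hT using hstep
  let s0 : St := ⟨⟨{Set.univ}, M⟩, Set.finite_singleton _, hM, subset_rfl, by
    rintro T rfl; exact hbad⟩
  let s : ℕ → St := fun k => Nat.rec s0 (fun _ t => f t) k
  have hs : ∀ k, s (k+1) = f (s k) := fun k => rfl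
  refine ⟨fun k => J (s k), strictMono_nat_of_lt_succ fun k => ?_,
    fun k => (s k).2.2.2.1 (hJ _), fun σ n => ?_⟩
  · have := hJ (s (k+1))
    rw [hs] at this
    exact (hf (s k) this).2
  · have key : ∀ n, ∃ T ∈ (s n).1.1, ∀ t ∈ T, ∀ k < n, t ∈ P (σ (J (s k))) (J (s k)) := by
      intro n
      induction n with
      | zero => exact ⟨Set.univ, rfl, by simp⟩
      | succ n ih =>
        obtain ⟨T, hT1, hT2⟩ := ih
        refine ⟨T ∩ P (σ (J (s n))) (J (s n)), ?_, ?_⟩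
        · rw [hs]; exact hT _ _ hT1 _
        · rintro t ⟨h1, h2⟩ k hk
          rcases Nat.lt_succ_iff_lt_or_eq.mp hk with h | rfl
          · exact hT2 t h1 k h
          · exact h2
    obtain ⟨T, hT1, hT2⟩ := key n
    have hB := (s n).2.2.2.2 T hT1 _ subset_rfl (s n).2.2.1
    unfold Conv at hB
    push Not at hB
    obtain ⟨t, ht, -⟩ := hB
    exact ⟨t, hT2 t ht⟩

/-- The two half-space families. -/
def HP {X : Type*} [NormedAddCommGroup X] [NormedSpace ℝ X] (x : ℕ → X) (a b : ℝ) :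
    Bool → ℕ → Set {x' : X →L[ℝ] ℝ // ‖x'‖ = 1}
  | true, n => {t | b < t.1 (x n)}
  | false, n => {t | t.1 (x n) < a}

lemma not_bad {X : Type*} [NormedAddCommGroup X] [NormedSpace ℝ X] (x : ℕ → X) {ε : ℝ}
    (h : AdmitsL1Blocks ℝ x ε) (a b : ℝ) (hab : 2 * ε < b - a) (M : Set ℕ)
    (hM : M.Infinite) : ¬ Bad (HP x a b) Set.univ M := by
  intro hbad
  obtain ⟨j, hj, hjM, hind⟩ := indep _ M hM hbad
  obtain ⟨r, i, c, hi, hiM, hc, hn⟩ := h (Set.range j) (Set.infinite_range_of_injective hj.injective)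
  choose k hk using hiM
  classical
  let σ : ℕ → Bool := fun m => decide (∃ ρ, i ρ = m ∧ 0 ≤ c ρ)
  have hσ : ∀ ρ, σ (i ρ) = decide (0 ≤ c ρ) := by
    intro ρ
    simp only [σ, hi.injective.eq_iff]
    simp
  obtain ⟨n, hkn⟩ : ∃ n, ∀ ρ, k ρ < n := by
    refine ⟨(Finset.univ.sup k) + 1, fun ρ => Nat.lt_succ_of_le ?_⟩
    exact Finset.le_sup (f := k) (Finset.mem_univ ρ)
  obtain ⟨t, ht⟩ := hind σ n
  obtain ⟨u, hu⟩ := hind (fun m => !σ m) n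
  have hterm : ∀ ρ, ‖c ρ‖ * (b - a) ≤ c ρ * (t.1 (x (i ρ)) - u.1 (x (i ρ))) := by
    intro ρ
    have h1 := ht (k ρ) (hkn ρ)
    have h2 := hu (k ρ) (hkn ρ)
    simp only [hk, hσ] at h1 h2
    by_cases h0 : 0 ≤ c ρ
    · simp only [h0, decide_true, Bool.not_true, HP, Set.mem_setOf_eq] at h1 h2
      rw [Real.norm_of_nonneg h0]
      exact mul_le_mul_of_nonneg_left (by linarith) h0
    · simp only [h0, decide_false, Bool.not_false, HP, Set.mem_setOf_eq] at h1 h2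
      push Not at h0
      rw [Real.norm_of_nonpos h0.le]
      nlinarith
  have hsum : b - a ≤ t.1 (∑ ρ, c ρ • x (i ρ)) - u.1 (∑ ρ, c ρ • x (i ρ)) := by
    calc b - a = ∑ ρ, ‖c ρ‖ * (b - a) := by rw [← Finset.sum_mul, hc, one_mul]
      _ ≤ ∑ ρ, c ρ * (t.1 (x (i ρ)) - u.1 (x (i ρ))) := Finset.sum_le_sum fun ρ _ => hterm ρ
      _ = _ := by simp [mul_sub, map_sum]
  have ht' := t.1.le_opNorm (∑ ρ, c ρ • x (i ρ))
  have hu' := u.1.le_opNorm (∑ ρ, c ρ • x (i ρ))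
  rw [t.2, one_mul, Real.norm_eq_abs] at ht'
  rw [u.2, one_mul, Real.norm_eq_abs] at hu'
  have := (abs_le.mp ht').2
  have := (abs_le.mp hu').1
  linarith

end QRos

/-- **Quantitative version of Rosenthal's `ℓ¹`-theorem, real case.**
If a bounded sequence in a real Banach space admits `ε`-`ℓ¹`-blocks then it has
a subsequence which is close to being weakly Cauchy: for every normalized
functional `x'`, `limsup x'(x_{n_k}) - liminf x'(x_{n_k}) ≤ 2ε`. -/
theorem quantitative_rosenthal_real {X : Type*} [NormedAddCommGroup X]
    [NormedSpace ℝ X] [CompleteSpace X]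
    (x : ℕ → X) (hb : ∃ C : ℝ, ∀ n, ‖x n‖ ≤ C) {ε : ℝ} (hε : 0 < ε)
    (h : AdmitsL1Blocks ℝ x ε) :
    ∃ n : ℕ → ℕ, StrictMono n ∧
      ∀ x' : X →L[ℝ] ℝ, ‖x'‖ = 1 →
        limsup (fun k => x' (x (n k))) atTop -
          liminf (fun k => x' (x (n k))) atTop ≤ 2 * ε := by
  classical
  obtain ⟨C, hC⟩ := hb
  obtain ⟨e, he⟩ := exists_surjective_nat (ℚ × ℚ)
  obtain ⟨j, hj, -, hjR⟩ := QRos.fuse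
    (fun k _ N => 2 * ε < ((e k).2 : ℝ) - ((e k).1 : ℝ) →
      QRos.Conv (QRos.HP x (e k).1 (e k).2) Set.univ N) Set.univ Set.infinite_univ (by
      intro k _ _ M' _ hi
      by_cases hk : 2 * ε < ((e k).2 : ℝ) - ((e k).1 : ℝ)
      · have := QRos.not_bad x h _ _ hk M' hi
        unfold QRos.Bad at this
        push Not at this
        obtain ⟨N, h1, h2, h3⟩ := this
        exact ⟨N, h1, h2, fun _ => h3⟩
      · exact ⟨M', subset_rfl, hi, fun h' => absurd h' hk⟩)
  refine ⟨j, hj, fun x' hx' => ?_⟩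
  by_contra hcon
  push Not at hcon
  have hbd : ∀ k, |x' (x (j k))| ≤ C := by
    intro k
    have := x'.le_opNorm (x (j k))
    rw [hx', one_mul, Real.norm_eq_abs] at this
    exact this.trans (hC _)
  have hub : IsBoundedUnder (· ≤ ·) atTop (fun k => x' (x (j k))) :=
    isBoundedUnder_of ⟨C, fun k => (abs_le.mp (hbd k)).2⟩
  have hlb : IsBoundedUnder (· ≥ ·) atTop (fun k => x' (x (j k))) :=
    isBoundedUnder_of ⟨-C, fun k => (abs_le.mp (hbd k)).1⟩
  set U := limsup (fun k => x' (x (j k))) atTop with hU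
  set L := liminf (fun k => x' (x (j k))) atTop with hL
  obtain ⟨a, ha1, ha2⟩ := exists_rat_btwn (show L < U - 2 * ε by linarith)
  obtain ⟨b, hb1, hb2⟩ := exists_rat_btwn (show (a : ℝ) + 2 * ε < U by linarith)
  obtain ⟨k, hk⟩ := he (a, b)
  obtain ⟨N, hN, hjN⟩ := hjR k
  rw [hk] at hN
  have hconv := (hN (by simp only; linarith)).mono
    (QRos.image_diff_finite hjN Set.univ) ⟨x', hx'⟩ trivial
  have f1 : ∃ᶠ k in atTop, x' (x (j k)) < a :=
    frequently_lt_of_liminf_lt hub.isCoboundedUnder_ge ha1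
  have f2 : ∃ᶠ k in atTop, (b : ℝ) < x' (x (j k)) :=
    frequently_lt_of_lt_limsup hlb.isCoboundedUnder_le hb2
  rw [Nat.frequently_atTop_iff_infinite] at f1 f2
  obtain ⟨c, hc⟩ := hconv
  cases c with
  | false =>
    refine (f1.image hj.injective.injOn) (hc.subset ?_)
    rintro _ ⟨m, hm, rfl⟩
    exact ⟨⟨m, trivial, rfl⟩, hm⟩
  | true =>
    refine (f2.image hj.injective.injOn) (hc.subset ?_)
    rintro _ ⟨m, hm, rfl⟩
    exact ⟨⟨m, trivial, rfl⟩, hm⟩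
end

section
/- Let $X$ be a complex Banach space, let $(x_n)$ be a bounded sequence in $X$, and let $\varepsilon > 0$. Suppose $(x_n)$ admits $\varepsilon$-$\ell^1$-blocks. Then there is a subsequence $(x_{n_k})$ such that for every $x' \in X'$ with $\|x'\| = 1$, the diameter of the set of accumulation points of the sequence $(x'(x_{n_k}))_k$ in $\mathbb{C}$ is at most $8\varepsilon/\sqrt{2}$. -/
open Filter

/-- Every infinite subset of `M` admits a point of `T` lying infinitely often in both sides. -/
def RGood {S : Type*} (C : Bool → ℕ → Set S) (T : Set S) (M : Set ℕ) : Prop :=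
  ∀ N : Set ℕ, N ⊆ M → N.Infinite → ∃ x ∈ T, ∀ b, {n | n ∈ N ∧ x ∈ C b n}.Infinite

theorem RGood.mono {S : Type*} {C : Bool → ℕ → Set S} {T : Set S} {M N : Set ℕ}
    (h : RGood C T M) (hN : N ⊆ M) : RGood C T N :=
  fun N' h1 h2 => h N' (h1.trans hN) h2

theorem rgood_step {S : Type*} (C : Bool → ℕ → Set S) (F : Set (Set S)) (hF : F.Finite)
    (M : Set ℕ) (hM : M.Infinite) (hG : ∀ T ∈ F, RGood C T M) :
    ∃ n ∈ M, ∃ N ⊆ M, N.Infinite ∧ (∀ m ∈ N, n < m) ∧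
      ∀ T ∈ F, ∀ b, RGood C (T ∩ C b n) N := by
  by_contra hcon
  push Not at hcon
  have key : ∀ N : {N : Set ℕ // N ⊆ M ∧ N.Infinite}, ∃ (n : ℕ) (N' : {N : Set ℕ // N ⊆ M ∧ N.Infinite})
      (c : F × Bool), n ∈ N.1 ∧ N'.1 ⊆ N.1 ∧ (∀ m ∈ N'.1, n < m) ∧
        ∀ x ∈ c.1.1 ∩ C c.2 n, ¬ ∀ b, {m | m ∈ N'.1 ∧ x ∈ C b m}.Infinite := by
    rintro ⟨N, hNM, hN⟩
    obtain ⟨n, hn⟩ := hN.nonempty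
    have hinf : (N \ Set.Iic n).Infinite := hN.sdiff (Set.finite_Iic n)
    obtain ⟨T, hT, b, hb⟩ := hcon n (hNM hn) (N \ Set.Iic n) (Set.sdiff_subset.trans hNM) hinf
      (fun m hm => by simpa using hm.2)
    unfold RGood at hb
    push Not at hb
    obtain ⟨N', h1, h2, h3⟩ := hb
    refine ⟨n, ⟨N', (h1.trans Set.sdiff_subset).trans hNM, h2⟩, ⟨⟨T, hT⟩, b⟩, hn,
      h1.trans Set.sdiff_subset, fun m hm => by simpa using (h1 hm).2, ?_⟩
    intro x hx hall
    obtain ⟨b, hb⟩ := h3 x hx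
    exact hall b hb
  choose f g c hf hg hfg hc using key
  let N : ℕ → {N : Set ℕ // N ⊆ M ∧ N.Infinite} := fun k => g^[k] ⟨M, subset_rfl, hM⟩
  have hNs : ∀ k, N (k+1) = g (N k) := fun k => Function.iterate_succ_apply' _ _ _
  have hanti : Antitone (fun k => (N k).1) := antitone_nat_of_succ_le (fun k => by
    simp only [hNs]; exact hg _)
  let n : ℕ → ℕ := fun k => f (N k)
  have hnlt : ∀ j k, j < k → n j < n k := by
    intro j k hjk
    have h1 : n k ∈ (N (j+1)).1 := hanti (Nat.succ_le_of_lt hjk) (hf (N k))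
    rw [hNs] at h1
    exact hfg _ _ h1
  have hmono : StrictMono n := fun j k h => hnlt j k h
  have : Finite F := hF
  obtain ⟨c0, hc0⟩ := Finite.exists_infinite_fiber (fun k => c (N k))
  have hfib : (Set.preimage (fun k => c (N k)) {c0}).Infinite := Set.infinite_coe_iff.1 hc0
  have hM' : (Set.image n (Set.preimage (fun k => c (N k)) {c0})).Infinite := hfib.image hmono.injective.injOn
  obtain ⟨x, hxT, hx⟩ := hG c0.1.1 c0.1.2 _ (by
    rintro _ ⟨k, -, rfl⟩
    exact (N k).2.1 (hf _)) hM'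
  obtain ⟨_, ⟨k, hk, rfl⟩, hxk⟩ := (hx c0.2).nonempty
  have hk' : c (N k) = c0 := hk
  refine hc (N k) x (by rw [hk']; exact ⟨hxT, hxk⟩) (fun b => ?_)
  refine ((hx b).sdiff (Set.finite_Iic (n k))).mono ?_
  rintro _ ⟨⟨⟨j, -, rfl⟩, h2⟩, h3⟩
  refine ⟨?_, h2⟩
  have h4 : n k < n j := by simpa using h3
  have hkj : k < j := hmono.lt_iff_lt.1 h4
  rw [← hNs]
  exact hanti (Nat.succ_le_of_lt hkj) (hf (N j))

theorem rgood_indep {S : Type*} (C : Bool → ℕ → Set S) (M : Set ℕ) (hM : M.Infinite)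
    (hG : RGood C Set.univ M) :
    ∃ L : Set ℕ, L.Infinite ∧ ∀ (σ : ℕ → Bool) (k : ℕ), ∃ x, ∀ m ∈ L, m < k → x ∈ C (σ m) m := by
  let St := {p : Set (Set S) × Set ℕ // p.1.Finite ∧ p.2.Infinite ∧ ∀ T ∈ p.1, RGood C T p.2}
  have key : ∀ p : St, ∃ (n : ℕ) (q : St), n ∈ p.1.2 ∧ q.1.2 ⊆ p.1.2 ∧ (∀ m ∈ q.1.2, n < m) ∧
      ∀ T ∈ p.1.1, ∀ b, T ∩ C b n ∈ q.1.1 := by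
    rintro ⟨⟨F, N⟩, hF, hN, hT⟩
    obtain ⟨n, hn, N', h1, h2, h3, h4⟩ := rgood_step C F hF N hN hT
    refine ⟨n, ⟨⟨Set.image2 (fun T b => T ∩ C b n) F Set.univ, N'⟩,
      hF.image2 _ Set.finite_univ, h2, ?_⟩, hn, h1, h3, ?_⟩
    · rintro _ ⟨T, hT, b, -, rfl⟩
      exact h4 T hT b
    · intro T hT b
      exact ⟨T, hT, b, trivial, rfl⟩
  choose f g hf hg hfg hc using key
  let N : ℕ → St := fun k => g^[k] ⟨⟨{Set.univ}, M⟩, Set.finite_singleton _, hM, by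
    rintro T rfl; exact hG⟩
  have hNs : ∀ k, N (k+1) = g (N k) := fun k => Function.iterate_succ_apply' _ _ _
  have hanti : Antitone (fun k => (N k).1.2) := antitone_nat_of_succ_le (fun k => by
    simp only [hNs]; exact hg _)
  let n : ℕ → ℕ := fun k => f (N k)
  have hmono : StrictMono n := by
    intro j k hjk
    have h1 : n k ∈ (N (j+1)).1.2 := hanti (Nat.succ_le_of_lt hjk) (hf (N k))
    rw [hNs] at h1
    exact hfg _ _ h1
  refine ⟨Set.range n, Set.infinite_range_of_injective hmono.injective, fun σ k => ?_⟩
  have hT : ∀ k, ∃ T ∈ (N k).1.1, ∀ x ∈ T, ∀ j < k, x ∈ C (σ (n j)) (n j) := by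
    intro k
    induction k with
    | zero => exact ⟨Set.univ, rfl, by simp⟩
    | succ k ih =>
      obtain ⟨T, h1, h2⟩ := ih
      refine ⟨T ∩ C (σ (n k)) (n k), by rw [hNs]; exact hc _ T h1 _, ?_⟩
      intro x hx j hj
      rcases Nat.lt_succ_iff_lt_or_eq.1 hj with h | rfl
      · exact h2 x hx.1 j h
      · exact hx.2
  obtain ⟨T, h1, h2⟩ := hT k
  obtain ⟨x, hx, -⟩ := (N k).2.2.2 T h1 _ subset_rfl (N k).2.2.1
  refine ⟨x, ?_⟩
  rintro _ ⟨j, rfl⟩ hj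
  exact h2 x hx j (lt_of_le_of_lt (hmono.id_le j) hj)

/-- Finite stabilisation over a finite collection of oscillation patterns. -/
theorem rgood_stab {S P : Type*} (C : P → Bool → ℕ → Set S) (s : Finset P)
    (h : ∀ M : Set ℕ, M.Infinite → ∃ p ∈ s, ∃ x, ∀ b, {n | n ∈ M ∧ x ∈ C p b n}.Infinite) :
    ∃ p ∈ s, ∃ M : Set ℕ, M.Infinite ∧ RGood (C p) Set.univ M := by
  by_contra hcon
  push Not at hcon
  have key : ∀ t : Finset P, t ⊆ s → ∃ M : Set ℕ, M.Infinite ∧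
      ∀ p ∈ t, ∀ x, ¬ ∀ b, {n | n ∈ M ∧ x ∈ C p b n}.Infinite := by
    classical
    intro t
    induction t using Finset.induction_on with
    | empty => exact fun _ => ⟨Set.univ, Set.infinite_univ, by simp⟩
    | insert p t hp ih =>
      intro hts
      obtain ⟨M, hM, h1⟩ := ih ((Finset.subset_insert _ _).trans hts)
      have h2 := hcon p (hts (Finset.mem_insert_self _ _)) M hM
      unfold RGood at h2
      push Not at h2
      obtain ⟨N, hNM, hN, h3⟩ := h2
      refine ⟨N, hN, ?_⟩
      intro q hq x hx
      rcases Finset.mem_insert.1 hq with rfl | hq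
      · obtain ⟨b, hb⟩ := h3 x trivial
        exact hx b hb
      · exact h1 q hq x (fun b => (hx b).mono (fun n hn => ⟨hNM hn.1, hn.2⟩))
  obtain ⟨M, hM, h1⟩ := key s subset_rfl
  obtain ⟨p, hp, x, hx⟩ := h M hM
  exact h1 p hp x hx

theorem rosenthal_est {X : Type*} [NormedAddCommGroup X] [NormedSpace ℂ X]
    (y : X) {r : ℕ} (v : Fin r → X) (a : Fin r → ℂ) (u : Fin r → ℝ) {ε : ℝ} (z w : ℂ)
    (hu : ∀ s : Fin r → ℝ, |∑ ρ, s ρ * u ρ| ≤ ‖∑ ρ, (s ρ : ℂ) * a ρ‖)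
    (ha : ∑ ρ, ‖a ρ‖ = 1) (hy : y = ∑ ρ, a ρ • v ρ) (hyε : ‖y‖ ≤ ε)
    (hind : ∀ σ : Fin r → Bool, ∃ x' : X →L[ℂ] ℂ, ‖x'‖ ≤ 1 ∧
      ∀ ρ, ‖x' (v ρ) - (if σ ρ then z else w)‖ ≤ ε / 10) :
    (∑ ρ, |u ρ|) * ‖z - w‖ ≤ 2 * ε + 2 * (ε / 10) := by
  obtain ⟨p, hp1, hp⟩ := hind (fun ρ => decide (0 ≤ u ρ))
  obtain ⟨q, hq1, hq⟩ := hind (fun ρ => !decide (0 ≤ u ρ))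
  let s : Fin r → ℝ := fun ρ => if 0 ≤ u ρ then 1 else -1
  have hs : ∑ ρ, |u ρ| = |∑ ρ, s ρ * u ρ| := by
    have : ∀ ρ, s ρ * u ρ = |u ρ| := by
      intro ρ
      by_cases h : 0 ≤ u ρ
      · simp [s, h, abs_of_nonneg h]
      · simp [s, h, abs_of_neg (not_le.1 h)]
    simp_rw [this]
    rw [abs_of_nonneg (Finset.sum_nonneg fun _ _ => abs_nonneg _)]
  have hterm : ∀ ρ, ‖a ρ * (p (v ρ) - q (v ρ) - (s ρ : ℂ) * (z - w))‖ ≤ ‖a ρ‖ * (2 * (ε / 10)) := by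
    intro ρ
    rw [norm_mul]
    refine mul_le_mul_of_nonneg_left ?_ (norm_nonneg _)
    have h1 := hp ρ
    have h2 := hq ρ
    by_cases h : 0 ≤ u ρ
    · simp only [h, decide_true, if_true, Bool.not_true, Bool.false_eq_true, if_false] at h1 h2
      have : p (v ρ) - q (v ρ) - (s ρ : ℂ) * (z - w) = (p (v ρ) - z) - (q (v ρ) - w) := by
        simp [s, h]; ring
      rw [this]
      linarith [norm_sub_le (p (v ρ) - z) (q (v ρ) - w)]
    · simp only [h, decide_false, if_true, Bool.not_false, Bool.false_eq_true, if_false] at h1 h2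
      have : p (v ρ) - q (v ρ) - (s ρ : ℂ) * (z - w) = (p (v ρ) - w) - (q (v ρ) - z) := by
        simp [s, h]; ring
      rw [this]
      linarith [norm_sub_le (p (v ρ) - w) (q (v ρ) - z)]
  have hsum : (∑ ρ, (s ρ : ℂ) * a ρ) * (z - w) =
      (p y - q y) - ∑ ρ, a ρ * (p (v ρ) - q (v ρ) - (s ρ : ℂ) * (z - w)) := by
    rw [hy, map_sum, map_sum, ← Finset.sum_sub_distrib, ← Finset.sum_sub_distrib, Finset.sum_mul]
    refine Finset.sum_congr rfl fun ρ _ => ?_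
    simp only [map_smul, smul_eq_mul]
    ring
  have herr : ‖∑ ρ, a ρ * (p (v ρ) - q (v ρ) - (s ρ : ℂ) * (z - w))‖ ≤ 2 * (ε / 10) := by
    refine (norm_sum_le_of_le _ (fun ρ _ => hterm ρ)).trans ?_
    rw [← Finset.sum_mul, ha, one_mul]
  have hpy : ‖p y‖ ≤ ε := ((p.le_of_opNorm_le hp1 y).trans (by rw [one_mul])).trans hyε
  have hqy : ‖q y‖ ≤ ε := ((q.le_of_opNorm_le hq1 y).trans (by rw [one_mul])).trans hyε
  calc (∑ ρ, |u ρ|) * ‖z - w‖ ≤ ‖∑ ρ, (s ρ : ℂ) * a ρ‖ * ‖z - w‖ := by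
        rw [hs]; exact mul_le_mul_of_nonneg_right (hu s) (norm_nonneg _)
    _ = ‖(∑ ρ, (s ρ : ℂ) * a ρ) * (z - w)‖ := (norm_mul _ _).symm
    _ ≤ 2 * ε + 2 * (ε / 10) := by
        rw [hsum]
        linarith [norm_sub_le (p y - q y) (∑ ρ, a ρ * (p (v ρ) - q (v ρ) - (s ρ : ℂ) * (z - w))),
          norm_sub_le (p y) (q y)]

/-- **Quantitative version of Rosenthal's `ℓ¹`-theorem, complex case.**
If a bounded sequence in a complex Banach space admits `ε`-`ℓ¹`-blocks then it
has a subsequence such that for every normalized functional `x'` the set of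
accumulation points of `(x'(x_{n_k}))ₖ` has diameter at most `8ε/√2`. -/
theorem quantitative_rosenthal_complex {X : Type*} [NormedAddCommGroup X]
    [NormedSpace ℂ X] [CompleteSpace X]
    (x : ℕ → X) (hb : ∃ C : ℝ, ∀ n, ‖x n‖ ≤ C) {ε : ℝ} (hε : 0 < ε)
    (h : AdmitsL1Blocks ℂ x ε) :
    ∃ n : ℕ → ℕ, StrictMono n ∧
      ∀ x' : X →L[ℂ] ℂ, ‖x'‖ = 1 →
        Metric.diam {z : ℂ | MapClusterPt z atTop (fun k => x' (x (n k)))} ≤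
          8 * ε / Real.sqrt 2 := by
  classical
  by_contra hcon
  push Not at hcon
  obtain ⟨K, hK⟩ := hb
  have hδ : 5.6 * ε ≤ 8 * ε / Real.sqrt 2 := by
    rw [le_div_iff₀ (by positivity)]
    have h2 : Real.sqrt 2 ≤ 1.42 := by
      rw [Real.sqrt_le_left (by norm_num)]; norm_num
    nlinarith
  have hτ : 0 < ε / 20 := by positivity
  obtain ⟨F, -, hFfin, hFcov⟩ := Metric.totallyBounded_iff.1
    (isCompact_closedBall (0 : ℂ) (K + ε)).totallyBounded (ε / 20) hτ |>.imp
      (fun t ht => (⟨trivial, ht.1, ht.2⟩ : True ∧ _ ∧ _))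
  let C : ℂ × ℂ → Bool → ℕ → Set (X →L[ℂ] ℂ) := fun p b n =>
    {x' | ‖x'‖ ≤ 1 ∧ ‖x' (x n) - (if b then p.1 else p.2)‖ ≤ ε / 10}
  let s : Finset (ℂ × ℂ) := (hFfin.toFinset ×ˢ hFfin.toFinset).filter
    (fun p => 5 * ε ≤ ‖p.1 - p.2‖)
  obtain ⟨p, hp, M, hM, hG⟩ := rgood_stab C s (by
    intro M hM
    obtain ⟨x', hx', hd⟩ := hcon (Nat.nth (· ∈ M)) (Nat.nth_strictMono hM)
    have hex : ∃ z w : ℂ, MapClusterPt z atTop (fun k => x' (x (Nat.nth (· ∈ M) k))) ∧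
        MapClusterPt w atTop (fun k => x' (x (Nat.nth (· ∈ M) k))) ∧ 5.6 * ε < dist z w := by
      by_contra hno
      push Not at hno
      refine absurd (Metric.diam_le_of_forall_dist_le (by positivity) ?_) (not_le.2 (hδ.trans_lt hd))
      intro z hz w hw
      exact hno z w hz hw
    obtain ⟨z, w, hz, hw, hzw⟩ := hex
    have happ : ∀ z, MapClusterPt z atTop (fun k => x' (x (Nat.nth (· ∈ M) k))) →
        ∃ z0 ∈ F, ‖z - z0‖ ≤ ε / 20 ∧ {n | n ∈ M ∧ ‖x' (x n) - z0‖ ≤ ε / 10}.Infinite := by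
      intro z hz
      have hfr := hz.frequently (Metric.ball_mem_nhds z hτ)
      have hzK : z ∈ Metric.closedBall (0 : ℂ) (K + ε) := by
        obtain ⟨k, hk⟩ := hfr.exists
        have h1 : ‖x' (x (Nat.nth (· ∈ M) k))‖ ≤ K :=
          (x'.le_of_opNorm_le hx'.le _).trans (by rw [one_mul]; exact hK _)
        have h2 : ‖x' (x (Nat.nth (· ∈ M) k)) - z‖ < ε / 20 := by
          simpa [dist_eq_norm] using hk
        rw [mem_closedBall_zero_iff]
        have h3 := norm_sub_norm_le z (x' (x (Nat.nth (· ∈ M) k)))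
        rw [norm_sub_rev] at h3
        linarith
      obtain ⟨z0, hz0, hzz0⟩ := Set.mem_iUnion₂.1 (hFcov hzK)
      have hzz : ‖z - z0‖ < ε / 20 := by simpa [dist_eq_norm] using hzz0
      refine ⟨z0, hz0, hzz.le, ?_⟩
      have hinf := (Nat.frequently_atTop_iff_infinite.1 hfr).image
        (Nat.nth_injective (p := (· ∈ M)) hM).injOn
      refine hinf.mono ?_
      rintro _ ⟨k, hk, rfl⟩
      refine ⟨Nat.nth_mem_of_infinite (p := (· ∈ M)) hM k, ?_⟩
      have h2 : ‖x' (x (Nat.nth (· ∈ M) k)) - z‖ < ε / 20 := by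
        simpa [dist_eq_norm] using hk
      have h3 := norm_sub_le_norm_sub_add_norm_sub (x' (x (Nat.nth (· ∈ M) k))) z z0
      linarith
    obtain ⟨z0, hz0, hzz, hzi⟩ := happ z hz
    obtain ⟨w0, hw0, hww, hwi⟩ := happ w hw
    refine ⟨(z0, w0), ?_, x', ?_⟩
    · simp only [s, Finset.mem_filter, Finset.mem_product, Set.Finite.mem_toFinset]
      refine ⟨⟨hz0, hw0⟩, ?_⟩
      rw [dist_eq_norm] at hzw
      have h1 := norm_sub_le_norm_sub_add_norm_sub z z0 w
      have h2 := norm_sub_le_norm_sub_add_norm_sub z0 w0 w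
      rw [norm_sub_rev w0 w] at h2
      linarith
    · rintro (_ | _)
      · simpa [C, hx'.le] using hwi
      · simpa [C, hx'.le] using hzi)
  have hp5 : 5 * ε ≤ ‖p.1 - p.2‖ := (Finset.mem_filter.1 hp).2
  obtain ⟨L, hL, hind⟩ := rgood_indep (C p) M hM hG
  obtain ⟨r, i, a, hi, hiL, ha, hn⟩ := h L hL
  have hind' : ∀ σ : Fin r → Bool, ∃ x' : X →L[ℂ] ℂ, ‖x'‖ ≤ 1 ∧
      ∀ ρ, ‖x' (x (i ρ)) - (if σ ρ then p.1 else p.2)‖ ≤ ε / 10 := by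
    intro σ
    have hr : r ≠ 0 := by
      rintro rfl
      simp at ha
    obtain ⟨x', hx'⟩ := hind (Function.extend i σ (fun _ => true)) (∑ ρ, i ρ + 1)
    have hx2 : ∀ ρ, x' ∈ C p (σ ρ) (i ρ) := by
      intro ρ
      have := hx' (i ρ) (hiL ρ) (Nat.lt_succ_of_le
        (Finset.single_le_sum (f := i) (fun _ _ => Nat.zero_le _) (Finset.mem_univ ρ)))
      rwa [hi.injective.extend_apply] at this
    exact ⟨x', (hx2 ⟨0, Nat.pos_of_ne_zero hr⟩).1, fun ρ => (hx2 ρ).2⟩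
  have hre := rosenthal_est _ (fun ρ => x (i ρ)) a (fun ρ => (a ρ).re) p.1 p.2
    (fun s => by
      refine le_trans (le_of_eq ?_) (Complex.abs_re_le_norm _)
      simp) ha rfl hn hind'
  have him := rosenthal_est _ (fun ρ => x (i ρ)) a (fun ρ => (a ρ).im) p.1 p.2
    (fun s => by
      refine le_trans (le_of_eq ?_) (Complex.abs_im_le_norm _)
      simp) ha rfl hn hind'
  have hone : 1 ≤ (∑ ρ, |(a ρ).re|) + ∑ ρ, |(a ρ).im| := by
    rw [← ha, ← Finset.sum_add_distrib]
    exact Finset.sum_le_sum fun ρ _ => Complex.norm_le_abs_re_add_abs_im _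
  have hfin : 1 * ‖p.1 - p.2‖ ≤ ((∑ ρ, |(a ρ).re|) + ∑ ρ, |(a ρ).im|) * ‖p.1 - p.2‖ :=
    mul_le_mul_of_nonneg_right hone (norm_nonneg _)
  linarith
end

section
/- Let $X$ be a real or complex Banach space and let $(x_n)$ be a bounded sequence in $X$ that admits $\varepsilon$-$\ell^1$-blocks for every $\varepsilon > 0$. Then $(x_n)$ has a weakly Cauchy subsequence, i.e. a subsequence $(x_{n_k})$ such that $(x'(x_{n_k}))_k$ converges for every $x' \in X'$. -/
open Filter

/-- Dependent choice along shrinking subsets of `ℕ`. -/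
theorem fusion_seq {σ : Type*} (m : σ → Set ℕ) (P : σ → Prop) (Q : σ → ℕ → σ → Prop)
    (hstep : ∀ s, P s → ∃ n ∈ m s, ∃ s', P s' ∧ (∀ j ∈ m s', j ∈ m s ∧ n < j) ∧ Q s n s')
    (s0 : σ) (h0 : P s0) :
    ∃ (n : ℕ → ℕ) (s : ℕ → σ), s 0 = s0 ∧ StrictMono n ∧ (∀ k, P (s k)) ∧
      (∀ k j, k ≤ j → n j ∈ m (s k)) ∧ ∀ k, Q (s k) (n k) (s (k + 1)) := by
  choose! N hN f hP hsub hQ using hstep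
  let s : ℕ → σ := fun k => f^[k] s0
  have hs : ∀ k, s (k + 1) = f (s k) := fun k => Function.iterate_succ_apply' f k s0
  have hPs : ∀ k, P (s k) := by
    intro k
    induction k with
    | zero => exact h0
    | succ k ih => rw [hs]; exact hP _ ih
  have hanti : ∀ k j, k ≤ j → m (s j) ⊆ m (s k) := by
    intro k j hkj
    induction j, hkj using Nat.le_induction with
    | base => exact subset_rfl
    | succ j _ ih =>
      intro y hy
      rw [hs] at hy
      exact ih (hsub _ (hPs j) y hy).1
  refine ⟨fun k => N (s k), s, rfl, ?_, hPs, ?_, ?_⟩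
  · apply strictMono_nat_of_lt_succ
    intro k
    have := hN _ (hPs (k + 1))
    rw [hs k] at this ⊢
    exact (hsub _ (hPs k) _ this).2
  · intro k j hkj
    exact hanti k j hkj (hN _ (hPs j))
  · intro k
    rw [hs]
    exact hQ _ (hPs k)

/-- `t` hits both `A true n` and `A false n` for infinitely many `n ∈ N`. -/
def Both {T : Type*} (A : Bool → ℕ → Set T) (t : T) (N : Set ℕ) : Prop :=
  ∀ b, {n ∈ N | t ∈ A b n}.Infinite

/-- Every infinite subset of `M` has a point of `S` hitting both sides. -/
def Rich {T : Type*} (A : Bool → ℕ → Set T) (S : Set T) (M : Set ℕ) : Prop :=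
  ∀ N ⊆ M, N.Infinite → ∃ t ∈ S, Both A t N

theorem Rich.mono {T : Type*} {A : Bool → ℕ → Set T} {S : Set T} {M M' : Set ℕ}
    (h : Rich A S M) (hM : M' ⊆ M) : Rich A S M' :=
  fun N hN hi => h N (hN.trans hM) hi

theorem rich_step {T : Type*} (A : Bool → ℕ → Set T) (F : Set (Set T)) (hF : F.Finite)
    (M : Set ℕ) (hM : M.Infinite) (hR : ∀ S ∈ F, Rich A S M) :
    ∃ n ∈ M, ∃ M' : Set ℕ, M'.Infinite ∧ (∀ j ∈ M', j ∈ M ∧ n < j) ∧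
      ∀ S ∈ F, ∀ b, Rich A (S ∩ A b n) M' := by
  by_contra hcon
  push Not at hcon
  have hstep : ∀ s : Set ℕ, (s.Infinite ∧ s ⊆ M) → ∃ n ∈ s, ∃ s' : Set ℕ,
      (s'.Infinite ∧ s' ⊆ M) ∧ (∀ j ∈ s', j ∈ s ∧ n < j) ∧
      ∃ p ∈ F ×ˢ (Set.univ : Set Bool), ∀ t ∈ p.1 ∩ A p.2 n, ¬ Both A t s' := by
    rintro s ⟨hs, hsM⟩
    obtain ⟨n, hn⟩ := hs.nonempty
    have hinf : (s \ Set.Iic n).Infinite := hs.sdiff (Set.finite_Iic n)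
    obtain ⟨S, hS, b, hb⟩ := hcon n (hsM hn) (s \ Set.Iic n) hinf
      (fun j hj => ⟨hsM hj.1, by simpa using hj.2⟩)
    unfold Rich at hb
    push Not at hb
    obtain ⟨N, hN, hNi, hNt⟩ := hb
    refine ⟨n, hn, N, ⟨hNi, fun j hj => hsM (hN hj).1⟩,
      fun j hj => ⟨(hN hj).1, by simpa using (hN hj).2⟩, (S, b), ⟨hS, trivial⟩, hNt⟩
  obtain ⟨n, s, hs0, hn, hP, hmem, hQ⟩ := fusion_seq (fun s : Set ℕ => s) _ _ hstep M
    ⟨hM, subset_rfl⟩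
  choose p hpF hp using hQ
  have hfin : (F ×ˢ (Set.univ : Set Bool)).Finite := hF.prod Set.finite_univ
  have : ∃ q ∈ F ×ˢ (Set.univ : Set Bool), {k | p k = q}.Infinite := by
    by_contra hc
    push Not at hc
    have h1 := hfin.biUnion hc
    refine Set.infinite_univ (h1.subset ?_)
    intro k _
    simp only [Set.mem_iUnion]
    exact ⟨p k, hpF k, rfl⟩
  obtain ⟨q, hq, hqi⟩ := this
  have hNi : (n '' {k | p k = q}).Infinite := hqi.image hn.injective.injOn
  obtain ⟨t, htS, ht⟩ := hR q.1 hq.1 (n '' {k | p k = q})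
    (by rintro _ ⟨k, _, rfl⟩; rw [← hs0]; exact hmem 0 k (Nat.zero_le _)) hNi
  obtain ⟨_, ⟨k, hk, rfl⟩, hkt⟩ := (ht q.2).nonempty
  have hk' : p k = q := hk
  refine hp k t (by rw [hk']; exact ⟨htS, hkt⟩) ?_
  intro b
  refine ((ht b).sdiff (Set.finite_Iic (n k))).mono ?_
  rintro _ ⟨⟨⟨j, hj, rfl⟩, hjt⟩, hlt⟩
  refine ⟨hmem (k + 1) j ?_, hjt⟩
  have : n k < n j := by simpa using hlt
  exact hn.lt_iff_lt.1 this

theorem exists_independent {T : Type*} (A : Bool → ℕ → Set T) (S : Set T)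
    (M : Set ℕ) (hM : M.Infinite) (hR : Rich A S M) :
    ∃ n : ℕ → ℕ, StrictMono n ∧ (∀ k, n k ∈ M) ∧
      ∀ (τ : ℕ → Bool) (k : ℕ), ∃ t ∈ S, ∀ j < k, t ∈ A (τ j) (n j) := by
  have hstep : ∀ s : Set ℕ × Set (Set T),
      (s.1.Infinite ∧ s.2.Finite ∧ ∀ S ∈ s.2, Rich A S s.1) → ∃ n ∈ s.1,
      ∃ s' : Set ℕ × Set (Set T), (s'.1.Infinite ∧ s'.2.Finite ∧ ∀ S ∈ s'.2, Rich A S s'.1) ∧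
      (∀ j ∈ s'.1, j ∈ s.1 ∧ n < j) ∧ ∀ S ∈ s.2, ∀ b, S ∩ A b n ∈ s'.2 := by
    rintro ⟨M, F⟩ ⟨hM, hF, hR⟩
    obtain ⟨n, hn, M', hM', hsub, hr⟩ := rich_step A F hF M hM hR
    refine ⟨n, hn, (M', Set.image2 (fun S b => S ∩ A b n) F Set.univ),
      ⟨hM', hF.image2 _ Set.finite_univ, ?_⟩, hsub, ?_⟩
    · rintro _ ⟨S, hS, b, _, rfl⟩
      exact hr S hS b
    · intro S hS b
      exact ⟨S, hS, b, trivial, rfl⟩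
  obtain ⟨n, s, hs0, hn, hP, hmem, hQ⟩ := fusion_seq
    (fun s : Set ℕ × Set (Set T) => s.1) _ _ hstep (M, {S})
    ⟨hM, Set.finite_singleton _, by rintro _ rfl; exact hR⟩
  refine ⟨n, hn, fun k => ?_, fun τ k => ?_⟩
  · have := hmem 0 k (Nat.zero_le _)
    rwa [hs0] at this
  · have key : ∀ k, {t ∈ S | ∀ j < k, t ∈ A (τ j) (n j)} ∈ (s k).2 := by
      intro k
      induction k with
      | zero => rw [hs0]; simp
      | succ k ih =>
        convert hQ k _ ih (τ k) using 1
        ext t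
        simp only [Set.mem_ofPred_eq, Set.mem_inter_iff, Nat.lt_succ_iff_lt_or_eq]
        constructor
        · rintro ⟨h1, h2⟩
          exact ⟨⟨h1, fun j hj => h2 j (Or.inl hj)⟩, h2 k (Or.inr rfl)⟩
        · rintro ⟨⟨h1, h2⟩, h3⟩
          refine ⟨h1, ?_⟩
          rintro j (hj | rfl)
          · exact h2 j hj
          · exact h3
    obtain ⟨t, ht, _⟩ := (hP k).2.2 _ (key k) _ subset_rfl (hP k).1
    exact ⟨t, ht.1, ht.2⟩

theorem finite_stabilize {ι : Type*} (Good : ι → Set ℕ → Prop)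
    (hmono : ∀ p N N', N ⊆ N' → Good p N → Good p N') (F : Set ι) (hF : F.Finite) :
    ∀ M : Set ℕ, M.Infinite → (∀ N ⊆ M, N.Infinite → ∃ p ∈ F, Good p N) →
    ∃ p ∈ F, ∃ N0 ⊆ M, N0.Infinite ∧ ∀ N ⊆ N0, N.Infinite → Good p N := by
  induction F, hF using Set.Finite.induction_on with
  | empty =>
    intro M hM h
    obtain ⟨p, hp, _⟩ := h M subset_rfl hM
    exact absurd hp (Set.notMem_empty p)
  | @insert a F ha hF ih =>
    intro M hM h
    by_cases hc : ∀ N ⊆ M, N.Infinite → Good a N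
    · exact ⟨a, Set.mem_insert _ _, M, subset_rfl, hM, hc⟩
    · push Not at hc
      obtain ⟨N1, hN1, hN1i, hbad⟩ := hc
      obtain ⟨p, hp, N0, hN0, hi, hg⟩ := ih N1 hN1i (by
        intro N hN hNi
        obtain ⟨p, hp, hg⟩ := h N (hN.trans hN1) hNi
        rcases hp with rfl | hp
        · exact absurd (hmono _ _ _ hN hg) hbad
        · exact ⟨p, hp, hg⟩)
      exact ⟨p, Set.mem_insert_of_mem _ hp, N0, hN0.trans hN1, hi, hg⟩

theorem exists_signs {𝕜 : Type*} [RCLike 𝕜] {r : ℕ} (a : Fin r → 𝕜) (ha : ∑ ρ, ‖a ρ‖ = 1) :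
    ∃ σ : Fin r → Bool, 1 / 2 ≤ ‖∑ ρ, a ρ * (if σ ρ then 1 else -1)‖ := by
  have h1 : (1 : ℝ) ≤ ∑ ρ, |RCLike.re (a ρ)| + ∑ ρ, |RCLike.im (a ρ)| := by
    rw [← ha, ← Finset.sum_add_distrib]
    refine Finset.sum_le_sum fun ρ _ => ?_
    have h0 := RCLike.norm_sq_eq_def (z := a ρ)
    have h2 := abs_nonneg (RCLike.re (a ρ))
    have h3 := abs_nonneg (RCLike.im (a ρ))
    have h4 := abs_mul_abs_self (RCLike.re (a ρ))
    have h5 := abs_mul_abs_self (RCLike.im (a ρ))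
    refine abs_le_of_sq_le_sq' ?_ (by positivity) |>.2
    nlinarith [mul_nonneg h2 h3]
  by_cases hre : 1 / 2 ≤ ∑ ρ, |RCLike.re (a ρ)|
  · refine ⟨fun ρ => decide (0 ≤ RCLike.re (a ρ)), hre.trans ?_⟩
    refine le_trans (le_of_eq ?_) (RCLike.re_le_norm _)
    rw [map_sum]
    refine Finset.sum_congr rfl fun ρ _ => ?_
    by_cases h : 0 ≤ RCLike.re (a ρ)
    · simp [h, abs_of_nonneg h]
    · simp [h, abs_of_neg (not_le.1 h)]
  · refine ⟨fun ρ => decide (0 ≤ RCLike.im (a ρ)), ?_⟩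
    have h2 : 1 / 2 ≤ ∑ ρ, |RCLike.im (a ρ)| := by linarith
    refine h2.trans (le_trans (le_of_eq ?_) (RCLike.im_le_norm _))
    rw [map_sum]
    refine Finset.sum_congr rfl fun ρ _ => ?_
    by_cases h : 0 ≤ RCLike.im (a ρ)
    · simp [h, abs_of_nonneg h]
    · simp [h, abs_of_neg (not_le.1 h)]

section
variable {𝕜 : Type*} [RCLike 𝕜] {X : Type*} [NormedAddCommGroup X] [NormedSpace 𝕜 X]

/-- The sets of functionals whose value at `x n` is near `w` (true) or `z` (false). -/
def nearSet (x : ℕ → X) (δ : ℝ) (p : 𝕜 × 𝕜) (b : Bool) (n : ℕ) : Set (X →L[𝕜] 𝕜) :=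
  {f | ‖f (x n) - (if b then p.1 else p.2)‖ ≤ δ}

theorem not_rich (x : ℕ → X) (h : ∀ ε : ℝ, 0 < ε → AdmitsL1Blocks 𝕜 x ε)
    (R η : ℝ) (hR : 0 ≤ R) (hη : 0 < η) (p : 𝕜 × 𝕜) (hp : 8 * η ≤ ‖p.1 - p.2‖)
    (M : Set ℕ) (hM : M.Infinite) :
    ¬ Rich (nearSet x η p) {f : X →L[𝕜] 𝕜 | ‖f‖ ≤ R} M := by
  intro hrich
  obtain ⟨n, hn, hnM, hind⟩ := exists_independent _ _ M hM hrich
  have hε : 0 < η / (2 * (R + 1)) := by positivity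
  obtain ⟨r, i, a, hi, him, ha, hle⟩ := h _ hε (Set.range n)
    (Set.infinite_range_of_injective hn.injective)
  choose j hj using him
  have hjinj : Function.Injective j := by
    intro ρ ρ' hρ
    apply hi.injective
    rw [← hj, ← hj, hρ]
  obtain ⟨σ, hσ⟩ := exists_signs a ha
  let τ : ℕ → Bool := Function.extend j σ (fun _ => true)
  have hτ : ∀ ρ, τ (j ρ) = σ ρ := fun ρ => hjinj.extend_apply _ _ _
  obtain ⟨k, hk⟩ : ∃ k, ∀ ρ, j ρ < k :=
    ⟨Finset.univ.sup j + 1, fun ρ => Nat.lt_succ_of_le (Finset.le_sup (Finset.mem_univ ρ))⟩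
  obtain ⟨f, hfR, hf⟩ := hind τ k
  obtain ⟨g, hgR, hg⟩ := hind (fun l => !(τ l)) k
  have hfR' : ‖f‖ ≤ R := hfR
  have hgR' : ‖g‖ ≤ R := hgR
  have hdiff : ∀ ρ, ‖(f - g) (x (i ρ)) - (if σ ρ then 1 else -1) * (p.1 - p.2)‖ ≤ 2 * η := by
    intro ρ
    have h1 : ‖f (x (n (j ρ))) - (if τ (j ρ) then p.1 else p.2)‖ ≤ η := hf (j ρ) (hk ρ)
    have h2 : ‖g (x (n (j ρ))) - (if !(τ (j ρ)) then p.1 else p.2)‖ ≤ η := hg (j ρ) (hk ρ)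
    rw [hτ, hj] at h1 h2
    have h3 := (norm_sub_le _ _).trans (add_le_add h1 h2)
    rw [two_mul]
    refine le_trans (le_of_eq ?_) h3
    congr 1
    cases σ ρ <;> simp <;> ring
  set v := ∑ ρ, a ρ • x (i ρ) with hv
  have hfg : ‖(f - g) v‖ ≤ η := by
    calc ‖(f - g) v‖ ≤ ‖f - g‖ * ‖v‖ := (f - g).le_opNorm v
      _ ≤ (2 * R) * (η / (2 * (R + 1))) := by
          gcongr
          exact (norm_sub_le _ _).trans (by linarith)
      _ ≤ (2 * (R + 1)) * (η / (2 * (R + 1))) := by gcongr; linarith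
      _ = η := by field_simp
  have hsum : ‖(f - g) v - (∑ ρ, a ρ * (if σ ρ then 1 else -1)) * (p.1 - p.2)‖ ≤ 2 * η := by
    have : (f - g) v - (∑ ρ, a ρ * (if σ ρ then 1 else -1)) * (p.1 - p.2)
        = ∑ ρ, a ρ * ((f - g) (x (i ρ)) - (if σ ρ then 1 else -1) * (p.1 - p.2)) := by
      rw [hv, map_sum, Finset.sum_mul, ← Finset.sum_sub_distrib]
      refine Finset.sum_congr rfl fun ρ _ => ?_
      rw [map_smul, smul_eq_mul]
      ring
    rw [this]
    calc _ ≤ ∑ ρ, ‖a ρ * ((f - g) (x (i ρ)) - (if σ ρ then 1 else -1) * (p.1 - p.2))‖ :=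
          norm_sum_le _ _
      _ ≤ ∑ ρ, ‖a ρ‖ * (2 * η) := by
          refine Finset.sum_le_sum fun ρ _ => ?_
          rw [norm_mul]
          exact mul_le_mul_of_nonneg_left (hdiff ρ) (norm_nonneg _)
      _ = 2 * η := by rw [← Finset.sum_mul, ha, one_mul]
  have h4 : ‖(∑ ρ, a ρ * (if σ ρ then 1 else -1)) * (p.1 - p.2)‖ ≤ 3 * η := by
    have := norm_sub_norm_le ((∑ ρ, a ρ * (if σ ρ then 1 else -1)) * (p.1 - p.2)) ((f - g) v)
    rw [norm_sub_rev] at this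
    linarith
  rw [norm_mul] at h4
  have h5 : 1 / 2 * (8 * η) ≤ ‖∑ ρ, a ρ * (if σ ρ then 1 else -1)‖ * ‖p.1 - p.2‖ := by
    gcongr
  linarith

theorem small_osc (x : ℕ → X) (hb : ∃ C : ℝ, ∀ n, ‖x n‖ ≤ C)
    (h : ∀ ε : ℝ, 0 < ε → AdmitsL1Blocks 𝕜 x ε)
    (R η : ℝ) (hR : 0 ≤ R) (hη : 0 < η) (M : Set ℕ) (hM : M.Infinite) :
    ∃ N ⊆ M, N.Infinite ∧ ∀ f : X →L[𝕜] 𝕜, ‖f‖ ≤ R →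
      ∃ k0, ∀ m ∈ N, ∀ n ∈ N, k0 ≤ m → k0 ≤ n → ‖f (x m) - f (x n)‖ ≤ 10 * η := by
  by_contra hcon
  push Not at hcon
  obtain ⟨C, hC⟩ := hb
  obtain ⟨F, _, hFfin, hF⟩ := (isCompact_closedBall (0 : 𝕜) (R * C)).finite_cover_balls hη
  have hcov : ∀ f : X →L[𝕜] 𝕜, ‖f‖ ≤ R → ∀ n, ∃ w ∈ F, ‖f (x n) - w‖ ≤ η := by
    intro f hf n
    have : f (x n) ∈ Metric.closedBall (0 : 𝕜) (R * C) := by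
      rw [mem_closedBall_zero_iff]
      exact (f.le_opNorm _).trans (mul_le_mul hf (hC n) (norm_nonneg _) hR)
    have := hF this
    simp only [Set.mem_iUnion] at this
    obtain ⟨w, hw, hb⟩ := this
    exact ⟨w, hw, by rw [← dist_eq_norm]; exact (Metric.mem_ball.1 hb).le⟩
  let G : Set (𝕜 × 𝕜) := {p ∈ F ×ˢ F | 8 * η ≤ ‖p.1 - p.2‖}
  have hG : G.Finite := (hFfin.prod hFfin).subset fun p hp => hp.1
  obtain ⟨p, hp, N0, _, hN0, hgood⟩ := finite_stabilize
    (fun p N => ∃ f ∈ {f : X →L[𝕜] 𝕜 | ‖f‖ ≤ R}, Both (nearSet x η p) f N)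
    (by
      rintro p N N' hNN ⟨f, hf, hB⟩
      exact ⟨f, hf, fun b => (hB b).mono fun n hn => ⟨hNN hn.1, hn.2⟩⟩) G hG M hM
    (by
      intro N hN hNi
      obtain ⟨f, hf, hosc⟩ := hcon N hN hNi
      choose m hm n hn hkm hkn hbig using hosc
      choose w hwF hw using hcov f hf
      have hpG : ∀ k, (w (m k), w (n k)) ∈ G := by
        intro k
        refine ⟨⟨hwF _, hwF _⟩, ?_⟩
        have h1 := hw (m k)
        have h2 := hw (n k)
        have h3 : ‖f (x (m k)) - f (x (n k))‖ ≤
            ‖f (x (m k)) - w (m k)‖ + ‖w (m k) - w (n k)‖ + ‖f (x (n k)) - w (n k)‖ := by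
          have e : f (x (m k)) - f (x (n k)) = (f (x (m k)) - w (m k)) + (w (m k) - w (n k))
              - (f (x (n k)) - w (n k)) := by ring
          rw [e]
          exact (norm_sub_le _ _).trans (by gcongr; exact norm_add_le _ _)
        have h4 := hbig k
        show 8 * η ≤ ‖w (m k) - w (n k)‖
        linarith
      have : ∃ q ∈ G, {k | (w (m k), w (n k)) = q}.Infinite := by
        by_contra hc
        push Not at hc
        refine Set.infinite_univ ((hG.biUnion hc).subset ?_)
        intro k _
        simp only [Set.mem_iUnion]
        exact ⟨_, hpG k, rfl⟩
      obtain ⟨q, hq, hqi⟩ := this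
      refine ⟨q, hq, f, hf, ?_⟩
      intro b
      rw [Set.infinite_iff_exists_gt]
      intro K
      obtain ⟨k, hk, hKk⟩ := hqi.exists_gt K
      have hk' : (w (m k), w (n k)) = q := hk
      cases b
      · refine ⟨n k, ⟨hn k, ?_⟩, lt_of_lt_of_le hKk (hkn k)⟩
        show ‖f (x (n k)) - q.2‖ ≤ η
        rw [← hk']
        exact hw _
      · refine ⟨m k, ⟨hm k, ?_⟩, lt_of_lt_of_le hKk (hkm k)⟩
        show ‖f (x (m k)) - q.1‖ ≤ η
        rw [← hk']
        exact hw _)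
  exact not_rich x h R η hR hη p hp.2 N0 hN0 hgood

end

/-- If a bounded sequence in a (real or complex) Banach space admits
`ε`-`ℓ¹`-blocks for every `ε > 0`, then it has a weakly Cauchy subsequence. -/
theorem weakly_cauchy_subsequence_of_blocks {𝕜 : Type*} [RCLike 𝕜] {X : Type*}
    [NormedAddCommGroup X] [NormedSpace 𝕜 X] [CompleteSpace X]
    (x : ℕ → X) (hb : ∃ C : ℝ, ∀ n, ‖x n‖ ≤ C)
    (h : ∀ ε : ℝ, 0 < ε → AdmitsL1Blocks 𝕜 x ε) :
    ∃ n : ℕ → ℕ, StrictMono n ∧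
      ∀ x' : X →L[𝕜] 𝕜, ∃ l : 𝕜,
        Tendsto (fun k => x' (x (n k))) atTop (nhds l) := by
  have hstep : ∀ s : Set ℕ × ℕ, s.1.Infinite → ∃ n ∈ s.1, ∃ s' : Set ℕ × ℕ, s'.1.Infinite ∧
      (∀ j ∈ s'.1, j ∈ s.1 ∧ n < j) ∧ (s'.2 = s.2 + 1 ∧
        ∀ f : X →L[𝕜] 𝕜, ‖f‖ ≤ (s.2 : ℝ) → ∃ k0, ∀ m ∈ s'.1, ∀ n ∈ s'.1, k0 ≤ m → k0 ≤ n →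
          ‖f (x m) - f (x n)‖ ≤ 10 * (1 / ((s.2 : ℝ) + 1))) := by
    rintro ⟨M, q⟩ hM
    obtain ⟨n, hn⟩ := hM.nonempty
    obtain ⟨N, hN, hNi, hosc⟩ := small_osc x hb h (q : ℝ) (1 / ((q : ℝ) + 1)) (by positivity)
      (by positivity) (M \ Set.Iic n) (Set.Infinite.sdiff hM (Set.finite_Iic n))
    exact ⟨n, hn, (N, q + 1), hNi, fun j hj => ⟨(hN hj).1, by simpa using (hN hj).2⟩, rfl, hosc⟩
  obtain ⟨n, s, hs0, hn, _, hmem, hQ⟩ := fusion_seq (fun s : Set ℕ × ℕ => s.1) _ _ hstep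
    (Set.univ, 0) Set.infinite_univ
  have hs2 : ∀ k, (s k).2 = k := by
    intro k
    induction k with
    | zero => rw [hs0]
    | succ k ih => rw [(hQ k).1, ih]
  refine ⟨n, hn, fun f => ?_⟩
  apply cauchySeq_tendsto_of_complete
  rw [Metric.cauchySeq_iff]
  intro ε hε
  obtain ⟨q1, hq1⟩ := exists_nat_ge ‖f‖
  obtain ⟨q2, hq2⟩ := exists_nat_gt (10 / ε)
  set q := max q1 q2 with hq
  have hfq : ‖f‖ ≤ (q : ℝ) := hq1.trans (by exact_mod_cast le_max_left _ _)
  have hqε : 10 / ε < (q : ℝ) + 1 := by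
    have : (q2 : ℝ) ≤ q := by exact_mod_cast le_max_right _ _
    linarith
  have hlt : 10 * (1 / ((q : ℝ) + 1)) < ε := by
    rw [mul_one_div, div_lt_iff₀ (by positivity)]
    rw [div_lt_iff₀ hε] at hqε
    linarith
  obtain ⟨k0, hk0⟩ := (hQ q).2 f (by rw [hs2]; exact hfq)
  rw [hs2] at hk0
  refine ⟨max (q + 1) k0, fun i hi j hj => ?_⟩
  rw [dist_eq_norm]
  refine lt_of_le_of_lt (hk0 _ (hmem _ _ (le_trans (le_max_left _ _) hi)) _
    (hmem _ _ (le_trans (le_max_left _ _) hj)) ?_ ?_) hlt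
  · exact (le_trans (le_max_right _ _) hi).trans (hn.id_le _)
  · exact (le_trans (le_max_right _ _) hj).trans (hn.id_le _)
end

section
/- Let $(x_n)$ be a bounded sequence in a Banach space $X$ over $\mathbb{K} = \mathbb{R}$ or $\mathbb{C}$. Either there is a subsequence $(x_{n_k})$ equivalent to the unit vector basis of $\ell^1$ (i.e. there exists $B > 0$ with $\|\sum_{k=1}^r t_k x_{n_k}\| \geq B \sum_{k=1}^r |t_k|$ for all $r$ and all scalars $t_1,\ldots,t_r$), or there is a subsequence $(x_{n_k})$ which is weakly Cauchy, i.e. $(x'(x_{n_k}))_k$ converges for every $x' \in X'$. -/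
open Filter

namespace RosenthalAux

/-- Diagonalisation for properties stable under almost-inclusion. -/
theorem diag (P : ℕ → Set ℕ → Prop)
    (hP : ∀ n M N, P n M → (N \ M).Finite → P n N)
    (L : Set ℕ) (hL : L.Infinite)
    (h : ∀ n ∈ L, ∀ L' ⊆ L, L'.Infinite → ∃ M ⊆ L', M.Infinite ∧ P n M) :
    ∃ M ⊆ L, M.Infinite ∧ ∀ n ∈ M, P n M := by
  classical
  have step : ∀ K : {K : Set ℕ // K ⊆ L ∧ K.Infinite},
      ∃ (n : ℕ) (K' : {K : Set ℕ // K ⊆ L ∧ K.Infinite}),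
        n ∈ K.1 ∧ K'.1 ⊆ K.1 ∧ (∀ m ∈ K'.1, n < m) ∧ P n K'.1 := by
    rintro ⟨K, hKL, hK⟩
    obtain ⟨n, hn⟩ := hK.nonempty
    obtain ⟨M, hMK, hM, hPM⟩ := h n (hKL hn) K hKL hK
    refine ⟨n, ⟨M \ Set.Iic n, fun m hm => hKL (hMK hm.1), hM.sdiff (Set.finite_Iic n)⟩, hn,
      fun m hm => hMK hm.1, fun m hm => by simpa using hm.2, ?_⟩
    refine hP n M _ hPM ?_
    have : (M \ Set.Iic n) \ M = ∅ := by ext m; simp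
    rw [this]; exact Set.finite_empty
  choose a nx h1 h2 h3 h4 using step
  let K : ℕ → {K : Set ℕ // K ⊆ L ∧ K.Infinite} := fun k => Nat.rec ⟨L, subset_rfl, hL⟩ (fun _ K => nx K) k
  have hK : ∀ k, K (k+1) = nx (K k) := fun k => rfl
  have anti : Antitone (fun k => (K k).1) := antitone_nat_of_succ_le (fun k => by
    rw [hK]; exact h2 _)
  let u : ℕ → ℕ := fun k => a (K k)
  have hu : StrictMono u := strictMono_nat_of_lt_succ (fun k => h3 (K k) _ (by
    rw [← hK]; exact h1 _))
  refine ⟨Set.range u, ?_, Set.infinite_range_of_injective hu.injective, ?_⟩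
  · rintro _ ⟨k, rfl⟩; exact (K k).2.1 (h1 _)
  · rintro _ ⟨k, rfl⟩
    refine hP _ _ _ (h4 (K k)) ?_
    refine ((Set.finite_Iic k).image u).subset ?_
    rintro _ ⟨⟨i, rfl⟩, hi⟩
    refine ⟨i, ?_, rfl⟩
    by_contra hik
    simp only [Set.mem_Iic, not_le] at hik
    exact hi (by rw [← hK]; exact anti hik (h1 (K i)))

variable {S : Type*}

/-- Every point of `W` lies in finitely many `X b n` (`n ∈ M`) for one of the two values of `b`. -/
def Conv (X : Bool → ℕ → Set S) (W : Set S) (M : Set ℕ) : Prop :=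
  ∀ s ∈ W, ∃ b, {n ∈ M | s ∈ X b n}.Finite

theorem Conv.almost {X : Bool → ℕ → Set S} {W : Set S} {M N : Set ℕ}
    (h : Conv X W M) (hN : (N \ M).Finite) : Conv X W N := by
  intro s hs
  obtain ⟨b, hb⟩ := h s hs
  refine ⟨b, (hb.union hN).subset ?_⟩
  rintro n ⟨hn, hn'⟩
  by_cases hM : n ∈ M
  · exact Or.inl ⟨hM, hn'⟩
  · exact Or.inr ⟨hn, hM⟩

theorem Conv.mono {X : Bool → ℕ → Set S} {W : Set S} {M N : Set ℕ}
    (h : Conv X W M) (hN : N ⊆ M) : Conv X W N :=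
  h.almost (by rw [Set.sdiff_eq_empty.2 hN]; exact Set.finite_empty)

/-- No infinite subset of `L` makes `W` convergent. -/
def Large (X : Bool → ℕ → Set S) (W : Set S) (L : Set ℕ) : Prop :=
  ∀ M ⊆ L, M.Infinite → ¬ Conv X W M

theorem split (X : Bool → ℕ → Set S) (F : Set (Set S)) (hF : F.Finite) (L : Set ℕ)
    (hL : L.Infinite) (h : ∀ W ∈ F, Large X W L) :
    ∃ n ∈ L, ∃ L' ⊆ L, L'.Infinite ∧ ∀ W ∈ F, ∀ b, Large X (W ∩ X b n) L' := by
  by_contra hcon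
  push Not at hcon
  obtain ⟨M, hML, hM, hPM⟩ := diag (fun n M => ∃ p ∈ F ×ˢ (Set.univ : Set Bool),
      Conv X (p.1 ∩ X p.2 n) M)
    (fun n M N ⟨p, hp, hc⟩ hN => ⟨p, hp, hc.almost hN⟩) L hL (by
      intro n hn L' hL' hi
      obtain ⟨W, hW, b, hb⟩ := hcon n hn L' hL' hi
      unfold Large at hb
      push Not at hb
      obtain ⟨M, h1, h2, h3⟩ := hb
      exact ⟨M, h1, h2, (W, b), ⟨hW, trivial⟩, h3⟩)
  have : ∃ p ∈ F ×ˢ (Set.univ : Set Bool), {n ∈ M | Conv X (p.1 ∩ X p.2 n) M}.Infinite := by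
    by_contra hno
    push Not at hno
    refine hM (((hF.prod Set.finite_univ).biUnion (t := fun p => {n ∈ M | Conv X (p.1 ∩ X p.2 n) M})
      (fun p hp => by simpa using hno p hp)).subset ?_)
    intro n hn
    obtain ⟨p, hp, hc⟩ := hPM n hn
    exact Set.mem_biUnion hp ⟨hn, hc⟩
  obtain ⟨⟨W, b⟩, ⟨hW, -⟩, hN⟩ := this
  refine h W hW _ ((Set.sep_subset _ _).trans hML) hN ?_
  intro s hs
  by_cases hex : ∃ n ∈ {n ∈ M | Conv X (W ∩ X b n) M}, s ∈ X b n
  · obtain ⟨n, ⟨hn, hc⟩, hsn⟩ := hex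
    exact (hc.mono (Set.sep_subset _ _)) s ⟨hs, hsn⟩
  · refine ⟨b, ?_⟩
    convert Set.finite_empty (α := ℕ)
    ext n
    simp only [Set.mem_ofPred_eq, Set.mem_empty_iff_false, iff_false]
    intro hn
    exact hex ⟨n, hn.1, hn.2⟩

theorem independent (X : Bool → ℕ → Set S) (L : Set ℕ) (hL : L.Infinite)
    (h : Large X Set.univ L) :
    ∃ u : ℕ → ℕ, StrictMono u ∧ ∀ (σ : ℕ → Bool) (k : ℕ), ∃ s, ∀ i < k, s ∈ X (σ i) (u i) := by
  classical
  let T := {q : Set (Set S) × Set ℕ // q.1.Finite ∧ q.2.Infinite ∧ ∀ W ∈ q.1, Large X W q.2}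
  have step : ∀ q : T, ∃ (n : ℕ) (q' : T), n ∈ q.1.2 ∧ q'.1.2 ⊆ q.1.2 ∧ (∀ m ∈ q'.1.2, n < m) ∧
      ∀ W ∈ q.1.1, ∀ b, W ∩ X b n ∈ q'.1.1 := by
    rintro ⟨⟨F, L⟩, hF, hL, h⟩
    obtain ⟨n, hn, L', hL', hi, hl⟩ := split X F hF L hL h
    refine ⟨n, ⟨⟨(fun p : Set S × Bool => p.1 ∩ X p.2 n) '' (F ×ˢ Set.univ), L' \ Set.Iic n⟩,
      (hF.prod Set.finite_univ).image _, hi.sdiff (Set.finite_Iic n), ?_⟩, hn,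
      fun m hm => hL' hm.1, fun m hm => by simpa using hm.2, ?_⟩
    · rintro _ ⟨⟨W, b⟩, ⟨hW, -⟩, rfl⟩ M hM hMi
      exact hl W hW b M (hM.trans Set.sdiff_subset) hMi
    · intro W hW b
      exact ⟨(W, b), ⟨hW, trivial⟩, rfl⟩
  choose a nx h1 h2 h3 h4 using step
  let K : ℕ → T := fun k => Nat.rec ⟨⟨{Set.univ}, L⟩, Set.finite_singleton _, hL, by
    intro W hW; rw [Set.mem_singleton_iff.1 hW]; exact h⟩ (fun _ K => nx K) k
  have hK : ∀ k, K (k+1) = nx (K k) := fun k => rfl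
  refine ⟨fun k => a (K k), strictMono_nat_of_lt_succ (fun k => h3 (K k) _ (by
    rw [← hK]; exact h1 _)), ?_⟩
  intro σ k
  have key : ∀ k, ∃ W ∈ (K k).1.1, ∀ s ∈ W, ∀ i < k, s ∈ X (σ i) (a (K i)) := by
    intro k
    induction k with
    | zero => exact ⟨Set.univ, Set.mem_singleton _, by simp⟩
    | succ k ih =>
      obtain ⟨W, hW, hs⟩ := ih
      refine ⟨W ∩ X (σ k) (a (K k)), by rw [hK]; exact h4 _ W hW _, ?_⟩
      intro s hsW i hi
      rcases Nat.lt_succ_iff_lt_or_eq.1 hi with hi | rfl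
      · exact hs s hsW.1 i hi
      · exact hsW.2
  obtain ⟨W, hW, hs⟩ := key k
  have hne : W.Nonempty := by
    by_contra hne
    rw [Set.not_nonempty_iff_eq_empty] at hne
    refine (K k).2.2.2 W hW _ subset_rfl (K k).2.2.1 ?_
    rw [hne]; intro s hs; exact hs.elim
  obtain ⟨s, hsW⟩ := hne
  exact ⟨s, hs s hsW⟩

theorem diag_all (X : ℕ → Bool → ℕ → Set S)
    (h : ∀ p, ∀ L : Set ℕ, L.Infinite → ¬ Large (X p) Set.univ L) :
    ∃ M : Set ℕ, M.Infinite ∧ ∀ p, Conv (X p) Set.univ M := by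
  have h' : ∀ n : ℕ, ∀ L : Set ℕ, L.Infinite →
      ∃ M ⊆ L, M.Infinite ∧ ∀ p < n, Conv (X p) Set.univ M := by
    intro n
    induction n with
    | zero => intro L hL; exact ⟨L, subset_rfl, hL, by simp⟩
    | succ n ih =>
      intro L hL
      obtain ⟨M, hML, hM, hc⟩ := ih L hL
      have := h n M hM
      unfold Large at this
      push Not at this
      obtain ⟨N, hNM, hN, hcN⟩ := this
      refine ⟨N, hNM.trans hML, hN, fun p hp => ?_⟩
      rcases Nat.lt_succ_iff_lt_or_eq.1 hp with hp | rfl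
      · exact (hc p hp).mono hNM
      · exact hcN
  obtain ⟨M, -, hM, hc⟩ := diag (fun n M => ∀ p < n, Conv (X p) Set.univ M)
    (fun n M N hc hN p hp => (hc p hp).almost hN) Set.univ Set.infinite_univ
    (fun n _ L' _ hL' => h' n L' hL')
  refine ⟨M, hM, fun p => ?_⟩
  obtain ⟨n, hn, hpn⟩ := hM.exists_gt p
  exact hc n hn p hpn

/-- A real signed choice capturing half of the total mass. -/
theorem signs {𝕜 : Type*} [RCLike 𝕜] (r : ℕ) (t : Fin r → 𝕜) :
    ∃ σ : ℕ → Bool, (∑ k, ‖t k‖) / 2 ≤ ‖∑ k : Fin r, (if σ k then (1:𝕜) else -1) * t k‖ := by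
  have hsum : ∑ k, ‖t k‖ ≤ ∑ k, |RCLike.re (t k)| + ∑ k, |RCLike.im (t k)| := by
    rw [← Finset.sum_add_distrib]
    exact Finset.sum_le_sum fun k _ => by
      conv_lhs => rw [← RCLike.re_add_im (t k)]
      refine (norm_add_le _ _).trans (add_le_add ?_ ?_)
      · rw [RCLike.norm_ofReal]
      · rw [norm_mul, RCLike.norm_ofReal]
        exact mul_le_of_le_one_right (abs_nonneg _) (by
          by_cases hI : (RCLike.I : 𝕜) = 0
          · simp [hI]
          · exact (RCLike.norm_I_of_ne_zero hI).le)
  have aux : ∀ g : 𝕜 →+ ℝ, (∀ z, |g z| ≤ ‖z‖) → ∃ σ : ℕ → Bool,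
      ∑ k, |g (t k)| ≤ ‖∑ k : Fin r, (if σ k then (1:𝕜) else -1) * t k‖ := by
    intro g hg
    classical
    refine ⟨fun i => if h : i < r then decide (0 ≤ g (t ⟨i, h⟩)) else true, ?_⟩
    refine le_trans (le_of_eq ?_) ((le_abs_self _).trans (hg _))
    rw [map_sum]
    refine Finset.sum_congr rfl fun k _ => ?_
    simp only [Fin.is_lt, dite_true, Fin.eta, decide_eq_true_eq]
    split_ifs with h
    · rw [one_mul, abs_of_nonneg h]
    · rw [neg_one_mul, map_neg, abs_of_neg (not_le.1 h)]
  obtain ⟨σ, hσ⟩ := aux RCLike.re RCLike.abs_re_le_norm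
  obtain ⟨τ, hτ⟩ := aux RCLike.im RCLike.abs_im_le_norm
  rcases le_total (∑ k, |RCLike.re (t k)|) (∑ k, |RCLike.im (t k)|) with h | h
  · refine ⟨τ, le_trans ?_ hτ⟩
    linarith
  · refine ⟨σ, le_trans ?_ hσ⟩
    linarith

end RosenthalAux

open RosenthalAux

/-- **Rosenthal's `ℓ¹`-theorem.** Every bounded sequence in a (real or complex)
Banach space has either a subsequence equivalent to the unit vector basis of
`ℓ¹` or a weakly Cauchy subsequence. -/
theorem rosenthal_l1 {𝕜 : Type*} [RCLike 𝕜] {X : Type*}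
    [NormedAddCommGroup X] [NormedSpace 𝕜 X] [CompleteSpace X]
    (x : ℕ → X) (hb : ∃ C : ℝ, ∀ n, ‖x n‖ ≤ C) :
    (∃ n : ℕ → ℕ, StrictMono n ∧ ∃ B : ℝ, 0 < B ∧
        ∀ (r : ℕ) (t : Fin r → 𝕜),
          B * ∑ k, ‖t k‖ ≤ ‖∑ k, t k • x (n k)‖) ∨
      (∃ n : ℕ → ℕ, StrictMono n ∧
        ∀ x' : X →L[𝕜] 𝕜, ∃ l : 𝕜,
          Tendsto (fun k => x' (x (n k))) atTop (nhds l)) := by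
  obtain ⟨C, hC⟩ := hb
  let S := {f : X →L[𝕜] 𝕜 // ‖f‖ ≤ 1}
  let c : ℕ → 𝕜 := TopologicalSpace.denseSeq 𝕜
  let Y : ℕ × ℕ → Bool → ℕ → Set S := fun p b n =>
    {f | dist (f.1 (x n)) (if b then c p.1 else c p.2) < dist (c p.1) (c p.2) / 8}
  by_cases hlarge : ∃ p, ∃ L : Set ℕ, L.Infinite ∧ Large (Y p) Set.univ L
  · left
    obtain ⟨⟨p, q⟩, L, hL, hl⟩ := hlarge
    obtain ⟨u, hu, hind⟩ := independent _ L hL hl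
    have hd : 0 < dist (c p) (c q) := by
      obtain ⟨s, hs⟩ := hind (fun _ => true) 1
      have := (dist_nonneg).trans_lt (hs 0 one_pos)
      simp only at this
      linarith
    refine ⟨u, hu, dist (c p) (c q) / 8, by positivity, ?_⟩
    intro r t
    obtain ⟨σ, hσ⟩ := signs r t
    obtain ⟨f, hf⟩ := hind σ r
    obtain ⟨g, hg⟩ := hind (fun i => !σ i) r
    set d := dist (c p) (c q) with hd_def
    have hfg : ∀ k : Fin r, ‖(f.1 - g.1) (x (u k)) - (if σ k then (1:𝕜) else -1) * (c p - c q)‖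
        ≤ d / 4 := by
      intro k
      have h1 := hf k k.2
      have h2 := hg k k.2
      simp only [Y, Set.mem_ofPred_eq] at h1 h2
      rw [← hd_def] at h1 h2
      rw [dist_eq_norm] at h1 h2
      rw [sub_apply]
      cases hs : σ k <;> simp only [hs, Bool.not_true, Bool.not_false, if_true, if_false, Bool.false_eq_true] at h1 h2 ⊢
      all_goals
        refine le_trans (le_of_eq_of_le ?_ (norm_sub_le _ _)) ((add_le_add h1.le h2.le).trans (by linarith))
        congr 1; ring
    have hsum : ‖(f.1 - g.1) (∑ k, t k • x (u k)) -
        (c p - c q) * ∑ k : Fin r, (if σ k then (1:𝕜) else -1) * t k‖ ≤ d / 4 * ∑ k, ‖t k‖ := by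
      rw [map_sum, Finset.mul_sum, ← Finset.sum_sub_distrib, Finset.mul_sum]
      refine norm_sum_le_of_le _ fun k _ => ?_
      have : (f.1 - g.1) (t k • x (u k)) - (c p - c q) * ((if σ k then (1:𝕜) else -1) * t k)
        = ((f.1 - g.1) (x (u k)) - (if σ k then (1:𝕜) else -1) * (c p - c q)) * t k := by
        rw [map_smul, smul_eq_mul]; ring
      rw [this, norm_mul]
      exact mul_le_mul_of_nonneg_right (hfg k) (norm_nonneg _)
    have hnorm : ‖(f.1 - g.1) (∑ k, t k • x (u k))‖ ≤ 2 * ‖∑ k, t k • x (u k)‖ := by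
      refine ((f.1 - g.1).le_opNorm _).trans (mul_le_mul_of_nonneg_right ?_ (norm_nonneg _))
      refine (norm_sub_le _ _).trans ?_
      have := f.2; have := g.2; linarith
    have hlow : d * ((∑ k, ‖t k‖) / 2) ≤
        ‖(c p - c q) * ∑ k : Fin r, (if σ k then (1:𝕜) else -1) * t k‖ := by
      rw [norm_mul, ← dist_eq_norm]
      exact mul_le_mul_of_nonneg_left hσ hd.le
    have htri := norm_sub_norm_le ((c p - c q) * ∑ k : Fin r, (if σ k then (1:𝕜) else -1) * t k)
      ((f.1 - g.1) (∑ k, t k • x (u k)))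
    rw [norm_sub_rev] at htri
    linarith
  · right
    push Not at hlarge
    obtain ⟨M, hM, hconv⟩ := diag_all (fun m => Y (Nat.unpair m)) (fun m L hL => hlarge _ L hL)
    refine ⟨Nat.nth (· ∈ M), Nat.nth_strictMono hM, ?_⟩
    set u := Nat.nth (· ∈ M) with hu_def
    have hu : StrictMono u := Nat.nth_strictMono hM
    have huM : ∀ k, u k ∈ M := fun k => Nat.nth_mem_of_infinite hM k
    have main : ∀ f : S, ∃ l : 𝕜, Tendsto (fun k => f.1 (x (u k))) atTop (nhds l) := by
      intro f
      have hK : IsCompact (Metric.closedBall (0:𝕜) C) := isCompact_closedBall _ _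
      have hmem : ∀ k, f.1 (x (u k)) ∈ Metric.closedBall (0:𝕜) C := by
        intro k
        rw [mem_closedBall_zero_iff]
        refine (f.1.le_opNorm _).trans ?_
        have := mul_le_mul_of_nonneg_right f.2 (norm_nonneg (x (u k)))
        rw [one_mul] at this
        exact this.trans (hC _)
      obtain ⟨a, -, ha⟩ := hK.exists_mapClusterPt (f := atTop) (u := fun k => f.1 (x (u k)))
        (tendsto_principal.2 (Eventually.of_forall hmem))
      refine ⟨a, hK.tendsto_nhds_of_unique_mapClusterPt (Eventually.of_forall hmem) ?_⟩
      intro b _ hbc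
      by_contra hne
      have hD : 0 < dist a b := dist_pos.2 (Ne.symm hne)
      obtain ⟨p, hp⟩ := (TopologicalSpace.denseRange_denseSeq 𝕜).exists_dist_lt a
        (show 0 < dist a b / 16 by positivity)
      obtain ⟨q, hq⟩ := (TopologicalSpace.denseRange_denseSeq 𝕜).exists_dist_lt b
        (show 0 < dist a b / 16 by positivity)
      change dist a (c p) < _ at hp
      change dist b (c q) < _ at hq
      have h4 : dist a b ≤ dist a (c p) + dist (c p) (c q) + dist (c q) b := dist_triangle4 _ _ _ _
      rw [dist_comm (c q) b] at h4
      obtain ⟨e, he⟩ := hconv (Nat.pair p q) f trivial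
      simp only [Nat.unpair_pair] at he
      have hgen : ∀ z w : 𝕜, MapClusterPt z atTop (fun k => f.1 (x (u k))) →
          dist z w < dist a b / 16 →
          {k | dist (f.1 (x (u k))) w < dist (c p) (c q) / 8}.Infinite := by
        intro z w hz hzw
        rw [← Nat.frequently_atTop_iff_infinite]
        have hfr := hz.frequently (p := fun y => dist y w < dist (c p) (c q) / 8)
          (Metric.isOpen_ball.mem_nhds (show z ∈ Metric.ball w (dist (c p) (c q) / 8) by
            rw [Metric.mem_ball]; linarith))
        exact hfr
      have hinf : {k | f ∈ Y (p, q) e (u k)}.Infinite := by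
        cases e
        · exact hgen b (c q) hbc hq
        · exact hgen a (c p) ha hp
      refine (hinf.image hu.injective.injOn) (he.subset ?_)
      rintro _ ⟨k, hk, rfl⟩
      exact ⟨huM k, hk⟩
    intro f
    by_cases hf : ‖f‖ = 0
    · rw [norm_eq_zero] at hf
      exact ⟨0, by simp [hf]⟩
    have hf' : (‖f‖ : 𝕜) ≠ 0 := by exact_mod_cast hf
    obtain ⟨l, hl⟩ := main ⟨((‖f‖ : 𝕜)⁻¹) • f, by
      rw [norm_smul, norm_inv, RCLike.norm_ofReal, abs_norm, inv_mul_cancel₀ hf]⟩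
    refine ⟨(‖f‖ : 𝕜) * l, ?_⟩
    have := hl.const_mul (‖f‖ : 𝕜)
    refine this.congr fun k => ?_
    simp [hf']
end

section
/- Let $X$ be a real Banach space, let $(x_n)$ be a bounded sequence in $X$ admitting $\varepsilon$-$\ell^1$-blocks for some $\varepsilon > 0$, and let $\tau > 0$. Then there exist indices $i_1 < \cdots < i_r$ in $\mathbb{N}$ and real numbers $a_1,\ldots,a_r$ with $\sum_{\rho=1}^r |a_\rho| = 1$, $|\sum_{\rho=1}^r a_\rho| \leq \tau$, and $\|\sum_{\rho=1}^r a_\rho x_{i_\rho}\| \leq \varepsilon$. -/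
/-- Finset form of the blocks beyond a given index. -/
theorem block_aux {X : Type*} [NormedAddCommGroup X] [NormedSpace ℝ X]
    (x : ℕ → X) {ε : ℝ} (h : AdmitsL1Blocks ℝ x ε) (n : ℕ) :
    ∃ (s : Finset ℕ) (b : ℕ → ℝ), (∀ j ∈ s, n ≤ j) ∧ (∑ j ∈ s, |b j|) = 1 ∧
      ‖∑ j ∈ s, b j • x j‖ ≤ ε := by
  obtain ⟨r, i, a, hi, hM, h1, h2⟩ := h (Set.Ici n) (Set.Ici_infinite n)
  refine ⟨Finset.univ.map ⟨i, hi.injective⟩, Function.extend i a 0, ?_, ?_, ?_⟩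
  · intro j hj
    simp only [Finset.mem_map, Finset.mem_univ, true_and, Function.Embedding.coeFn_mk] at hj
    obtain ⟨ρ, rfl⟩ := hj
    exact hM ρ
  · simpa [hi.injective.extend_apply] using h1
  · simpa [hi.injective.extend_apply] using h2

/-- If a bounded sequence in a real Banach space admits `ε`-`ℓ¹`-blocks, then
for every `τ > 0` one can find an `ε`-`ℓ¹`-block whose coefficients moreover
satisfy `|∑ a_ρ| ≤ τ`. -/
theorem exists_block_with_small_sum {X : Type*} [NormedAddCommGroup X]
    [NormedSpace ℝ X] [CompleteSpace X]
    (x : ℕ → X) (hb : ∃ C : ℝ, ∀ n, ‖x n‖ ≤ C) {ε : ℝ} (hε : 0 < ε)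
    (h : AdmitsL1Blocks ℝ x ε) {τ : ℝ} (hτ : 0 < τ) :
    ∃ (r : ℕ) (i : Fin r → ℕ) (a : Fin r → ℝ),
      StrictMono i ∧ (∑ ρ, |a ρ|) = 1 ∧ |∑ ρ, a ρ| ≤ τ ∧
        ‖∑ ρ, a ρ • x (i ρ)‖ ≤ ε := by
  choose s b hs h1 h2 using block_aux x h
  let N : ℕ → ℕ := fun n => max (n + 1) ((s n).sup id + 1)
  let m : ℕ → ℕ := fun k => N^[k] 0
  have hm : ∀ k, m (k + 1) = N (m k) := fun k => Function.iterate_succ_apply' N k 0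
  have hmono : StrictMono m := strictMono_nat_of_lt_succ (fun k => by
    rw [hm]; exact lt_of_lt_of_le (Nat.lt_succ_self _) (le_max_left _ _))
  have hlt : ∀ k l, k < l → ∀ j ∈ s (m k), j < m l := by
    intro k l hkl j hj
    have e1 : j ≤ (s (m k)).sup id := Finset.le_sup (f := id) hj
    have e2 : (s (m k)).sup id + 1 ≤ m (k + 1) := by rw [hm]; exact le_max_right _ _
    have e3 : m (k + 1) ≤ m l := hmono.monotone hkl
    omega
  let η : ℕ → ℝ := fun k => ∑ j ∈ s (m k), b (m k) j
  have hη : ∀ k, η k ∈ Set.Icc (-1 : ℝ) 1 := by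
    intro k
    rw [Set.mem_Icc, ← abs_le, ← h1 (m k)]
    exact Finset.abs_sum_le_sum_abs _ _
  obtain ⟨c, -, φ, hφ, hc⟩ := isCompact_Icc.tendsto_subseq hη
  obtain ⟨K, hK⟩ := Metric.cauchySeq_iff.1 hc.cauchySeq τ hτ
  have hd := hK (K + 1) (by omega) K le_rfl
  have hkl : φ K < φ (K + 1) := hφ (Nat.lt_succ_self K)
  simp only [Function.comp, Real.dist_eq] at hd
  generalize φ K = k at *
  generalize φ (K + 1) = l at *
  have hdis : Disjoint (s (m k)) (s (m l)) := by
    rw [Finset.disjoint_left]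
    intro j hj hj'
    exact absurd (hlt k l hkl j hj) (not_lt.2 (hs _ j hj'))
  classical
  let d : ℕ → ℝ := fun j => if j ∈ s (m k) then b (m k) j / 2 else -(b (m l) j / 2)
  have dk : ∀ j ∈ s (m k), d j = b (m k) j / 2 := fun j hj => if_pos hj
  have dl : ∀ j ∈ s (m l), d j = -(b (m l) j / 2) :=
    fun j hj => if_neg (fun hj' => Finset.disjoint_left.1 hdis hj' hj)
  let S := s (m k) ∪ s (m l)
  have tr : ∀ {E : Type _} [AddCommMonoid E] (f : ℕ → E),
      ∑ ρ : Fin S.card, f (S.orderEmbOfFin rfl ρ) = ∑ j ∈ s (m k), f j + ∑ j ∈ s (m l), f j := by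
    intro E _ f
    rw [← Finset.sum_union hdis]
    change _ = ∑ j ∈ S, f j
    conv_rhs => rw [← Finset.map_orderEmbOfFin_univ S rfl, Finset.sum_map]
    rfl
  have tr' : ∀ (f : ℕ → ℝ),
      ∑ ρ : Fin S.card, f (S.orderEmbOfFin rfl ρ) = ∑ j ∈ s (m k), f j + ∑ j ∈ s (m l), f j := by
    intro f
    rw [← Finset.sum_union hdis]
    change _ = ∑ j ∈ S, f j
    conv_rhs => rw [← Finset.map_orderEmbOfFin_univ S rfl, Finset.sum_map]
    rfl
  refine ⟨S.card, S.orderEmbOfFin rfl, fun ρ => d (S.orderEmbOfFin rfl ρ),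
    (S.orderEmbOfFin rfl).strictMono, ?_, ?_, ?_⟩
  · rw [tr' (fun j => |d j|), Finset.sum_congr rfl (fun j hj => by rw [dk j hj]),
      Finset.sum_congr (s₁ := s (m l)) rfl (fun j hj => by rw [dl j hj])]
    simp only [abs_neg, abs_div, ← Finset.sum_div, h1]
    norm_num
  · rw [tr' d, Finset.sum_congr rfl dk, Finset.sum_congr rfl dl, Finset.sum_neg_distrib,
      ← Finset.sum_div, ← Finset.sum_div]
    change |η k / 2 + -(η l / 2)| ≤ τ
    rw [abs_lt] at hd
    rw [abs_le]
    constructor <;> linarith [hd.1, hd.2]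
  · rw [tr (fun j => d j • x j),
      Finset.sum_congr (g := fun j => (1 / 2 : ℝ) • (b (m k) j • x j)) rfl
        (fun j hj => by rw [dk j hj, smul_smul]; congr 1; ring),
      Finset.sum_congr (s₁ := s (m l)) (g := fun j => (-1 / 2 : ℝ) • (b (m l) j • x j)) rfl
        (fun j hj => by rw [dl j hj, smul_smul]; congr 1; ring),
      ← Finset.smul_sum, ← Finset.smul_sum]
    refine (norm_add_le _ _).trans ?_
    rw [norm_smul, norm_smul]
    have := h2 (m k)
    have := h2 (m l)
    norm_num
    linarith
end

section
/- Let $X$ be a real Banach space, $(x_n)$ a bounded sequence in $X$, $\varepsilon > 0$ and $\delta > 0$, and suppose that every subsequence $(x_{n_k})$ of $(x_n)$ satisfies $\sup_{\|x'\|=1}\bigl(\limsup_k x'(x_{n_k}) - \liminf_k x'(x_{n_k})\bigr) > 2\varepsilon + \delta$. Then there is a subsequence $(x_{m_j})$ of $(x_n)$ with the following property: whenever $C$ and $D$ are finite disjoint subsets of $\mathbb{N}$, there exist $\lambda_0 \in \mathbb{R}$ and $x' \in X'$ with $\|x'\| = 1$ such that $x'(x_{m_j}) < \lambda_0$ for all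 $j \in C$ and $x'(x_{m_j}) > \lambda_0 + 2\varepsilon + \delta$ for all $j \in D$. -/
open Filter

/-- `i` splits `L`: infinitely many members on either side. -/
def SepSplits {I : Type*} (S : Bool → I → Set ℕ) (i : I) (L : Set ℕ) : Prop :=
  ∀ s, (L ∩ S s i).Infinite

/-- each family in `F` contains a splitter for every infinite subset of `M`. -/
def SepWorks {I : Type*} (S : Bool → I → Set ℕ) (F : Set (Set I)) (M : Set ℕ) : Prop :=
  ∀ J ∈ F, ∀ L ⊆ M, L.Infinite → ∃ i ∈ J, SepSplits S i L

/-- refine all families according to the side on which `n` lies. -/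
def sepRefine {I : Type*} (S : Bool → I → Set ℕ) (F : Set (Set I)) (n : ℕ) : Set (Set I) :=
  Set.image2 (fun J s => J ∩ {i | n ∈ S s i}) F Set.univ

theorem sep_step {I : Type*} (S : Bool → I → Set ℕ) (F : Set (Set I)) (hF : F.Finite)
    (M : Set ℕ) (hM : M.Infinite) (hW : SepWorks S F M) :
    ∃ n ∈ M, ∃ M' ⊆ M, M'.Infinite ∧ (∀ k ∈ M', n < k) ∧ SepWorks S (sepRefine S F n) M' := by
  by_contra hcon
  have key : ∀ P : {P : Set ℕ // P ⊆ M ∧ P.Infinite}, ∃ (n : ℕ)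
      (Q : {P : Set ℕ // P ⊆ M ∧ P.Infinite}) (l : F × Bool), n ∈ P.1 ∧ Q.1 ⊆ P.1 ∧
      (∀ k ∈ Q.1, n < k) ∧ ∀ i ∈ l.1.1, n ∈ S l.2 i → ¬ SepSplits S i Q.1 := by
    rintro ⟨P, hPM, hP⟩
    obtain ⟨n, hn⟩ := hP.nonempty
    have hinf : (P \ Set.Iic n).Infinite := hP.diff (Set.finite_Iic n)
    have h1 : ¬ SepWorks S (sepRefine S F n) (P \ Set.Iic n) := fun hw =>
      hcon ⟨n, hPM hn, P \ Set.Iic n, Set.diff_subset.trans hPM, hinf,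
        fun k hk => not_le.1 hk.2, hw⟩
    unfold SepWorks at h1
    push Not at h1
    obtain ⟨J, ⟨J0, hJ0, s, -, rfl⟩, L, hL, hLi, hno⟩ := h1
    exact ⟨n, ⟨L, (hL.trans Set.diff_subset).trans hPM, hLi⟩, (⟨J0, hJ0⟩, s), hn,
      hL.trans Set.diff_subset, fun k hk => not_le.1 (hL hk).2,
      fun i hi hni => hno i ⟨hi, hni⟩⟩
  choose nx Q l h1 h2 h3 h4 using key
  let P : ℕ → {P : Set ℕ // P ⊆ M ∧ P.Infinite} :=
    fun k => Nat.rec ⟨M, subset_rfl, hM⟩ (fun _ p => Q p) k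
  have hPs : ∀ k, P (k+1) = Q (P k) := fun k => rfl
  have hanti : Antitone (fun k => (P k).1) :=
    antitone_nat_of_succ_le (fun k => by rw [hPs]; exact h2 _)
  have hmono : StrictMono (fun k => nx (P k)) :=
    strictMono_nat_of_lt_succ (fun k => h3 (P k) _ (by rw [← hPs]; exact h1 _))
  have : Finite F := hF
  obtain ⟨y, hy⟩ := Finite.exists_infinite_fiber (fun k => l (P k))
  have hy' : ((fun k => l (P k)) ⁻¹' {y}).Infinite := Set.infinite_coe_iff.1 hy
  set K := (fun k => l (P k)) ⁻¹' {y} with hK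
  have hL : ((fun k => nx (P k)) '' K).Infinite := hy'.image hmono.injective.injOn
  have hLM : ((fun k => nx (P k)) '' K) ⊆ M := by
    rintro _ ⟨k, -, rfl⟩
    exact (P k).2.1 (h1 _)
  obtain ⟨i, hi, hs⟩ := hW y.1.1 y.1.2 _ hLM hL
  obtain ⟨_, ⟨k, hk, rfl⟩, hk2⟩ := (hs y.2).nonempty
  have hk' : l (P k) = y := hk
  refine h4 (P k) i (by rw [hk']; exact hi) (by rw [hk']; exact hk2) ?_
  intro s
  refine ((hs s).diff ((Set.finite_Iic k).image (fun k => nx (P k)))).mono ?_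
  rintro _ ⟨⟨⟨j, hj, rfl⟩, hj2⟩, hj3⟩
  refine ⟨?_, hj2⟩
  have hkj : k + 1 ≤ j := by
    by_contra hlt
    exact hj3 ⟨j, by simp only [Set.mem_Iic]; omega, rfl⟩
  rw [← hPs]
  exact hanti hkj (h1 (P j))

theorem sep_comb {I : Type*} (S : Bool → I → Set ℕ)
    (h : ∀ L : Set ℕ, L.Infinite → ∃ i, SepSplits S i L) :
    ∃ m : ℕ → ℕ, StrictMono m ∧ ∀ C D : Finset ℕ, Disjoint C D →
      ∃ i, (∀ j ∈ C, m j ∈ S false i) ∧ (∀ j ∈ D, m j ∈ S true i) := by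
  have key : ∀ p : {p : Set (Set I) × Set ℕ // p.1.Finite ∧ p.2.Infinite ∧ SepWorks S p.1 p.2},
      ∃ (n : ℕ) (q : {p : Set (Set I) × Set ℕ // p.1.Finite ∧ p.2.Infinite ∧ SepWorks S p.1 p.2}),
      n ∈ p.1.2 ∧ (∀ k ∈ q.1.2, n < k) ∧ q.1.1 = sepRefine S p.1.1 n := by
    rintro ⟨⟨F, M⟩, hF, hM, hW⟩
    obtain ⟨n, hn, M', -, hM', hlt, hW'⟩ := sep_step S F hF M hM hW
    exact ⟨n, ⟨(sepRefine S F n, M'), hF.image2 _ Set.finite_univ, hM', hW'⟩, hn, hlt, rfl⟩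
  choose nx Q h1 h2 h3 using key
  let P : ℕ → {p : Set (Set I) × Set ℕ // p.1.Finite ∧ p.2.Infinite ∧ SepWorks S p.1 p.2} :=
    fun k => Nat.rec ⟨({Set.univ}, Set.univ), Set.finite_singleton _, Set.infinite_univ, by
      rintro J rfl L - hL
      obtain ⟨i, hi⟩ := h L hL
      exact ⟨i, trivial, hi⟩⟩ (fun _ p => Q p) k
  have hPs : ∀ k, P (k+1) = Q (P k) := fun k => rfl
  refine ⟨fun k => nx (P k),
    strictMono_nat_of_lt_succ (fun k => h2 (P k) _ (by rw [← hPs]; exact h1 _)), ?_⟩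
  intro C D hCD
  have claim : ∀ k, ∃ J ∈ (P k).1.1, ∀ i ∈ J, ∀ j < k,
      (j ∈ C → nx (P j) ∈ S false i) ∧ (j ∈ D → nx (P j) ∈ S true i) := by
    intro k
    induction k with
    | zero => exact ⟨Set.univ, rfl, fun i _ j hj => absurd hj (Nat.not_lt_zero j)⟩
    | succ k ih =>
      obtain ⟨J, hJ, hJ2⟩ := ih
      classical
      refine ⟨J ∩ {i | nx (P k) ∈ S (decide (k ∈ D)) i}, ?_, ?_⟩
      · rw [hPs, h3]
        exact ⟨J, hJ, _, trivial, rfl⟩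
      · rintro i ⟨hi, hi2⟩ j hj
        rcases Nat.lt_succ_iff_lt_or_eq.1 hj with hj | rfl
        · exact hJ2 i hi j hj
        · refine ⟨fun hc => ?_, fun hd => ?_⟩
          · have : j ∉ D := Finset.disjoint_left.1 hCD hc
            simpa [this] using hi2
          · simpa [hd] using hi2
  obtain ⟨J, hJ, hJ2⟩ := claim ((C ∪ D).sup id + 1)
  obtain ⟨i, hi, -⟩ :=
    (P ((C ∪ D).sup id + 1)).2.2.2 J hJ _ subset_rfl (P ((C ∪ D).sup id + 1)).2.2.1
  have hle : ∀ j ∈ C ∪ D, j < (C ∪ D).sup id + 1 := fun j hj =>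
    Nat.lt_succ_of_le (Finset.le_sup (f := id) hj)
  exact ⟨i, fun j hj => (hJ2 i hi j (hle j (Finset.mem_union_left _ hj))).1 hj,
    fun j hj => (hJ2 i hi j (hle j (Finset.mem_union_right _ hj))).2 hj⟩


/-- If every subsequence `(x_{n_k})` of a bounded sequence `(xₙ)` in a real
Banach space admits a normalized functional `x'` with
`limsup x'(x_{n_k}) - liminf x'(x_{n_k}) > 2ε + δ`, then there is a subsequence
`(x_{m_j})` such that any two finite disjoint sets `C, D` of indices can be
separated: for some `λ₀` and some normalized `x'` one has `x'(x_{m_j}) < λ₀`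
on `C` and `x'(x_{m_j}) > λ₀ + 2ε + δ` on `D`. -/
theorem separation_subsequence {X : Type*} [NormedAddCommGroup X]
    [NormedSpace ℝ X] [CompleteSpace X]
    (x : ℕ → X) (hb : ∃ C : ℝ, ∀ n, ‖x n‖ ≤ C) {ε δ : ℝ} (hε : 0 < ε) (hδ : 0 < δ)
    (h : ∀ n : ℕ → ℕ, StrictMono n →
      ∃ x' : X →L[ℝ] ℝ, ‖x'‖ = 1 ∧
        limsup (fun k => x' (x (n k))) atTop -
          liminf (fun k => x' (x (n k))) atTop > 2 * ε + δ) :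
    ∃ m : ℕ → ℕ, StrictMono m ∧
      ∀ C D : Finset ℕ, Disjoint C D →
        ∃ (lam : ℝ) (x' : X →L[ℝ] ℝ), ‖x'‖ = 1 ∧
          (∀ j ∈ C, x' (x (m j)) < lam) ∧
          (∀ j ∈ D, x' (x (m j)) > lam + 2 * ε + δ) := by
  obtain ⟨B, hB⟩ := hb
  let S : Bool → {f : X →L[ℝ] ℝ // ‖f‖ = 1} × ℝ → Set ℕ := fun s i =>
    if s then {n | i.1.1 (x n) > i.2 + 2 * ε + δ} else {n | i.1.1 (x n) < i.2}
  obtain ⟨m, hm, hm2⟩ := sep_comb S (by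
    intro L hL
    have hn : StrictMono (Nat.nth (· ∈ L)) := Nat.nth_strictMono hL
    have hnL : ∀ k, Nat.nth (· ∈ L) k ∈ L := fun k => Nat.nth_mem_of_infinite hL k
    generalize Nat.nth (· ∈ L) = n at hn hnL
    obtain ⟨f, hf, hlim⟩ := h n hn
    have habs : ∀ k, |f (x (n k))| ≤ B := fun k => by
      have := f.le_opNorm (x (n k))
      rw [hf, one_mul] at this
      exact this.trans (hB _)
    have hbd1 : IsBoundedUnder (· ≤ ·) atTop (fun k => f (x (n k))) :=
      isBoundedUnder_of ⟨B, fun k => (abs_le.1 (habs k)).2⟩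
    have hbd2 : IsBoundedUnder (· ≥ ·) atTop (fun k => f (x (n k))) :=
      isBoundedUnder_of ⟨-B, fun k => (abs_le.1 (habs k)).1⟩
    set u := limsup (fun k => f (x (n k))) atTop with hu
    set v := liminf (fun k => f (x (n k))) atTop with hv
    have hlo : ∃ᶠ k in atTop, f (x (n k)) < (u + v - (2 * ε + δ)) / 2 :=
      frequently_lt_of_liminf_lt hbd1.isCoboundedUnder_ge (by rw [← hv]; linarith)
    have hhi : ∃ᶠ k in atTop, (u + v - (2 * ε + δ)) / 2 + 2 * ε + δ < f (x (n k)) :=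
      frequently_lt_of_lt_limsup hbd2.isCoboundedUnder_le (by rw [← hu]; linarith)
    rw [Nat.frequently_atTop_iff_infinite] at hlo hhi
    refine ⟨(⟨f, hf⟩, (u + v - (2 * ε + δ)) / 2), ?_⟩
    intro s
    cases s
    · refine (hlo.image hn.injective.injOn).mono ?_
      rintro _ ⟨k, hk, rfl⟩
      exact ⟨hnL k, hk⟩
    · refine (hhi.image hn.injective.injOn).mono ?_
      rintro _ ⟨k, hk, rfl⟩
      exact ⟨hnL k, hk⟩)
  refine ⟨m, hm, fun C D hCD => ?_⟩
  obtain ⟨i, hC, hD⟩ := hm2 C D hCD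
  exact ⟨i.2, i.1.1, i.1.2, hC, hD⟩
end

section
/- Let $X$ be a real or complex Banach space and $(x_n)$ a bounded sequence in $X$. Suppose there is an $r \in \mathbb{N}$ with the following property: whenever $M \subseteq \mathbb{N}$ is infinite and $\varepsilon > 0$, there are $i_1 < \cdots < i_r$ in $M$ and scalars $a_1,\ldots,a_r$ with $\sum_{\rho=1}^r |a_\rho| = 1$ such that $\|\sum_{\rho=1}^r a_\rho x_{i_\rho}\| \leq \varepsilon$. Then $(x_n)$ has a norm-convergent subsequence. -/
open Filter

theorem aux_bound {𝕜 : Type*} [RCLike 𝕜] {X : Type*} [NormedAddCommGroup X] [NormedSpace 𝕜 X]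
    (C δ : ℝ) (hC : 0 ≤ C) (hδ : 0 < δ) (r : ℕ) : ∃ K : ℝ, 0 ≤ K ∧ ∀ v : Fin r → X,
      (∀ ρ, ‖v ρ‖ ≤ C) → (∀ ρ, ∀ y ∈ Submodule.span 𝕜 (v '' Set.Iio ρ), δ ≤ ‖v ρ - y‖) →
      ∀ a : Fin r → 𝕜, ∑ ρ, ‖a ρ‖ ≤ K * ‖∑ ρ, a ρ • v ρ‖ := by
  induction r with
  | zero => exact ⟨0, le_rfl, fun v _ _ a => by simp⟩
  | succ r ih =>
    obtain ⟨K, hK, H⟩ := ih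
    refine ⟨K * (1 + C * (1 / δ)) + 1 / δ, by positivity, fun v hv hs a => ?_⟩
    have h1 := H (fun ρ => v ρ.castSucc) (fun ρ => hv _) (fun ρ y hy => hs _ y (by
      refine Submodule.span_mono ?_ hy
      rintro _ ⟨σ, hσ, rfl⟩
      exact ⟨σ.castSucc, by simpa using hσ, rfl⟩)) (fun ρ => a ρ.castSucc)
    rw [Fin.sum_univ_castSucc, Fin.sum_univ_castSucc]
    set S' := ∑ ρ : Fin r, a ρ.castSucc • v ρ.castSucc with hS'
    set b := a (Fin.last r) with hb
    set w := v (Fin.last r) with hw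
    have hmem : S' ∈ Submodule.span 𝕜 (v '' Set.Iio (Fin.last r)) :=
      Submodule.sum_mem _ fun ρ _ => Submodule.smul_mem _ _
        (Submodule.subset_span ⟨ρ.castSucc, Fin.castSucc_lt_last ρ, rfl⟩)
    have h2 : ‖b‖ * δ ≤ ‖S' + b • w‖ := by
      by_cases hb0 : b = 0
      · simp [hb0]
      · have h3 := hs (Fin.last r) (-(b⁻¹ • S')) (Submodule.neg_mem _ (Submodule.smul_mem _ _ hmem))
        have h4 : S' + b • w = b • (w - -(b⁻¹ • S')) := by
          rw [sub_neg_eq_add, smul_add, smul_inv_smul₀ hb0, add_comm]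
        rw [h4, norm_smul]
        exact mul_le_mul_of_nonneg_left h3 (norm_nonneg _)
    have h2' : ‖b‖ ≤ 1 / δ * ‖S' + b • w‖ := by
      rw [one_div, ← div_eq_inv_mul, le_div_iff₀ hδ]; exact h2
    have h5 : ‖S'‖ ≤ ‖S' + b • w‖ + ‖b‖ * C := by
      calc ‖S'‖ = ‖(S' + b • w) - b • w‖ := by rw [add_sub_cancel_right]
        _ ≤ ‖S' + b • w‖ + ‖b • w‖ := norm_sub_le _ _
        _ ≤ _ := by
          rw [norm_smul]
          gcongr
          exact hv _
    have h6 : ‖b‖ * C ≤ 1 / δ * ‖S' + b • w‖ * C := mul_le_mul_of_nonneg_right h2' hC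
    have h7 : K * ‖S'‖ ≤ K * (‖S' + b • w‖ + 1 / δ * ‖S' + b • w‖ * C) :=
      mul_le_mul_of_nonneg_left (by linarith) hK
    calc _ ≤ K * (‖S' + b • w‖ + 1 / δ * ‖S' + b • w‖ * C) + 1 / δ * ‖S' + b • w‖ :=
          add_le_add (h1.trans h7) h2'
      _ = _ := by ring

/-- **Blockings with uniformly bounded length.** If there is a fixed `r` such
that every infinite `M ⊆ ℕ` contains, for every `ε > 0`, indices
`i₁ < ⋯ < i_r` and scalars `a₁,…,a_r` with `∑ |a_ρ| = 1` and
`‖∑ a_ρ x_{i_ρ}‖ ≤ ε`, then the bounded sequence `(xₙ)` has a norm-convergent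
subsequence. -/
theorem convergent_subsequence_of_uniform_blocks {𝕜 : Type*} [RCLike 𝕜]
    {X : Type*} [NormedAddCommGroup X] [NormedSpace 𝕜 X] [CompleteSpace X]
    (x : ℕ → X) (hb : ∃ C : ℝ, ∀ n, ‖x n‖ ≤ C) (r : ℕ)
    (h : ∀ M : Set ℕ, M.Infinite → ∀ ε : ℝ, 0 < ε →
      ∃ (i : Fin r → ℕ) (a : Fin r → 𝕜),
        StrictMono i ∧ (∀ ρ, i ρ ∈ M) ∧ (∑ ρ, ‖a ρ‖) = 1 ∧
          ‖∑ ρ, a ρ • x (i ρ)‖ ≤ ε) :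
    ∃ (n : ℕ → ℕ) (l : X), StrictMono n ∧
      Tendsto (fun k => x (n k)) atTop (nhds l) := by
  classical
  obtain ⟨C, hC⟩ := hb
  have hC0 : 0 ≤ C := (norm_nonneg _).trans (hC 0)
  set U : Ultrafilter ℕ := hyperfilter ℕ with hU
  have hUtop : (U : Filter ℕ) ≤ atTop := Nat.hyperfilter_le_atTop
  by_cases hcau : Cauchy (map x (U : Filter ℕ))
  · obtain ⟨l, hl⟩ := CompleteSpace.complete hcau
    have hcl : MapClusterPt l atTop x :=
      (Tendsto.mapClusterPt (u := x) (F := (U : Filter ℕ)) hl).mono hUtop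
    obtain ⟨n, hn, ht⟩ := TopologicalSpace.FirstCountableTopology.tendsto_subseq hcl
    exact ⟨n, l, hn, ht⟩
  exfalso
  have hfar : ∃ δ : ℝ, 0 < δ ∧ ∀ y : X, ¬ ∀ᶠ n in (U : Filter ℕ), dist (x n) y < 2 * δ := by
    by_contra! hcon
    apply hcau
    rw [Metric.cauchy_iff]
    refine ⟨inferInstance, fun ε hε => ?_⟩
    obtain ⟨y, hy⟩ := hcon (ε / 4) (by positivity)
    refine ⟨Metric.ball y (2 * (ε / 4)), hy, fun p hp q hq => ?_⟩
    have := dist_triangle_right p q y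
    rw [Metric.mem_ball] at hp hq
    linarith
  obtain ⟨δ, hδ, hfar⟩ := hfar
  have key : ∀ m : ℕ, ∃ n, m < n ∧
      ∀ y ∈ Submodule.span 𝕜 (x '' Set.Iic m), δ ≤ ‖x n - y‖ := by
    intro m
    set F := Submodule.span 𝕜 (x '' Set.Iic m) with hF
    have hfd : FiniteDimensional 𝕜 F :=
      FiniteDimensional.span_of_finite 𝕜 ((Set.finite_Iic m).image x)
    haveI : ProperSpace F := FiniteDimensional.proper_rclike 𝕜 F
    have hcomp : IsCompact ((fun z : F => (z : X)) '' Metric.closedBall (0 : F) (C + δ)) :=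
      (isCompact_closedBall _ _).image continuous_subtype_val
    obtain ⟨t, htf, ht⟩ := Metric.totallyBounded_iff.1 hcomp.totallyBounded δ hδ
    have hev : ∀ᶠ n in (U : Filter ℕ), ∀ y ∈ F, δ ≤ ‖x n - y‖ := by
      by_contra hne
      rw [← Ultrafilter.eventually_not] at hne
      have hcov : (⋃ y ∈ t, {n | dist (x n) y < 2 * δ}) ∈ U := by
        refine mem_of_superset hne fun n hn => ?_
        simp only [Set.mem_setOf_eq, not_forall, not_le] at hn
        obtain ⟨y, hyF, hy⟩ := hn
        have hyn : ‖y‖ ≤ C + δ := by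
          have := norm_sub_norm_le y (x n)
          rw [norm_sub_rev] at this
          have := hC n
          linarith
        have := ht ⟨⟨y, hyF⟩, by simpa using hyn, rfl⟩
        simp only [Set.mem_iUnion, Metric.mem_ball] at this
        obtain ⟨z, hz, hyz⟩ := this
        simp only [Set.mem_iUnion, Set.mem_setOf_eq]
        refine ⟨z, hz, ?_⟩
        have := dist_triangle (x n) y z
        rw [dist_eq_norm (x n) y] at this
        linarith
      obtain ⟨y, -, hy⟩ := (Ultrafilter.finite_biUnion_mem_iff htf).1 hcov
      exact hfar y hy
    exact (((eventually_gt_atTop m).filter_mono hUtop).and hev).exists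
  choose g hg hgs using key
  let f : ℕ → ℕ := fun k => g^[k] 0
  have hfs : ∀ k, f (k + 1) = g (f k) := fun k => Function.iterate_succ_apply' g k 0
  have hf : StrictMono f := strictMono_nat_of_lt_succ fun k => by rw [hfs]; exact hg _
  obtain ⟨K, hK, H⟩ := aux_bound (𝕜 := 𝕜) (X := X) C δ hC0 hδ r
  have hinf : (Set.range fun k => f (k + 1)).Infinite :=
    Set.infinite_range_of_injective fun p q hpq => by
      have := hf.injective hpq
      omega
  obtain ⟨i, a, hi, hiM, ha, hle⟩ := h _ hinf (1 / (K + 1)) (by positivity)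
  have := H (fun ρ => x (i ρ)) (fun ρ => hC _) (fun ρ y hy => by
    obtain ⟨k, hk⟩ := hiM ρ
    have hk' : i ρ = g (f k) := by rw [← hfs]; exact hk.symm
    simp only [hk']
    refine hgs _ _ (Submodule.span_mono ?_ hy)
    rintro _ ⟨σ, hσ, rfl⟩
    refine ⟨i σ, ?_, rfl⟩
    obtain ⟨j, hj⟩ := hiM σ
    have hlt : i σ < i ρ := hi hσ
    rw [← hj, ← hk] at hlt
    have := hf.lt_iff_lt.1 hlt
    rw [← hj]
    exact hf.monotone (by omega)) a
  rw [ha] at this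
  have h2 : K * ‖∑ ρ, a ρ • x (i ρ)‖ ≤ K * (1 / (K + 1)) := mul_le_mul_of_nonneg_left hle hK
  have h3 : K * (1 / (K + 1)) < 1 := by
    rw [mul_one_div, div_lt_one (by positivity)]; linarith
  linarith
end

section
/- For $\ell = 0,1,2,\ldots$ and $\varepsilon_1,\ldots,\varepsilon_\ell \in \{0,1\}$ let $r_{\varepsilon_1\ldots\varepsilon_\ell}$ be real (or complex) numbers such that $|r_{\varepsilon_1\ldots\varepsilon_\ell}| \leq 2^{-\ell}$ and $r_{\varepsilon_1\ldots\varepsilon_\ell} = r_{\varepsilon_1\ldots\varepsilon_\ell 0} + r_{\varepsilon_1\ldots\varepsilon_\ell 1}$ for all $\ell$ and all $\varepsilon_1,\ldots,\varepsilon_\ell$. Define $\eta_\ell := \sum_{\varepsilon_1,\ldots,\varepsilon_\ell \in \{0,1\}} (r_{\varepsilon_1\ldots\varepsilon_\ell 0} - r_{\varepsilon_1\ldots\varepsilon_\ell 1})$. Then $\sum_\ell |\eta_\ell|^2 \leq 1$; in particular $\eta_\ell \to 0$. -/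
open Filter

theorem sum_snoc_bool (n : ℕ) (f : (Fin (n + 1) → Bool) → ℝ) :
    ∑ e, f e = ∑ e : Fin n → Bool, (f (Fin.snoc e false) + f (Fin.snoc e true)) := by
  rw [← (Fin.snocEquiv (fun _ : Fin (n + 1) => Bool)).sum_comp f, Fintype.sum_prod_type_right]
  refine Finset.sum_congr rfl fun e _ => ?_
  rw [Fintype.sum_bool, add_comm]
  rfl

/-- **A martingale difference lemma.** Given numbers `r_{ε₁…ε_ℓ}` indexed by
finite binary strings with `|r_{ε₁…ε_ℓ}| ≤ 2^{-ℓ}` and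
`r_{ε₁…ε_ℓ} = r_{ε₁…ε_ℓ0} + r_{ε₁…ε_ℓ1}`, the numbers
`η_ℓ := ∑_{ε₁…ε_ℓ} (r_{ε₁…ε_ℓ0} - r_{ε₁…ε_ℓ1})` satisfy `∑ |η_ℓ|² ≤ 1`;
in particular `η_ℓ → 0`. -/
theorem martingale_difference_lemma {𝕜 : Type*} [RCLike 𝕜]
    (r : (ℓ : ℕ) → (Fin ℓ → Bool) → 𝕜)
    (hbound : ∀ (ℓ : ℕ) (e : Fin ℓ → Bool), ‖r ℓ e‖ ≤ (1 / 2 : ℝ) ^ ℓ)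
    (hsplit : ∀ (ℓ : ℕ) (e : Fin ℓ → Bool),
      r ℓ e = r (ℓ + 1) (Fin.snoc e false) + r (ℓ + 1) (Fin.snoc e true)) :
    Summable (fun ℓ : ℕ =>
        ‖∑ e : Fin ℓ → Bool,
            (r (ℓ + 1) (Fin.snoc e false) - r (ℓ + 1) (Fin.snoc e true))‖ ^ 2) ∧
    (∑' ℓ : ℕ,
        ‖∑ e : Fin ℓ → Bool,
            (r (ℓ + 1) (Fin.snoc e false) - r (ℓ + 1) (Fin.snoc e true))‖ ^ 2) ≤ 1 ∧
    Tendsto (fun ℓ : ℕ =>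
        ∑ e : Fin ℓ → Bool,
          (r (ℓ + 1) (Fin.snoc e false) - r (ℓ + 1) (Fin.snoc e true)))
      atTop (nhds 0) := by
  have hstep : ∀ n : ℕ, ‖∑ e : Fin n → Bool,
      (r (n + 1) (Fin.snoc e false) - r (n + 1) (Fin.snoc e true))‖ ^ 2 ≤
      2 ^ (n + 1) * ∑ e, ‖r (n + 1) e‖ ^ 2 - 2 ^ n * ∑ e, ‖r n e‖ ^ 2 := by
    intro n
    have h1 : ‖∑ e : Fin n → Bool,
        (r (n + 1) (Fin.snoc e false) - r (n + 1) (Fin.snoc e true))‖ ^ 2 ≤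
        2 ^ n * ∑ e : Fin n → Bool,
          ‖r (n + 1) (Fin.snoc e false) - r (n + 1) (Fin.snoc e true)‖ ^ 2 := by
      refine (pow_le_pow_left₀ (norm_nonneg _) (norm_sum_le _ _) 2).trans ?_
      refine sq_sum_le_card_mul_sum_sq.trans (le_of_eq ?_)
      simp
    refine h1.trans (le_of_eq ?_)
    rw [sum_snoc_bool, pow_succ, mul_assoc, ← mul_sub]
    congr 1
    rw [Finset.mul_sum, ← Finset.sum_sub_distrib]
    refine Finset.sum_congr rfl fun e _ => ?_
    rw [hsplit n e]
    have := parallelogram_law_with_norm 𝕜 (r (n + 1) (Fin.snoc e false))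
      (r (n + 1) (Fin.snoc e true))
    linarith
  have hS : ∀ n : ℕ, 2 ^ n * ∑ e, ‖r n e‖ ^ 2 ≤ 1 := by
    intro n
    have : ∑ e, ‖r n e‖ ^ 2 ≤ ∑ _e : Fin n → Bool, ((1 / 2 : ℝ) ^ n) ^ 2 :=
      Finset.sum_le_sum fun e _ => pow_le_pow_left₀ (norm_nonneg _) (hbound n e) 2
    refine (mul_le_mul_of_nonneg_left this (by positivity)).trans (le_of_eq ?_)
    simp
    field_simp
  have hpart : ∀ n : ℕ, ∑ l ∈ Finset.range n, ‖∑ e : Fin l → Bool,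
      (r (l + 1) (Fin.snoc e false) - r (l + 1) (Fin.snoc e true))‖ ^ 2 ≤ 1 := by
    intro n
    refine (Finset.sum_le_sum fun l _ => hstep l).trans ?_
    rw [Finset.sum_range_sub (fun n => 2 ^ n * ∑ e, ‖r n e‖ ^ 2)]
    have h0 : 0 ≤ (2 : ℝ) ^ 0 * ∑ e, ‖r 0 e‖ ^ 2 := by positivity
    linarith [hS n]
  have hsum := summable_of_sum_range_le (fun _ => by positivity) hpart
  refine ⟨hsum, Real.tsum_le_of_sum_range_le (fun _ => by positivity) hpart, ?_⟩
  rw [tendsto_zero_iff_norm_tendsto_zero]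
  have h := hsum.tendsto_atTop_zero.sqrt
  simpa only [Real.sqrt_sq (norm_nonneg _), Real.sqrt_zero] using h
end

section
/- Let $L$ be a Banach limit on $\ell^\infty$. For $\ell \in \mathbb{N}$ and $\varepsilon_1,\ldots,\varepsilon_\ell \in \{0,1\}$ let $\mu_{\varepsilon_1\ldots\varepsilon_\ell} \in \ell^\infty$ be the $0$-$1$ sequence which equals $1$ exactly at the positions $k \cdot 2^\ell + 1 + \varepsilon_1 2^0 + \cdots + \varepsilon_\ell 2^{\ell-1}$ for $k = 0,1,2,\ldots$, and $0$ otherwise. Then for every $x \in \ell^\infty$ with $\|x\|_\infty \leq 1$, denoting by $\mu_{\varepsilon_1\ldots\varepsilon_\ell}\, x$ the pointwise product, one has $|L(\mu_{\varepsilon_1\ldots\varepsilon_\ell}\, x)| \leq 2^{-\ell}$. -/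
open scoped ENNReal

/-- For a Banach limit `L` on `ℓ^∞` (a norm-one shift-invariant functional with
`L(1,1,…) = 1`), for the 0-1 sequence `μ_{ε₁…ε_ℓ}` which is `1` exactly at the
positions `k·2^ℓ + 1 + ε₁2⁰ + ⋯ + ε_ℓ2^{ℓ-1}` (positions counted from 1, i.e.
at the 0-based indices `m` with `m % 2^ℓ = ε₁2⁰ + ⋯ + ε_ℓ2^{ℓ-1}`), and for
every `x ∈ ℓ^∞` with `‖x‖ ≤ 1`, the pointwise product satisfies
`|L(μ_{ε₁…ε_ℓ} x)| ≤ 2^{-ℓ}`. -/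
theorem banachLimit_mu_bound
    (L : lp (fun _ : ℕ => ℝ) ∞ →L[ℝ] ℝ)
    (hL1 : L 1 = 1) (hLnorm : ‖L‖ = 1)
    (hshift : ∀ u v : lp (fun _ : ℕ => ℝ) ∞, (∀ n, v n = u (n + 1)) → L v = L u)
    (ℓ : ℕ) (e : Fin ℓ → Bool)
    (x : lp (fun _ : ℕ => ℝ) ∞) (hx : ‖x‖ ≤ 1)
    (y : lp (fun _ : ℕ => ℝ) ∞)
    (hy : ∀ m : ℕ,
      y m = (if m % 2 ^ ℓ = ∑ j : Fin ℓ, (if e j then 2 ^ (j : ℕ) else 0)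
        then (1 : ℝ) else 0) * x m) :
    |L y| ≤ (1 / 2 : ℝ) ^ ℓ := by
  set r : ℕ := ∑ j : Fin ℓ, (if e j then 2 ^ (j : ℕ) else 0) with hr
  have hx' : ∀ m, |x m| ≤ 1 := fun m => by
    have h := lp.norm_apply_le_norm (by simp) x m
    rw [Real.norm_eq_abs] at h
    exact h.trans hx
  have hy' : ∀ m, |y m| ≤ if m % 2 ^ ℓ = r then (1 : ℝ) else 0 := fun m => by
    rw [hy m]
    split_ifs
    · simpa using hx' m
    · simp
  have hmem : ∀ i : ℕ, Memℓp (E := fun _ : ℕ => ℝ) (fun n => y (n + i)) ∞ := fun i => by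
    apply memℓp_infty
    refine ⟨1, ?_⟩
    rintro _ ⟨n, rfl⟩
    have h := hy' (n + i)
    simp only [Real.norm_eq_abs]
    split_ifs at h <;> linarith
  let v : ℕ → lp (fun _ : ℕ => ℝ) ∞ := fun i => ⟨fun n => y (n + i), hmem i⟩
  have hv : ∀ i n, v i n = y (n + i) := fun _ _ => rfl
  have hLv : ∀ i, L (v i) = L y := by
    intro i
    induction i with
    | zero => 
      congr 1
    | succ i ih =>
      rw [← ih]
      apply hshift
      intro n
      have h : n + (i + 1) = n + 1 + i := by omega
      rw [hv, hv, h]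
  have hs : ‖∑ i ∈ Finset.range (2 ^ ℓ), v i‖ ≤ 1 := by
    apply lp.norm_le_of_forall_le zero_le_one
    intro n
    rw [lp.coeFn_sum, Finset.sum_apply, Real.norm_eq_abs]
    refine (Finset.abs_sum_le_sum_abs _ _).trans ?_
    have h1 : ∀ i ∈ Finset.range (2 ^ ℓ),
        |v i n| ≤ if (n + i) % 2 ^ ℓ = r then (1 : ℝ) else 0 := fun i _ => hy' (n + i)
    refine (Finset.sum_le_sum h1).trans ?_
    rw [Finset.sum_boole]
    have : (Finset.filter (fun i => (n + i) % 2 ^ ℓ = r) (Finset.range (2 ^ ℓ))).card ≤ 1 := by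
      rw [Finset.card_le_one]
      intro a ha b hb
      simp only [Finset.mem_filter, Finset.mem_range] at ha hb
      have h : n + a ≡ n + b [MOD 2 ^ ℓ] := ha.2.trans hb.2.symm
      exact (Nat.ModEq.add_left_cancel' n h).eq_of_lt_of_lt ha.1 hb.1
    exact_mod_cast this
  have hb := L.le_opNorm (∑ i ∈ Finset.range (2 ^ ℓ), v i)
  rw [map_sum, Finset.sum_congr rfl (fun i _ => hLv i), hLnorm, one_mul] at hb
  have hb2 := hb.trans hs
  simp only [Finset.sum_const, Finset.card_range, nsmul_eq_mul, Real.norm_eq_abs, abs_mul] at hb2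
  push_cast at hb2
  rw [abs_of_pos (by positivity : (0 : ℝ) < 2 ^ ℓ)] at hb2
  rw [one_div, inv_pow, ← one_div, le_div_iff₀ (by positivity)]
  linarith
end

section
/- Let $L$ be a Banach limit on $\ell^\infty$, and for $\ell \in \mathbb{N}$ let $\lambda_\ell \in \ell^\infty$ be the $\pm 1$ sequence whose $n$-th entry is $+1$ if $\lceil n/2^{\ell-1} \rceil$ is odd and $-1$ if it is even (so $\lambda_1 = (1,-1,1,-1,\ldots)$, $\lambda_2 = (1,1,-1,-1,\ldots)$, etc.). Then for every $x \in \ell^\infty$ with $\|x\|_\infty \leq 1$, denoting by $\lambda_\ell\, x$ the pointwise product, one has $\sum_{\ell=1}^\infty |L(\lambda_\ell\, x)|^2 \leq 1$; in particular $L(\lambda_\ell\, x) \to 0$ as $\ell \to \infty$. -/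
open scoped ENNReal

open Filter

theorem bl_pos (L : lp (fun _ : ℕ => ℝ) ∞ →L[ℝ] ℝ)
    (hL1 : L 1 = 1) (hLnorm : ‖L‖ = 1) (u : lp (fun _ : ℕ => ℝ) ∞)
    (hu : ∀ n, 0 ≤ u n) : 0 ≤ L u := by
  have h1 : ‖(‖u‖ • (1 : lp (fun _ : ℕ => ℝ) ∞) - u)‖ ≤ ‖u‖ := by
    refine lp.norm_le_of_forall_le (norm_nonneg _) fun n => ?_
    have h2 := lp.norm_apply_le_norm (by simp) u n
    have h3 := hu n
    have h4 : (‖u‖ • (1 : lp (fun _ : ℕ => ℝ) ∞) - u) n = ‖u‖ - u n := by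
      change ‖u‖ * 1 - u n = _
      rw [mul_one]
    rw [h4]
    rw [Real.norm_eq_abs] at h2 ⊢
    rw [abs_le] at h2 ⊢
    constructor <;> linarith
  have h5 := L.le_opNorm (‖u‖ • (1 : lp (fun _ : ℕ => ℝ) ∞) - u)
  rw [hLnorm, one_mul, map_sub, map_smul, hL1, Real.norm_eq_abs] at h5
  have h6 := le_abs_self (‖u‖ • (1 : ℝ) - L u)
  rw [smul_eq_mul, mul_one] at *
  linarith

theorem bl_shift (L : lp (fun _ : ℕ => ℝ) ∞ →L[ℝ] ℝ)
    (hshift : ∀ u v : lp (fun _ : ℕ => ℝ) ∞, (∀ n, v n = u (n + 1)) → L v = L u)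
    (k : ℕ) : ∀ u v : lp (fun _ : ℕ => ℝ) ∞, (∀ n, v n = u (n + k)) → L v = L u := by
  induction k with
  | zero =>
    intro u v h
    have : v = u := by ext n; simpa using h n
    rw [this]
  | succ k ih =>
    intro u v h
    have hm : Memℓp (fun n => u (n + 1)) ∞ := by
      refine memℓp_infty ⟨‖u‖, ?_⟩
      rintro _ ⟨n, rfl⟩
      exact lp.norm_apply_le_norm (by simp) u (n + 1)
    let w : lp (fun _ : ℕ => ℝ) ∞ := ⟨fun n => u (n + 1), hm⟩
    rw [← hshift u w fun n => rfl]
    refine ih w v fun n => ?_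
    rw [h n]
    rfl

/-- The sign of the Rademacher-like sequence. -/
def blSgn (i m : ℕ) : ℝ := if (m / 2 ^ i) % 2 = 0 then (1 : ℝ) else -1

theorem blSgn_sq (i m : ℕ) : blSgn i m * blSgn i m = 1 := by
  unfold blSgn; split_ifs <;> norm_num

theorem blSgn_shift_self (i m : ℕ) : blSgn i (m + 2 ^ i) = - blSgn i m := by
  unfold blSgn
  rw [Nat.add_div_right _ (by positivity)]
  rcases Nat.mod_two_eq_zero_or_one (m / 2 ^ i) with h | h
  · have : (m / 2 ^ i + 1) % 2 = 1 := by omega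
    simp [h, this]
  · have : (m / 2 ^ i + 1) % 2 = 0 := by omega
    simp [h, this]

theorem blSgn_shift_lt (i j m : ℕ) (h : i < j) : blSgn i (m + 2 ^ j) = blSgn i m := by
  unfold blSgn
  obtain ⟨d, rfl⟩ := Nat.exists_eq_add_of_lt h
  have : 2 ^ (i + d + 1) = 2 ^ i * (2 * 2 ^ d) := by ring
  rw [this, Nat.add_mul_div_left _ _ (by positivity), Nat.add_mul_mod_self_left]

/-- The Rademacher-like sequence. -/
noncomputable def blR (i : ℕ) : lp (fun _ : ℕ => ℝ) ∞ :=
  ⟨fun m => blSgn i m, by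
    refine memℓp_infty ⟨1, ?_⟩
    rintro _ ⟨n, rfl⟩
    simp only [blSgn]
    split_ifs <;> simp⟩

theorem blR_apply (i m : ℕ) : blR i m = blSgn i m := rfl

theorem bl_orth_lt (L : lp (fun _ : ℕ => ℝ) ∞ →L[ℝ] ℝ)
    (hshift : ∀ u v : lp (fun _ : ℕ => ℝ) ∞, (∀ n, v n = u (n + 1)) → L v = L u)
    (i j : ℕ) (h : i < j) : L (blR i * blR j) = 0 := by
  have := bl_shift L hshift (2 ^ j) (blR i * blR j) (-(blR i * blR j)) fun n => by
    change -(blSgn i n * blSgn j n) = blSgn i (n + 2 ^ j) * blSgn j (n + 2 ^ j)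
    rw [blSgn_shift_self, blSgn_shift_lt i j n h, mul_neg]
  rw [map_neg] at this
  linarith

theorem bl_orth (L : lp (fun _ : ℕ => ℝ) ∞ →L[ℝ] ℝ) (hL1 : L 1 = 1)
    (hshift : ∀ u v : lp (fun _ : ℕ => ℝ) ∞, (∀ n, v n = u (n + 1)) → L v = L u)
    (i j : ℕ) : L (blR i * blR j) = if i = j then 1 else 0 := by
  split_ifs with h
  · subst h
    have : blR i * blR i = 1 := by
      ext n
      simp [lp.infty_coeFn_mul, blR_apply, blSgn_sq, lp.infty_coeFn_one]
    rw [this, hL1]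
  · rcases lt_or_gt_of_ne h with h | h
    · exact bl_orth_lt L hshift i j h
    · rw [mul_comm]; exact bl_orth_lt L hshift j i h

/-- For a Banach limit `L` on `ℓ^∞` and the Rademacher-like `±1` sequences
`λ_ℓ` (`λ₁ = (1,-1,1,-1,…)`, `λ₂ = (1,1,-1,-1,…)`, …; the `n`-th entry of
`λ_ℓ` is `+1` iff `⌈n/2^{ℓ-1}⌉` is odd, i.e. the 0-based entry at `m` of
`λ_{ℓ+1}` is `+1` iff `(m / 2^ℓ) % 2 = 0`), and every `x ∈ ℓ^∞` with
`‖x‖ ≤ 1`, one has `∑_{ℓ=1}^∞ |L(λ_ℓ x)|² ≤ 1`; in particular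
`L(λ_ℓ x) → 0`.  Here `lam ℓ` denotes the pointwise product `λ_{ℓ+1}·x`. -/
theorem banachLimit_rademacher_sq_summable
    (L : lp (fun _ : ℕ => ℝ) ∞ →L[ℝ] ℝ)
    (hL1 : L 1 = 1) (hLnorm : ‖L‖ = 1)
    (hshift : ∀ u v : lp (fun _ : ℕ => ℝ) ∞, (∀ n, v n = u (n + 1)) → L v = L u)
    (x : lp (fun _ : ℕ => ℝ) ∞) (hx : ‖x‖ ≤ 1)
    (lam : ℕ → lp (fun _ : ℕ => ℝ) ∞)
    (hlam : ∀ (ℓ : ℕ) (m : ℕ),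
      (lam ℓ) m = (if (m / 2 ^ ℓ) % 2 = 0 then (1 : ℝ) else -1) * x m) :
    Summable (fun ℓ : ℕ => |L (lam ℓ)| ^ 2) ∧
    (∑' ℓ : ℕ, |L (lam ℓ)| ^ 2) ≤ 1 ∧
    Tendsto (fun ℓ : ℕ => L (lam ℓ)) atTop (nhds 0) := by
  have hxx : L (x * x) ≤ 1 := by
    have h1 := L.le_opNorm (x * x)
    rw [hLnorm, one_mul] at h1
    have h2 := norm_mul_le x x
    have h3 := le_abs_self (L (x * x))
    rw [Real.norm_eq_abs] at h1
    nlinarith [norm_nonneg x]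
  have hl : ∀ i, blR i * x = lam i := fun i => by
    ext m
    rw [hlam, lp.infty_coeFn_mul]
    rfl
  have key : ∀ s : Finset ℕ, ∑ i ∈ s, |L (lam i)| ^ 2 ≤ 1 := by
    intro s
    set y : lp (fun _ : ℕ => ℝ) ∞ := ∑ i ∈ s, L (lam i) • blR i with hy
    have hpos : 0 ≤ L ((y - x) * (y - x)) := bl_pos L hL1 hLnorm _ fun n => by
      rw [lp.infty_coeFn_mul]
      exact mul_self_nonneg _
    have e : (y - x) * (y - x) = y * y - (2 : ℝ) • (y * x) + x * x := by
      rw [two_smul]; ring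
    have hyx : L (y * x) = ∑ i ∈ s, |L (lam i)| ^ 2 := by
      rw [hy, Finset.sum_mul, map_sum]
      refine Finset.sum_congr rfl fun i _ => ?_
      rw [smul_mul_assoc, hl, map_smul, smul_eq_mul, sq_abs, sq]
    have hyy : L (y * y) = ∑ i ∈ s, |L (lam i)| ^ 2 := by
      rw [hy, Finset.sum_mul_sum, map_sum]
      refine Finset.sum_congr rfl fun i hi => ?_
      rw [map_sum]
      simp only [smul_mul_smul_comm, map_smul, bl_orth L hL1 hshift, smul_eq_mul, sq_abs]
      simp [hi, sq]
    rw [e, map_add, map_sub, map_smul, hyx, hyy, smul_eq_mul] at hpos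
    linarith
  have hs : Summable (fun ℓ : ℕ => |L (lam ℓ)| ^ 2) :=
    summable_of_sum_le (fun i => by positivity) key
  refine ⟨hs, hs.tsum_le_of_sum_le key, ?_⟩
  have h0 := hs.tendsto_atTop_zero
  have h1 := h0.sqrt
  simp only [sq_abs, Real.sqrt_sq_eq_abs, Real.sqrt_zero] at h1
  exact (tendsto_zero_iff_abs_tendsto_zero _).2 h1
end

section
/- Let $X$ be an infinite-dimensional Banach space. Then there exist $x'_1, x'_2, \ldots$ in the dual $X'$ with $\|x'_n\| = 1$ for all $n$ such that $x'_n \to 0$ in the weak* topology, i.e. $x'_n(x) \to 0$ for every $x \in X$. -/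
open Filter

/-- game acceptance -/
def JNAcc (F : List ℕ → Prop) (l : List ℕ) : Prop :=
  ∃ D : List ℕ → Set ℕ, (∀ k, D k ∈ hyperfilter ℕ) ∧
    ∀ N : ℕ → ℕ, (∀ i, N i ∈ D ((List.range i).map N)) → ∃ i, F (l ++ (List.range i).map N)

lemma JNAcc.of_F {F : List ℕ → Prop} {l : List ℕ} (h : F l) : JNAcc F l :=
  ⟨fun _ => Set.univ, fun _ => univ_mem, fun N _ => ⟨0, by simpa using h⟩⟩

lemma JNAcc.of_eventually {F : List ℕ → Prop} {l : List ℕ}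
    (h : ∀ᶠ n in (hyperfilter ℕ : Filter ℕ), JNAcc F (l ++ [n])) : JNAcc F l := by
  classical
  choose! D hD using fun (n : ℕ) (hn : JNAcc F (l ++ [n])) => hn
  let E : List ℕ → Set ℕ := fun k => match k with
    | [] => {n | JNAcc F (l ++ [n])}
    | n :: k => if JNAcc F (l ++ [n]) then D n k else Set.univ
  refine ⟨E, ?_, ?_⟩
  · rintro (_ | ⟨n, k⟩)
    · exact h
    · by_cases hn : JNAcc F (l ++ [n])
      · simpa [E, hn] using (hD n hn).1 k
      · simp only [E, hn, if_false]; exact univ_mem (f := (hyperfilter ℕ : Filter ℕ))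
  · intro N hN
    have h0 : JNAcc F (l ++ [N 0]) := by simpa [E] using hN 0
    obtain ⟨i, hi⟩ := (hD _ h0).2 (fun i => N (i + 1)) (fun i => by
      have := hN (i + 1)
      rw [List.range_succ_eq_map] at this
      simpa [E, h0, Function.comp_def] using this)
    refine ⟨i + 1, ?_⟩
    rw [List.range_succ_eq_map]
    simpa [Function.comp_def] using hi

/-- initial lists -/
def JNpre (g : List ℕ → ℕ) : ℕ → List ℕ
  | 0 => []
  | j + 1 => JNpre g j ++ [g (JNpre g j)]

lemma JN_build (D : ℕ → List ℕ → Set ℕ) (hD : ∀ i l, D i l ∈ hyperfilter ℕ) :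
    ∃ m : ℕ → ℕ, StrictMono m ∧ ∀ φ : ℕ → ℕ, StrictMono φ → ∀ i, i ≤ φ 0 → ∀ j,
      m (φ j) ∈ D i ((List.range j).map (fun t => m (φ t))) := by
  have key : ∀ p : List ℕ, ∃ n, (∀ i ≤ p.length, ∀ l ∈ p.sublists, n ∈ D i l) ∧ ∀ q ∈ p, q < n := by
    intro p
    have h1 : ∀ᶠ n in (hyperfilter ℕ : Filter ℕ), ∀ i ∈ Finset.range (p.length + 1),
        ∀ l ∈ p.sublists.toFinset, n ∈ D i l := by
      rw [Filter.eventually_all_finset]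
      intro i _
      rw [Filter.eventually_all_finset]
      exact fun l _ => hD i l
    have h2 : ∀ᶠ n in (hyperfilter ℕ : Filter ℕ), ∀ q ∈ p.toFinset, q < n := by
      rw [Filter.eventually_all_finset]
      intro q _
      have := Filter.eventually_gt_atTop q
      rw [← Nat.cofinite_eq_atTop] at this
      exact hyperfilter_le_cofinite this
    obtain ⟨n, h1, h2⟩ := (h1.and h2).exists
    exact ⟨n, fun i hi l hl => h1 i (by simpa using Nat.lt_succ_of_le hi) l (by simpa using hl),
      fun q hq => h2 q (by simpa using hq)⟩
  choose g hg hg' using key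
  have hpre : ∀ j, JNpre g j = (List.range j).map (fun t => g (JNpre g t)) := by
    intro j
    induction j with
    | zero => rfl
    | succ j ih =>
      rw [List.range_succ, List.map_append, ← ih]; rfl
  refine ⟨fun j => g (JNpre g j), ?_, ?_⟩
  · apply strictMono_nat_of_lt_succ
    intro j
    apply hg'
    rw [JNpre]; simp
  · intro φ hφ i hi j
    apply hg
    · rw [hpre]; simp
      exact hi.trans (hφ.monotone (Nat.zero_le j))
    · rw [List.mem_sublists]
      induction j with
      | zero => simp
      | succ j ih =>
        rw [List.range_succ, List.map_append]
        have h1 := List.Sublist.append ih (List.Sublist.refl [g (JNpre g (φ j))])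
        have h2 : (JNpre g (φ j) ++ [g (JNpre g (φ j))]).Sublist (JNpre g (φ (j+1))) := by
          change (JNpre g (φ j + 1)).Sublist _
          rw [hpre, hpre (φ (j+1))]
          apply List.Sublist.map
          exact List.range_sublist.2 (hφ (Nat.lt_succ_self j))
        exact h1.trans h2

lemma JN_dichotomy (F : ℕ → List ℕ → Prop) :
    (∃ m : ℕ → ℕ, StrictMono m ∧ ∀ i, ∀ φ : ℕ → ℕ, StrictMono φ → i ≤ φ 0 →
      ∃ j, F i ((List.range j).map (fun t => m (φ t)))) ∨
    (∃ i, ∃ m : ℕ → ℕ, StrictMono m ∧ ∀ φ : ℕ → ℕ, StrictMono φ → ∀ j,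
      ¬ F i ((List.range j).map (fun t => m (φ t)))) := by
  by_cases h : ∀ i, JNAcc (F i) []
  · left
    choose D hD hF using h
    obtain ⟨m, hm, hc⟩ := JN_build D hD
    refine ⟨m, hm, fun i φ hφ hi => ?_⟩
    simpa using hF i (fun t => m (φ t)) (hc φ hφ i hi)
  · right
    push Not at h
    obtain ⟨i, hi⟩ := h
    obtain ⟨m, hm, hc⟩ := JN_build (fun _ l => {n | ¬ JNAcc (F i) l → ¬ JNAcc (F i) (l ++ [n])})
      (fun _ l => by
        by_cases hl : JNAcc (F i) l
        · simp only [hl, not_true, false_imp_iff]; exact univ_mem (f := (hyperfilter ℕ : Filter ℕ))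
        · have := mt JNAcc.of_eventually hl
          rw [← Ultrafilter.eventually_not] at this
          filter_upwards [this] with n hn _ using hn)
    refine ⟨i, m, hm, fun φ hφ j => ?_⟩
    have : ∀ j, ¬ JNAcc (F i) ((List.range j).map (fun t => m (φ t))) := by
      intro j
      induction j with
      | zero => simpa using hi
      | succ j ih =>
        rw [List.range_succ, List.map_append]
        exact hc φ hφ 0 (Nat.zero_le _) j ih
    exact fun hF => this j (JNAcc.of_F hF)

/-- weak* null sequence bounded below -/
def JNWN (X : Type*) [NormedAddCommGroup X] [NormedSpace ℝ X] : Prop :=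
  ∃ z : ℕ → X →L[ℝ] ℝ, ∃ c > 0, (∀ n, c ≤ ‖z n‖) ∧ ∀ x, Tendsto (fun n => z n x) atTop (nhds 0)

/-- scale -/
lemma JN_scale {X : Type*} [NormedAddCommGroup X] [NormedSpace ℝ X] (x : X) :
    ∃ x' : X, ∃ t : ℝ, ‖x'‖ ≤ 1 ∧ x = t • x' := by
  refine ⟨(‖x‖ + 1)⁻¹ • x, ‖x‖ + 1, ?_, ?_⟩
  · rw [norm_smul, Real.norm_of_nonneg (by positivity), inv_mul_le_iff₀ (by positivity)]
    linarith
  · rw [smul_smul, mul_inv_cancel₀ (by positivity), one_smul]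

lemma JN_indep {X : Type*} [NormedAddCommGroup X] [NormedSpace ℝ X] (y : ℕ → X →L[ℝ] ℝ)
    (r s : ℝ) 
    (hy : ∀ φ : ℕ → ℕ, StrictMono φ → ∀ j, ∃ x : X, ‖x‖ ≤ 1 ∧ ∀ t < j,
      if t % 2 = 0 then s < y (φ t) x else y (φ t) x < r) (a : ℕ →₀ ℝ) :
    (s - r) / 2 * ∑ i ∈ a.support, |a i| ≤
      ‖Finsupp.linearCombination ℝ (fun i => y (3 * i + 1)) a‖ := by
  have key : ∀ ε : ℕ → Bool, ∃ x : X, ‖x‖ ≤ 1 ∧ ∀ i ∈ a.support,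
      if ε i then s < y (3 * i + 1) x else y (3 * i + 1) x < r := by
    intro ε
    obtain ⟨k, hk⟩ : ∃ k, ∀ i ∈ a.support, i < k :=
      ⟨a.support.sup id + 1, fun i hi => Nat.lt_succ_of_le (Finset.le_sup (f := id) hi)⟩
    obtain ⟨x, hx, h⟩ := hy (fun j => 3 * (j / 2) + j % 2 + if ε (j / 2) then 1 else 0) (by
      apply strictMono_nat_of_lt_succ
      intro j
      rcases Nat.even_or_odd' j with ⟨q, rfl | rfl⟩
      · have h1 : (2 * q + 1) / 2 = q := by omega
        have h2 : (2 * q) / 2 = q := by omega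
        simp only [h1, h2]
        omega
      · have h1 : (2 * q + 1 + 1) / 2 = q + 1 := by omega
        have h2 : (2 * q + 1) / 2 = q := by omega
        simp only [h1, h2]
        split_ifs <;> omega) (2 * k)
    refine ⟨x, hx, fun i hi => ?_⟩
    have hik := hk i hi
    have h0 := h (2 * i) (by omega)
    have h1 := h (2 * i + 1) (by omega)
    have e1 : (2 * i + 1) / 2 = i := by omega
    have e2 : (2 * i) / 2 = i := by omega
    have e3 : (2 * i) % 2 = 0 := by omega
    have e4 : (2 * i + 1) % 2 = 1 := by omega
    simp only [e1, e2, e3, e4] at h0 h1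
    cases hε : ε i <;> simp [hε] at h0 h1 ⊢ <;> assumption
  obtain ⟨x, hx, h1⟩ := key (fun i => decide (0 ≤ a i))
  obtain ⟨x', hx', h2⟩ := key (fun i => decide (¬ 0 ≤ a i))
  set f := Finsupp.linearCombination ℝ (fun i => y (3 * i + 1)) a with hf
  have hfa : ∀ z, f z = ∑ i ∈ a.support, a i * y (3 * i + 1) z := by
    intro z
    simp [hf, Finsupp.linearCombination_apply, Finsupp.sum]
  have h3 : (s - r) * ∑ i ∈ a.support, |a i| ≤ f (x - x') := by
    rw [hfa, Finset.mul_sum]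
    apply Finset.sum_le_sum
    intro i hi
    have h1 := h1 i hi
    have h2 := h2 i hi
    rw [map_sub]
    by_cases h : 0 ≤ a i
    · simp only [h, decide_true, if_true, not_true, decide_false] at h1 h2
      rw [abs_of_nonneg h]
      simp at h2
      nlinarith
    · simp only [h, decide_true, not_false_iff, if_true, decide_false] at h1 h2
      rw [abs_of_neg (not_le.1 h)]
      simp at h1
      nlinarith
  have h4 : f (x - x') ≤ ‖f‖ * 2 := by
    refine (le_abs_self _).trans ((f.le_opNorm _).trans ?_)
    gcongr
    exact (norm_sub_le _ _).trans (by linarith)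
  linarith

lemma JN_rosenthal {X : Type*} [NormedAddCommGroup X] [NormedSpace ℝ X] (y : ℕ → X →L[ℝ] ℝ)
    (R : ℝ) (hR : ∀ n, ‖y n‖ ≤ R) (hsep : ∀ m n, m ≠ n → 1 ≤ ‖y m - y n‖) :
    JNWN X ∨ ∃ u : ℕ → X →L[ℝ] ℝ, ∃ c > 0, (∀ n, ‖u n‖ ≤ R) ∧ ∀ a : ℕ →₀ ℝ,
      c * ∑ i ∈ a.support, |a i| ≤ ‖Finsupp.linearCombination ℝ u a‖ := by
  obtain ⟨e, he⟩ := exists_surjective_nat (ℚ × ℚ)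
  rcases JN_dichotomy (fun i l => (e i).1 < (e i).2 → ¬ ∃ x : X, ‖x‖ ≤ 1 ∧
    ∀ t n, l[t]? = some n → if t % 2 = 0 then ((e i).2 : ℝ) < y n x else y n x < ((e i).1 : ℝ))
    with ⟨m, hm, h⟩ | ⟨i, m, hm, h⟩
  · left
    have conv1 : ∀ x : X, ‖x‖ ≤ 1 → ∃ c, Tendsto (fun j => y (m j) x) atTop (nhds c) := by
      intro x hx
      have hb : ∀ j, |y (m j) x| ≤ R := fun j => by
        have := (y (m j)).le_of_opNorm_le (hR _) x
        have hR0 := (norm_nonneg _).trans (hR 0)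
        exact this.trans (by nlinarith)
      refine tendsto_of_no_upcrossings (s := Set.range ((↑) : ℚ → ℝ)) Rat.denseRange_cast ?_ ?_ ?_
      · rintro _ ⟨a, rfl⟩ _ ⟨b, rfl⟩ hab ⟨h1, h2⟩
        obtain ⟨i, hi⟩ := he (a, b)
        obtain ⟨φ, hφ, hP⟩ := extraction_forall_of_frequently
          (P := fun t k => i ≤ k ∧ if t % 2 = 0 then (b : ℝ) < y (m k) x else y (m k) x < (a : ℝ))
          (fun t => by
            split_ifs
            · exact (h2.and_eventually (eventually_ge_atTop i)).mono fun _ h => h.symm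
            · exact (h1.and_eventually (eventually_ge_atTop i)).mono fun _ h => h.symm)
        obtain ⟨j, hj⟩ := h i φ hφ (hP 0).1
        rw [hi] at hj
        apply hj (by exact_mod_cast hab)
        refine ⟨x, hx, fun t n htn => ?_⟩
        rw [List.getElem?_map, Option.map_eq_some_iff] at htn
        obtain ⟨w, hw, rfl⟩ := htn
        obtain ⟨_, rfl⟩ := List.getElem?_eq_some_iff.1 hw
        simp only [List.getElem_range]
        exact (hP t).2
      · exact isBoundedUnder_of ⟨R, fun j => (abs_le.1 (hb j)).2⟩
      · exact isBoundedUnder_of ⟨-R, fun j => (abs_le.1 (hb j)).1⟩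
    refine ⟨fun j => y (m (j + 1)) - y (m j), 1, one_pos, fun n => hsep _ _ ?_, fun x => ?_⟩
    · exact (hm (Nat.lt_succ_self n)).ne'
    · obtain ⟨x', t, hx', rfl⟩ := JN_scale x
      obtain ⟨c, hc⟩ := conv1 x' hx'
      have h1 := (((tendsto_add_atTop_iff_nat 1).2 hc).sub hc).const_mul t
      simpa [mul_sub] using h1
  · right
    have hrs : (e i).1 < (e i).2 := by
      by_contra hn
      exact h id strictMono_id 0 (fun h' => absurd h' hn)
    have hrs' : ((e i).1 : ℝ) < (e i).2 := by exact_mod_cast hrs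
    refine ⟨fun i => y (m (3 * i + 1)), (((e i).2 : ℝ) - (e i).1) / 2, by linarith,
      fun n => hR _, JN_indep (fun j => y (m j)) _ _ ?_⟩
    intro φ hφ j
    have := h φ hφ j
    push Not at this
    obtain ⟨_, x, hx, hh⟩ := this
    exact ⟨x, hx, fun t ht => hh t _ (by simp [ht])⟩

/-- sign -/
def JNsg (b : Bool) : ℝ := if b then 1 else -1

lemma JNsg_sq (b : Bool) : JNsg b * JNsg b = 1 := by cases b <;> simp [JNsg]

lemma JNsg_not (b : Bool) : JNsg (!b) = - JNsg b := by cases b <;> simp [JNsg]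

lemma JNsg_abs (b : Bool) : |JNsg b| = 1 := by cases b <;> simp [JNsg]

lemma JN_orth (n : ℕ) (k l : Fin n) :
    ∑ b : Fin n → Bool, JNsg (b k) * JNsg (b l) = if k = l then 2 ^ n else 0 := by
  split_ifs with h
  · subst h
    simp [JNsg_sq]
  · have h1 : ∑ b : Fin n → Bool, JNsg (b k) * JNsg (b l) =
        ∑ b : Fin n → Bool, - (JNsg (b k) * JNsg (b l)) := by
      refine Fintype.sum_bijective (fun b : Fin n → Bool => Function.update b k (!(b k))) ?_ _ _ ?_
      · apply Function.Involutive.bijective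
        intro b
        simp
      · intro b
        simp [Function.update_of_ne (Ne.symm h), JNsg_not]
    rw [Finset.sum_neg_distrib] at h1
    linarith

lemma JN_bessel (n : ℕ) (h : (Fin n → Bool) → ℝ) :
    ∑ k : Fin n, (((2 : ℝ) ^ n)⁻¹ * ∑ b, JNsg (b k) * h b) ^ 2 ≤ ((2 : ℝ) ^ n)⁻¹ * ∑ b, h b ^ 2 := by
  set M : ℝ := 2 ^ n with hM
  have hM0 : 0 < M := by positivity
  set c : Fin n → ℝ := fun k => M⁻¹ * ∑ b, JNsg (b k) * h b with hc
  have hc' : ∀ k, ∑ b, JNsg (b k) * h b = M * c k := fun k => by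
    simp only [hc]; field_simp
  have h0 : 0 ≤ ∑ b, (h b - ∑ k, c k * JNsg (b k)) ^ 2 := Finset.sum_nonneg fun _ _ => sq_nonneg _
  have h1 : ∑ b, h b * ∑ k, c k * JNsg (b k) = M * ∑ k, c k ^ 2 := by
    simp_rw [Finset.mul_sum]
    rw [Finset.sum_comm]
    refine Finset.sum_congr rfl fun k _ => ?_
    calc _ = c k * ∑ b, JNsg (b k) * h b := by
            rw [Finset.mul_sum]; exact Finset.sum_congr rfl fun _ _ => by ring
      _ = _ := by rw [hc']; ring
  have h2 : ∑ b : Fin n → Bool, (∑ k, c k * JNsg (b k)) ^ 2 = M * ∑ k, c k ^ 2 := by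
    simp_rw [sq, Finset.sum_mul_sum]
    rw [Finset.sum_comm, Finset.mul_sum]
    refine Finset.sum_congr rfl fun k _ => ?_
    rw [Finset.sum_comm]
    calc _ = ∑ l, c k * c l * ∑ b : Fin n → Bool, JNsg (b k) * JNsg (b l) := by
            refine Finset.sum_congr rfl fun l _ => ?_
            rw [Finset.mul_sum]; exact Finset.sum_congr rfl fun _ _ => by ring
      _ = _ := by simp [JN_orth]; ring
  have h3 : ∑ b, (h b - ∑ k, c k * JNsg (b k)) ^ 2 = ∑ b, h b ^ 2 - M * ∑ k, c k ^ 2 := by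
    simp_rw [sub_sq, Finset.sum_add_distrib, Finset.sum_sub_distrib, h2, mul_assoc, ← Finset.mul_sum, h1]
    ring
  rw [le_inv_mul_iff₀ hM0]
  linarith

lemma JN_of_indep {X : Type*} [NormedAddCommGroup X] [NormedSpace ℝ X] (x : ℕ → X)
    (hx : ∀ k, ‖x k‖ ≤ 1) (R δ : ℝ) (hδ : 0 < δ)
    (h : ∀ k, ∀ b : ℕ → Bool, ∃ f : X →L[ℝ] ℝ, ‖f‖ ≤ R ∧ ∀ j < k, δ ≤ JNsg (b j) * f (x j)) :
    JNWN X := by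
  choose F hFR hF using h
  let ext : ∀ n, (Fin n → Bool) → ℕ → Bool := fun n b j => if h : j < n then b ⟨j, h⟩ else true
  have hext : ∀ n b (k : Fin n), ext n b k = b k := fun n b k => by simp [ext]
  let G : ℕ → ℕ → X →L[ℝ] ℝ := fun n k =>
    ((2 : ℝ) ^ n)⁻¹ • ∑ b : Fin n → Bool, JNsg (ext n b k) • F n (ext n b)
  have hGa : ∀ n k z, G n k z =
      ((2 : ℝ) ^ n)⁻¹ * ∑ b : Fin n → Bool, JNsg (ext n b k) * F n (ext n b) z := by
    intro n k z; simp [G]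
  have hGn : ∀ n k, ‖G n k‖ ≤ R := by
    intro n k
    simp only [G]
    rw [norm_smul, Real.norm_of_nonneg (by positivity), inv_mul_le_iff₀ (by positivity)]
    refine (norm_sum_le_of_le _ (fun b _ => ?_)).trans_eq (b := ∑ b : Fin n → Bool, R) (by simp)
    rw [norm_smul, Real.norm_eq_abs, JNsg_abs, one_mul]
    exact hFR _ _
  have hGx : ∀ n k, k < n → δ ≤ G n k (x k) := by
    intro n k hk
    rw [hGa, le_inv_mul_iff₀ (by positivity)]
    calc (2 : ℝ) ^ n * δ = ∑ b : Fin n → Bool, δ := by simp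
      _ ≤ _ := Finset.sum_le_sum fun b _ => hF n _ k hk
  have hGb : ∀ n K z, K ≤ n → ∑ k ∈ Finset.range K, (G n k z) ^ 2 ≤ (R * ‖z‖) ^ 2 := by
    intro n K z hK
    calc _ ≤ ∑ k ∈ Finset.range n, (G n k z) ^ 2 :=
          Finset.sum_le_sum_of_subset_of_nonneg (Finset.range_mono hK) fun _ _ _ => sq_nonneg _
      _ = ∑ k : Fin n, (((2 : ℝ) ^ n)⁻¹ * ∑ b, JNsg (b k) * F n (ext n b) z) ^ 2 := by
          rw [Finset.sum_range]
          simp_rw [hGa, hext]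
      _ ≤ _ := JN_bessel n fun b => F n (ext n b) z
      _ ≤ _ := by
          rw [inv_mul_le_iff₀ (by positivity)]
          calc _ ≤ ∑ b : Fin n → Bool, (R * ‖z‖) ^ 2 := by
                refine Finset.sum_le_sum fun b _ => ?_
                rw [sq_le_sq]
                exact ((F n (ext n b)).le_of_opNorm_le (hFR _ _) z).trans (le_abs_self _)
            _ = _ := by simp
  have hlim : ∀ k, ∃ g : X →L[ℝ] ℝ, ∀ z,
      Tendsto (fun n => G n k z) (hyperfilter ℕ : Filter ℕ) (nhds (g z)) := by
    intro k
    have hc := WeakDual.isCompact_closedBall (𝕜 := ℝ) (0 : StrongDual ℝ X) R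
    obtain ⟨g, -, hg⟩ := hc.ultrafilter_le_nhds
      ((hyperfilter ℕ).map fun n => StrongDual.toWeakDual (G n k)) (by
        rw [le_principal_iff, Ultrafilter.coe_map, Filter.mem_map]
        refine Filter.Eventually.of_forall fun n => ?_
        simpa using hGn n k)
    refine ⟨WeakDual.toStrongDual g, fun z => ?_⟩
    exact ((WeakDual.eval_continuous z).tendsto g).comp hg
  choose g hg using hlim
  have hat : ∀ K, ∀ᶠ n in (hyperfilter ℕ : Filter ℕ), K < n := fun K => by
    have := Filter.eventually_gt_atTop K
    rw [← Nat.cofinite_eq_atTop] at this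
    exact hyperfilter_le_cofinite this
  refine ⟨g, δ, hδ, fun k => ?_, fun z => ?_⟩
  · have h1 : δ ≤ g k (x k) := ge_of_tendsto (hg k (x k)) ((hat k).mono fun n hn => hGx n k hn)
    have h2 := (g k).le_opNorm (x k)
    have h3 := le_abs_self (g k (x k))
    rw [Real.norm_eq_abs] at h2
    have := hx k
    nlinarith [norm_nonneg (g k)]
  · have hs : Summable fun k => (g k z) ^ 2 := by
      refine summable_of_sum_range_le (c := (R * ‖z‖) ^ 2) (fun _ => sq_nonneg _) fun K => ?_
      refine le_of_tendsto (tendsto_finsetSum _ fun k _ => (hg k z).pow 2)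
        ((hat K).mono fun n hn => hGb n K z hn.le)
    have := hs.tendsto_atTop_zero
    have h2 := this.sqrt
    simp only [Real.sqrt_sq_eq_abs, Real.sqrt_zero] at h2
    exact (tendsto_zero_iff_abs_tendsto_zero _).2 h2

/-- l1 norm on finitely supported sequences -/
noncomputable def JNn (a : ℕ →₀ ℝ) : ℝ := ∑ i ∈ a.support, |a i|

lemma JNn_eq (a : ℕ →₀ ℝ) (Z : Finset ℕ) (h : a.support ⊆ Z) : JNn a = ∑ i ∈ Z, |a i| := by
  refine Finset.sum_subset h fun i _ hi => ?_
  simp [Finsupp.notMem_support_iff.1 hi]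

/-- admissible sequences -/
def JNAdm (w : ℕ → ℕ →₀ ℝ) : Prop := ∀ n, JNn (w n) = 1 ∧ ∀ i ∈ (w n).support, n ≤ i

section HJ

variable {X : Type*} [NormedAddCommGroup X] [NormedSpace ℝ X]

/-- block relation, in polar form -/
def JNRel (T : (ℕ →₀ ℝ) →ₗ[ℝ] (X →L[ℝ] ℝ)) (w v : ℕ → ℕ →₀ ℝ) : Prop :=
  ∀ n, ∀ x : X, ∀ t : ℝ, (∀ i, n ≤ i → |T (v i) x| ≤ t) → |T (w n) x| ≤ t

/-- eventual block relation, in polar form -/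
def JNRelE (T : (ℕ →₀ ℝ) →ₗ[ℝ] (X →L[ℝ] ℝ)) (w v : ℕ → ℕ →₀ ℝ) : Prop :=
  ∀ᶠ n in atTop, ∀ x : X, ∀ t : ℝ, (∀ i, n ≤ i → |T (v i) x| ≤ t) → |T (w n) x| ≤ t

/-- asymptotic size set -/
def JNSet (T : (ℕ →₀ ℝ) →ₗ[ℝ] (X →L[ℝ] ℝ)) (w : ℕ → ℕ →₀ ℝ) : Set ℝ :=
  {t | ∃ x : X, ‖x‖ ≤ 1 ∧ ∃ᶠ n in atTop, t ≤ |T (w n) x|}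

variable {T : (ℕ →₀ ℝ) →ₗ[ℝ] (X →L[ℝ] ℝ)} {R : ℝ}

lemma JNSet_bdd (hR : ∀ a, ‖T a‖ ≤ R * JNn a) {w : ℕ → ℕ →₀ ℝ} (hw : JNAdm w) : BddAbove (JNSet T w) := by
  refine ⟨R, ?_⟩
  rintro t ⟨x, hx, h⟩
  obtain ⟨n, hn⟩ := h.exists
  have h1 := (T (w n)).le_of_opNorm_le (hR _) x
  rw [(hw n).1, mul_one, Real.norm_eq_abs] at h1
  have h2 : 0 ≤ R := by
    have := (norm_nonneg _).trans (hR (w n))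
    rwa [(hw n).1, mul_one] at this
  nlinarith

lemma JNSet_zero (w : ℕ → ℕ →₀ ℝ) : 0 ∈ JNSet T w :=
  ⟨0, by simp, Filter.Frequently.of_forall fun n => abs_nonneg _⟩

lemma JNSup_nonneg (hR : ∀ a, ‖T a‖ ≤ R * JNn a) {w : ℕ → ℕ →₀ ℝ} (hw : JNAdm w) : 0 ≤ sSup (JNSet T w) :=
  le_csSup (JNSet_bdd hR hw) (JNSet_zero w)

lemma JNSup_ev (hR : ∀ a, ‖T a‖ ≤ R * JNn a) {w : ℕ → ℕ →₀ ℝ} (hw : JNAdm w) {t : ℝ} (ht : sSup (JNSet T w) < t) {x : X}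
    (hx : ‖x‖ ≤ 1) : ∀ᶠ n in atTop, |T (w n) x| < t := by
  by_contra h
  have : t ∈ JNSet T w := ⟨x, hx, by
    rw [Filter.not_eventually] at h
    simpa using h⟩
  exact absurd (le_csSup (JNSet_bdd hR hw) this) (not_le.2 ht)

lemma JNSup_mono (hR : ∀ a, ‖T a‖ ≤ R * JNn a) {w v : ℕ → ℕ →₀ ℝ} (hv : JNAdm v) (h : JNRelE T w v) :
    sSup (JNSet T w) ≤ sSup (JNSet T v) := by
  apply csSup_le ⟨0, JNSet_zero w⟩
  rintro t ⟨x, hx, hf⟩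
  by_contra! hlt
  obtain ⟨t', h1, h2⟩ := exists_between hlt
  obtain ⟨n0, hn0⟩ := eventually_atTop.1 (JNSup_ev hR hv h1 hx)
  obtain ⟨n, hn, h3, h4⟩ := (hf.and_eventually (h.and (eventually_ge_atTop n0))).exists
  have := h3 x t' (fun i hi => (hn0 i (h4.trans hi)).le)
  linarith

lemma JN_stable (hR : ∀ a, ‖T a‖ ≤ R * JNn a) : ∃ w, JNAdm w ∧ ∀ v, JNAdm v → JNRel T v w →
    sSup (JNSet T w) ≤ sSup (JNSet T v) := by
  have step : ∀ (k : ℕ) (w : {w // JNAdm w}), ∃ v : {w // JNAdm w}, JNRel T v.1 w.1 ∧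
      ∀ v', JNAdm v' → JNRel T v' w.1 →
        sSup (JNSet T v.1) ≤ sSup (JNSet T v') + 1 / ((k : ℝ) + 1) := by
    rintro k ⟨w, hw⟩
    let I : Set ℝ := {s | ∃ v, JNAdm v ∧ JNRel T v w ∧ sSup (JNSet T v) = s}
    have hne : I.Nonempty := ⟨_, w, hw, fun n x t h => h n le_rfl, rfl⟩
    have hb : BddBelow I := ⟨0, by rintro _ ⟨v, hv, _, rfl⟩; exact JNSup_nonneg hR hv⟩
    obtain ⟨_, ⟨v, hv, hvw, rfl⟩, hlt⟩ := exists_lt_of_csInf_lt hne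
      (lt_add_of_pos_right (sInf I) (Nat.one_div_pos_of_nat (α := ℝ) (n := k)))
    refine ⟨⟨v, hv⟩, hvw, fun v' hv' hr => ?_⟩
    have := csInf_le hb ⟨v', hv', hr, rfl⟩
    linarith
  choose nxt hrel hmin using step
  let w0 : {w // JNAdm w} := ⟨fun n => Finsupp.single n 1, fun n => by
    refine ⟨?_, fun i hi => ?_⟩
    · rw [JNn_eq _ {n} Finsupp.support_single_subset]; simp
    · have := Finsupp.support_single_subset hi
      simp at this; exact this.ge⟩
  let W : ℕ → {w // JNAdm w} := fun k => Nat.rec w0 (fun k w => nxt k w) k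
  have hW : ∀ k, W (k + 1) = nxt k (W k) := fun k => rfl
  have hWrel : ∀ k n, k ≤ n → JNRel T (W n).1 (W k).1 := by
    intro k n hkn
    induction n, hkn using Nat.le_induction with
    | base => exact fun n x t h => h n le_rfl
    | succ n _ ih =>
      intro j x t h
      rw [hW]
      exact hrel n (W n) j x t fun i hi => ih i x t fun i' hi' => h i' (hi.trans hi')
  let d : ℕ → ℕ →₀ ℝ := fun n => (W n).1 n
  have hd : JNAdm d := fun n => (W n).2 n
  refine ⟨d, hd, fun v hv hvd => ?_⟩
  have hdE : ∀ k, JNRelE T d (W k).1 := by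
    intro k
    filter_upwards [eventually_ge_atTop k] with n hn x t h
    exact hWrel k n hn n x t h
  apply le_of_forall_pos_le_add
  intro e he
  obtain ⟨k, hk⟩ := exists_nat_one_div_lt he
  have h1 := JNSup_mono hR (W (k + 1)).2 (hdE (k + 1))
  have h2 := hmin k (W k) (fun n => v (n + k))
    (fun n => ⟨(hv _).1, fun i hi => le_trans (Nat.le_add_right n k) ((hv (n + k)).2 i hi)⟩)
    (fun n x t h => hvd (n + k) x t fun i hi =>
      hWrel k i (le_trans (Nat.le_add_left k n) hi) i x t fun i' hi' =>
        h i' ((Nat.le_add_right n k).trans (hi.trans hi')))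
  have h3 : sSup (JNSet T (fun n => v (n + k))) ≤ sSup (JNSet T v) := by
    apply JNSup_mono hR hv
    exact Filter.Eventually.of_forall fun n x t h => h (n + k) (Nat.le_add_right n k)
  rw [hW] at h1
  linarith

lemma JN_abs_sum {ι : Type*} (s : Finset ι) (t : ι → ℝ)
    (h : ∀ a ∈ s, ∀ b ∈ s, a ≠ b → t a = 0 ∨ t b = 0) : |∑ a ∈ s, t a| = ∑ a ∈ s, |t a| := by
  by_cases h0 : ∃ a ∈ s, t a ≠ 0
  · obtain ⟨a, ha, hta⟩ := h0
    have hb : ∀ b ∈ s, b ≠ a → t b = 0 := fun b hb hba =>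
      (h a ha b hb hba.symm).resolve_left hta
    rw [Finset.sum_eq_single_of_mem a ha hb,
      Finset.sum_eq_single_of_mem a ha fun b hbs hba => by simp [hb b hbs hba]]
  · push Not at h0
    rw [Finset.sum_eq_zero h0, Finset.sum_eq_zero fun a ha => by simp [h0 a ha]]
    simp

lemma JN_choose {w : ℕ → ℕ →₀ ℝ} (hw : JNAdm w) {ι : Type*} (M : ι → Set ℕ)
    (hM : ∀ a, (M a).Infinite) (l : ℕ) (s : Finset ι) :
    ∃ n : ι → ℕ, (∀ a ∈ s, n a ∈ M a ∧ l ≤ n a) ∧ ∀ a ∈ s, ∀ b ∈ s, a ≠ b →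
      ∀ i, w (n a) i = 0 ∨ w (n b) i = 0 := by
  classical
  induction s using Finset.induction_on with
  | empty => exact ⟨fun _ => 0, by simp, by simp⟩
  | insert a s ha ih =>
    obtain ⟨n, h1, h2⟩ := ih
    obtain ⟨p, hp, hpl⟩ := (hM a).exists_gt (l + (s.biUnion fun b => (w (n b)).support).sup id)
    have hne : ∀ b ∈ s, b ≠ a := fun b hb h => ha (h ▸ hb)
    have hz : ∀ b ∈ s, ∀ i, w p i = 0 ∨ w (n b) i = 0 := by
      intro b hb i
      by_contra! hcon
      have e1 := (hw p).2 i (Finsupp.mem_support_iff.2 hcon.1)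
      have e2 : i ≤ (s.biUnion fun b => (w (n b)).support).sup id :=
        Finset.le_sup (f := id) (Finset.mem_biUnion.2 ⟨b, hb, Finsupp.mem_support_iff.2 hcon.2⟩)
      omega
    refine ⟨Function.update n a p, ?_, ?_⟩
    · intro b hb
      rcases Finset.mem_insert.1 hb with rfl | hb
      · simp only [Function.update_self]; exact ⟨hp, by omega⟩
      · rw [Function.update_of_ne (hne b hb)]; exact h1 b hb
    · intro b hb c hc hbc i
      rcases Finset.mem_insert.1 hb with rfl | hb2
      · rcases Finset.mem_insert.1 hc with rfl | hc2
        · exact absurd rfl hbc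
        · rw [Function.update_self, Function.update_of_ne (hne c hc2)]; exact hz c hc2 i
      · rcases Finset.mem_insert.1 hc with rfl | hc2
        · rw [Function.update_self, Function.update_of_ne (hne b hb2)]; exact (hz b hb2 i).symm
        · rw [Function.update_of_ne (hne b hb2), Function.update_of_ne (hne c hc2)]
          exact h2 b hb2 c hc2 hbc i

lemma JN_split (hR : ∀ a, ‖T a‖ ≤ R * JNn a) {w : ℕ → ℕ →₀ ℝ} (hw : JNAdm w)
    (hst : ∀ v, JNAdm v → JNRel T v w → sSup (JNSet T w) ≤ sSup (JNSet T v))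
    (hpos : 0 < sSup (JNSet T w)) {ι : Type*} [Fintype ι] [Nonempty ι] (σ : ι → Bool)
    (M : ι → Set ℕ) (hM : ∀ a, (M a).Infinite) :
    ∃ x : X, ‖x‖ ≤ 1 ∧ ∀ a,
      (M a ∩ {n | sSup (JNSet T w) / 2 ≤ JNsg (σ a) * T (w n) x}).Infinite := by
  classical
  set ε := sSup (JNSet T w) with hε
  choose n hn1 hn2 using fun l => JN_choose hw M hM l Finset.univ
  set K : ℝ := (Fintype.card ι : ℝ) with hK
  have hK0 : 1 ≤ K := by
    rw [hK]; exact_mod_cast Fintype.card_pos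
  have hK1 : 0 < K := by linarith
  let v : ℕ → ℕ →₀ ℝ := fun l => K⁻¹ • ∑ a, JNsg (σ a) • w (n l a)
  have hvi : ∀ l i, v l i = K⁻¹ * ∑ a, JNsg (σ a) * w (n l a) i := by
    intro l i; simp [v]
  have hTv : ∀ l x, T (v l) x = K⁻¹ * ∑ a, JNsg (σ a) * T (w (n l a)) x := by
    intro l x; simp [v]
  have hv : JNAdm v := by
    intro l
    constructor
    · let Z : Finset ℕ := (Finset.univ.biUnion fun a => (w (n l a)).support) ∪ (v l).support
      rw [JNn_eq _ Z Finset.subset_union_right]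
      have e1 : ∀ i, |v l i| = K⁻¹ * ∑ a, |w (n l a) i| := by
        intro i
        rw [hvi, abs_mul, abs_of_pos (inv_pos.2 hK1), JN_abs_sum]
        · simp [abs_mul, JNsg_abs]
        · intro a _ b _ hab
          rcases hn2 l a (Finset.mem_univ _) b (Finset.mem_univ _) hab i with h | h <;> simp [h]
      simp_rw [e1]
      rw [← Finset.mul_sum, Finset.sum_comm]
      have e2 : ∀ a, ∑ i ∈ Z, |w (n l a) i| = 1 := by
        intro a
        rw [← JNn_eq _ Z, (hw _).1]
        exact (Finset.subset_biUnion_of_mem (fun a => (w (n l a)).support)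
          (Finset.mem_univ a)).trans Finset.subset_union_left
      simp [e2, hK]
    · intro i hi
      rw [Finsupp.mem_support_iff, hvi] at hi
      obtain ⟨a, _, ha⟩ := Finset.exists_ne_zero_of_sum_ne_zero (right_ne_zero_of_mul hi)
      have := (hw (n l a)).2 i (Finsupp.mem_support_iff.2 (right_ne_zero_of_mul ha))
      exact (hn1 l a (Finset.mem_univ _)).2.trans this
  have hrel : JNRel T v w := by
    intro l x t h
    rw [hTv, abs_mul, abs_of_pos (inv_pos.2 hK1), inv_mul_le_iff₀ hK1]
    calc _ ≤ ∑ a, |JNsg (σ a) * T (w (n l a)) x| := Finset.abs_sum_le_sum_abs _ _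
      _ ≤ ∑ a : ι, t := by
          refine Finset.sum_le_sum fun a _ => ?_
          rw [abs_mul, JNsg_abs, one_mul]
          exact h _ (hn1 l a (Finset.mem_univ _)).2
      _ = K * t := by simp [hK]
  set η := ε / (4 * K) with hη
  have hη0 : 0 < η := by positivity
  have hηK : K * η = ε / 4 := by rw [hη]; field_simp
  have hlt : ε - η < sSup (JNSet T v) := by
    have := hst v hv hrel
    linarith
  obtain ⟨t, ⟨x0, hx0, hf0⟩, ht⟩ := exists_lt_of_lt_csSup ⟨0, JNSet_zero v⟩ hlt
  obtain ⟨x, hx, hf⟩ : ∃ x : X, ‖x‖ ≤ 1 ∧ ∃ᶠ l in atTop, ε - η ≤ T (v l) x := by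
    have : ∃ᶠ l in atTop, ε - η ≤ T (v l) x0 ∨ ε - η ≤ T (v l) (-x0) := by
      refine hf0.mono fun l hl => ?_
      rw [map_neg]
      rcases le_abs.1 hl with h | h
      · left; linarith
      · right; linarith
    rcases Filter.frequently_or_distrib.1 this with h | h
    · exact ⟨x0, hx0, h⟩
    · exact ⟨-x0, by simpa using hx0, h⟩
  obtain ⟨n0, hn0⟩ := eventually_atTop.1 (JNSup_ev hR hw (lt_add_of_pos_right ε hη0) hx)
  refine ⟨x, hx, fun a => ?_⟩
  apply Set.infinite_of_forall_exists_gt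
  intro l0
  obtain ⟨l, hl, hl0⟩ := (hf.and_eventually (eventually_ge_atTop (max (l0 + 1) n0))).exists
  have hnl : ∀ b, l ≤ n l b := fun b => (hn1 l b (Finset.mem_univ _)).2
  refine ⟨n l a, ⟨(hn1 l a (Finset.mem_univ _)).1, ?_⟩, (le_max_left _ _).trans (hl0.trans (hnl a))⟩
  rw [hTv, le_inv_mul_iff₀ hK1, ← Finset.add_sum_erase _ _ (Finset.mem_univ a)] at hl
  have hsum : ∑ b ∈ Finset.univ.erase a, JNsg (σ b) * T (w (n l b)) x ≤ (K - 1) * (ε + η) := by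
    calc _ ≤ ∑ b ∈ Finset.univ.erase a, (ε + η) := by
          refine Finset.sum_le_sum fun b _ => (le_abs_self _).trans ?_
          rw [abs_mul, JNsg_abs, one_mul]
          exact (hn0 _ ((le_max_right _ _).trans (hl0.trans (hnl b)))).le
      _ = _ := by
          rw [Finset.sum_const, Finset.card_erase_of_mem (Finset.mem_univ _), nsmul_eq_mul,
            Nat.cast_sub (Finset.card_pos.2 ⟨a, Finset.mem_univ a⟩)]
          simp [hK]
  simp only [Set.mem_ofPred_eq]
  nlinarith

lemma JN_HJ (hR : ∀ a, ‖T a‖ ≤ R * JNn a) {c : ℝ} (hc : 0 < c) (hT : ∀ a, c * JNn a ≤ ‖T a‖) : JNWN X := by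
  obtain ⟨w, hw, hst⟩ := JN_stable hR
  rcases (JNSup_nonneg hR hw).eq_or_lt with h0 | hpos
  · refine ⟨fun n => T (w n), c, hc, fun n => ?_, fun x => ?_⟩
    · have := hT (w n)
      rwa [(hw n).1, mul_one] at this
    · obtain ⟨x', t, hx', rfl⟩ := JN_scale x
      have h1 : Tendsto (fun n => T (w n) x') atTop (nhds 0) := by
        rw [Metric.tendsto_nhds]
        intro e he
        rw [h0] at he
        simpa using JNSup_ev hR hw he hx'
      simpa using h1.const_mul t
  set ε := sSup (JNSet T w) with hε
  let A : X → Bool → Set ℕ := fun x β => {n | ε / 2 ≤ JNsg β * T (w n) x}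
  have step : ∀ N : {N : (ℕ → Bool) → Set ℕ // (Set.range N).Finite ∧ ∀ b, (N b).Infinite},
      ∃ x : X, ‖x‖ ≤ 1 ∧ ∀ b β, (N.1 b ∩ A x β).Infinite := by
    rintro ⟨N, hfin, hinf⟩
    haveI : Fintype (Set.range N) := hfin.fintype
    obtain ⟨x, hx, h⟩ := JN_split hR hw hst hpos (ι := Set.range N × Bool) (fun p => p.2)
      (fun p => p.1.1) (by rintro ⟨⟨_, b, rfl⟩, β⟩; exact hinf b)
    exact ⟨x, hx, fun b β => h (⟨N b, b, rfl⟩, β)⟩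
  choose ξ hξ1 hξ2 using step
  let St : ℕ → {N : (ℕ → Bool) → Set ℕ // (Set.range N).Finite ∧ ∀ b, (N b).Infinite} := fun k =>
    Nat.rec ⟨fun _ => Set.univ, Set.finite_range_const, fun _ => Set.infinite_univ⟩
      (fun k N => ⟨fun b => N.1 b ∩ A (ξ N) (b k), by
        refine (Set.Finite.image2 (fun s β => s ∩ A (ξ N) β) N.2.1
          (Set.finite_univ (α := Bool))).subset ?_
        rintro _ ⟨b, rfl⟩
        exact ⟨N.1 b, ⟨b, rfl⟩, b k, trivial, rfl⟩, fun b => hξ2 N b (b k)⟩) k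
  have hSt : ∀ k b, (St (k + 1)).1 b = (St k).1 b ∩ A (ξ (St k)) (b k) := fun k b => rfl
  have hall : ∀ k b n, n ∈ (St k).1 b → ∀ j < k, n ∈ A (ξ (St j)) (b j) := by
    intro k b n
    induction k with
    | zero => intro _ j hj; omega
    | succ k ih =>
      intro h j hj
      rw [hSt] at h
      rcases Nat.lt_succ_iff_lt_or_eq.1 hj with hj | rfl
      · exact ih h.1 j hj
      · exact h.2
  refine JN_of_indep (fun k => ξ (St k)) (fun k => hξ1 _) R (ε / 2) (by linarith) fun k b => ?_
  obtain ⟨n, hn⟩ := ((St k).2.2 b).nonempty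
  refine ⟨T (w n), ?_, fun j hj => hall k b n hn j hj⟩
  have := hR (w n)
  rwa [(hw n).1, mul_one] at this

end HJ

lemma JN_real {X : Type*} [NormedAddCommGroup X] [NormedSpace ℝ X]
    (h : ¬ FiniteDimensional ℝ X) : JNWN X := by
  have h' : ¬ FiniteDimensional ℝ (X →L[ℝ] ℝ) := by
    intro hf
    apply h
    have h2 : FiniteDimensional ℝ ((X →L[ℝ] ℝ) →ₗ[ℝ] ℝ) := inferInstance
    refine FiniteDimensional.of_injective
      (V₂ := (X →L[ℝ] ℝ) →ₗ[ℝ] ℝ)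
      { toFun := fun x => { toFun := fun f => f x, map_add' := by simp, map_smul' := by simp }
        map_add' := by intros; ext; simp
        map_smul' := by intros; ext; simp } ?_
    intro x y hxy
    apply (SeparatingDual.eq_iff_forall_dual_eq (R := ℝ)).2
    intro f
    exact congrArg (fun L => L f) hxy
  obtain ⟨R, y, -, hy, hsep⟩ := exists_seq_norm_le_one_le_norm_sub (𝕜 := ℝ) h'
  rcases JN_rosenthal y R hy (fun m n hmn => hsep hmn) with hW | ⟨u, c, hc, hu, hl⟩
  · exact hW
  · refine JN_HJ (T := Finsupp.linearCombination ℝ u) (R := R) (fun a => ?_) hc hl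
    rw [Finsupp.linearCombination_apply, Finsupp.sum, JNn, Finset.mul_sum]
    refine norm_sum_le_of_le _ fun i _ => ?_
    rw [norm_smul, Real.norm_eq_abs, mul_comm]
    exact mul_le_mul_of_nonneg_right (hu i) (abs_nonneg _)

/-- **The Josefson–Nissenzweig theorem.** For every infinite-dimensional (real
or complex) Banach space `X` there is a sequence of norm-one functionals
converging to `0` in the weak* topology. -/
theorem josefson_nissenzweig {𝕜 : Type*} [RCLike 𝕜] {X : Type*}
    [NormedAddCommGroup X] [NormedSpace 𝕜 X] [CompleteSpace X]
    (h : ¬ FiniteDimensional 𝕜 X) :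
    ∃ f : ℕ → X →L[𝕜] 𝕜, (∀ n, ‖f n‖ = 1) ∧
      ∀ x : X, Tendsto (fun n => f n x) atTop (nhds 0) := by
  letI : NormedSpace ℝ X := NormedSpace.restrictScalars ℝ 𝕜 X
  haveI : IsScalarTower ℝ 𝕜 X := RestrictScalars.isScalarTower ℝ 𝕜 X
  have hr : ¬ FiniteDimensional ℝ X := fun hf => h (FiniteDimensional.right ℝ 𝕜 X)
  obtain ⟨z, c, hc, hz, hlim⟩ := JN_real hr
  have hn : ∀ n, c ≤ ‖(StrongDual.extendRCLike (z n) : StrongDual 𝕜 X)‖ := by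
    intro n
    refine (hz n).trans ?_
    refine ContinuousLinearMap.opNorm_le_bound _ (norm_nonneg _) fun x => ?_
    rw [← StrongDual.re_extendRCLike_apply (𝕜 := 𝕜) (z n) x]
    exact (RCLike.abs_re_le_norm _).trans (ContinuousLinearMap.le_opNorm _ _)
  set g : ℕ → X →L[𝕜] 𝕜 := fun n => StrongDual.extendRCLike (z n) with hg
  have hg0 : ∀ n, 0 < ‖g n‖ := fun n => hc.trans_le (hn n)
  refine ⟨fun n => ((‖g n‖⁻¹ : ℝ) : 𝕜) • g n, fun n => ?_, fun x => ?_⟩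
  · rw [norm_smul, RCLike.norm_ofReal, abs_of_pos (inv_pos.2 (hg0 n)), inv_mul_cancel₀ (hg0 n).ne']
  · have h1 : Tendsto (fun n => g n x) atTop (nhds 0) := by
      have e1 := (RCLike.continuous_ofReal (K := 𝕜)).tendsto 0 |>.comp (hlim x)
      have e2 := (RCLike.continuous_ofReal (K := 𝕜)).tendsto 0 |>.comp (hlim ((RCLike.I : 𝕜) • x))
      have e3 := e1.sub (e2.const_mul (RCLike.I : 𝕜))
      simpa [hg, StrongDual.extendRCLike_apply, Function.comp_def] using e3
    refine squeeze_zero_norm (a := fun n => c⁻¹ * ‖g n x‖) (fun n => ?_) ?_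
    · change ‖((‖g n‖⁻¹ : ℝ) : 𝕜) • g n x‖ ≤ _
      rw [norm_smul, RCLike.norm_ofReal, abs_of_pos (inv_pos.2 (hg0 n))]
      gcongr
      exact hn n
    · simpa using h1.norm.const_mul c⁻¹
end
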